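/- arXiv:2009.09743 — 2 statements merged into one kernel-verified Lean document; each statement's English description precedes it below -/
import Mathlib

section
/- For every feasible solution x* of the LP relaxation of the T-tour problem, there exists a T-tour F of G with c(F) ≤ (11/7)·c(x*). In particular, the integrality ratio of the LP relaxation of the T-tour problem is at most 11/7. -/
open Finset
open scoped Classical symmDiff

/-- A multigraph on vertex type `V` with edge type `E`, given by the two endpoints
of each edge. -/
structure MultiGraph (V E : Type*) where
  fst : E → V
  snd : E → V

namespace MultiGraph

variable {V E : Type*} [Fintype V] [DecidableEq V] [Fintype E] [DecidableEq E]
variable (G : MultiGraph V E)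

/-- The cut `δ(U)`: the set of edges with exactly one endpoint in `U`. -/
noncomputable def cut (U : Finset V) : Finset E :=
  univ.filter fun e => (G.fst e ∈ U ∧ G.snd e ∉ U) ∨ (G.fst e ∉ U ∧ G.snd e ∈ U)

/-- The degree of `v` with respect to the edge multiset `F`. -/
def deg (F : Multiset E) (v : V) : ℕ :=
  (F.map fun e => (if G.fst e = v then 1 else 0) + (if G.snd e = v then 1 else 0)).sum

/-- `odd(F)`: the set of vertices of odd degree in `(V, F)`. -/
noncomputable def oddVerts (F : Multiset E) : Finset V :=
  univ.filter fun v => Odd (G.deg F v)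

/-- Adjacency via an edge satisfying the predicate `P`. -/
def Adj (P : E → Prop) (a b : V) : Prop :=
  ∃ e, P e ∧ ((G.fst e = a ∧ G.snd e = b) ∨ (G.fst e = b ∧ G.snd e = a))

/-- `(V, {e | P e})` is a connected (spanning) subgraph. -/
def ConnectedOn (P : E → Prop) : Prop :=
  ∀ u w : V, Relation.ReflTransGen (G.Adj P) u w

/-- The graph `G` is connected. -/
def Connected : Prop := G.ConnectedOn fun _ => True

/-- A `T`-tour: a multi-subset `F` of the edges such that `(V, F)` is connected and
`odd(F) = T`. -/
def IsTTour (T : Finset V) (F : Multiset E) : Prop :=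
  G.ConnectedOn (· ∈ F) ∧ G.oddVerts F = T

/-- `S` is the edge set of a spanning tree of `G`. -/
def IsSpanningTree (S : Finset E) : Prop :=
  G.ConnectedOn (· ∈ S) ∧ S.card + 1 = Fintype.card V

/-- `δ(𝒲)`: the set of edges whose endpoints lie in different parts of the
partition `𝒲` of `V`. -/
noncomputable def partitionCut (W : Finpartition (univ : Finset V)) : Finset E :=
  univ.filter fun e => ∀ P ∈ W.parts, ¬(G.fst e ∈ P ∧ G.snd e ∈ P)

/-- Feasibility for the standard LP relaxation of the `T`-tour problem. -/
def LPFeasible (T : Finset V) (x : E → ℝ) : Prop :=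
  (∀ e, 0 ≤ x e) ∧
  (∀ U : Finset V, U.Nonempty → U ≠ univ → Even ((T ∩ U).card) →
    2 ≤ ∑ e ∈ G.cut U, x e) ∧
  (∀ W : Finpartition (univ : Finset V),
    (W.parts.card : ℝ) - 1 ≤ ∑ e ∈ G.partitionCut W, x e)

/-- `C` is a cut of `G`, i.e. `C = δ(U)` for some nonempty proper `U ⊆ V`. -/
def IsCut (C : Finset E) : Prop :=
  ∃ U : Finset V, U.Nonempty ∧ U ≠ univ ∧ C = G.cut U

/-- A narrow cut: a cut `C` with `x(C) < 2`. -/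
def Narrow (x : E → ℝ) (C : Finset E) : Prop :=
  G.IsCut C ∧ ∑ e ∈ C, x e < 2

/-- `𝒩`: the set of narrow cuts. -/
noncomputable def narrowCuts (x : E → ℝ) : Finset (Finset E) :=
  univ.filter fun C => G.Narrow x C

/-- A narrow cut `C` is lonely for `S` if `|S ∩ C| = 1`. -/
def Lonely (x : E → ℝ) (S C : Finset E) : Prop :=
  G.Narrow x C ∧ (S ∩ C).card = 1

/-- `ℒ_S`: the set of lonely cuts of `S`. -/
noncomputable def lonelyCuts (x : E → ℝ) (S : Finset E) : Finset (Finset E) :=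
  univ.filter fun C => G.Lonely x S C

/-- `L_S = ∪_{C ∈ ℒ_S} (S ∩ C)`: the set of lonely edges of `S`. -/
noncomputable def lonelyEdges (x : E → ℝ) (S : Finset E) : Finset E :=
  S.filter fun e => ∃ C, G.Lonely x S C ∧ e ∈ C

/-- The incidence vector `χ^F` of an edge set `F`. -/
def chi (F : Finset E) : E → ℝ := fun e => if e ∈ F then 1 else 0

/-- The vector `v^C = (1/(2 - x(C))) · Σ_{S : C ∈ ℒ_S} p_S · χ^{S ∩ C}`. -/
noncomputable def vC (x : E → ℝ) (p : Finset E → ℝ) (C : Finset E) : E → ℝ :=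
  fun e => (1 / (2 - ∑ f ∈ C, x f)) *
    ∑ S : Finset E, (if G.Lonely x S C then p S else 0) * chi (S ∩ C) e

/-- The modified cost
`c^S(e) = c(e) + 2·(Σ_{C ∈ ℒ_S : e ∈ C} c(S ∩ C) − max_{C ∈ ℒ_S : e ∈ C} c(S ∩ C))`,
where the maximum over the empty set is `0`. -/
noncomputable def modCost (c x : E → ℝ) (S : Finset E) (e : E) : ℝ :=
  c e + 2 * ((∑ C ∈ (G.lonelyCuts x S).filter (fun C => e ∈ C), ∑ f ∈ S ∩ C, c f)
    - (if h : ((G.lonelyCuts x S).filter (fun C => e ∈ C)).Nonempty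
        then ((G.lonelyCuts x S).filter (fun C => e ∈ C)).sup' h (fun C => ∑ f ∈ S ∩ C, c f)
        else 0))

/-- The set of vertices reachable from `v` using edges satisfying `P`. -/
noncomputable def reachSet (P : E → Prop) (v : V) : Finset V :=
  univ.filter fun w => Relation.ReflTransGen (G.Adj P) v w

end MultiGraph

set_option linter.unusedSectionVars false

namespace TTour

universe u v

variable {V : Type u} {E : Type v} [Fintype V] [Fintype E]

/-- Edge difference of a `ZMod 2`-valued vertex function. -/
def dd (G : MultiGraph V E) (w : V → ZMod 2) (e : E) : ZMod 2 := w (G.fst e) + w (G.snd e)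

/-- Value of `y` on the cut of `w`. -/
noncomputable def yc (G : MultiGraph V E) (y : E → ℝ) (w : V → ZMod 2) : ℝ :=
  ∑ e, if dd G w e = 1 then y e else 0

/-- Pairing. -/
def ev (τ w : V → ZMod 2) : ZMod 2 := ∑ v, τ v * w v

/-- Join condition restricted to a class of test functions. -/
def JoinOn (G : MultiGraph V E) (τ : V → ZMod 2) (W : (V → ZMod 2) → Prop) (J : Finset E) : Prop :=
  ∀ w, W w → ∑ e ∈ J, dd G w e = ev τ w

/-- `y` dominates a convex combination of joins. -/
def DomOn (G : MultiGraph V E) (τ : V → ZMod 2) (W : (V → ZMod 2) → Prop) (y : E → ℝ) : Prop :=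
  ∃ p : Finset E → ℝ, (∀ J, 0 ≤ p J) ∧ ∑ J, p J = 1 ∧ (∀ J, p J ≠ 0 → JoinOn G τ W J) ∧
    ∀ e, ∑ J, (if e ∈ J then p J else 0) ≤ y e

/-- All test functions. -/
def All (_ : V → ZMod 2) : Prop := True

/-- Feasibility. -/
def FeasOn (G : MultiGraph V E) (τ : V → ZMod 2) (W : (V → ZMod 2) → Prop) (y : E → ℝ) : Prop :=
  (∀ e, 0 ≤ y e) ∧ ∀ w, W w → ev τ w = 1 → 1 ≤ yc G y w

theorem z2 (a : ZMod 2) : a = 0 ∨ a = 1 := by revert a; decide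

theorem z2ne1 {a : ZMod 2} : ¬ a = 1 ↔ a = 0 := by revert a; decide

theorem z2ne0 {a : ZMod 2} : ¬ a = 0 ↔ a = 1 := by revert a; decide

theorem z2add (a : ZMod 2) : a + a = 0 := by revert a; decide

theorem dd_add (G : MultiGraph V E) (w w' : V → ZMod 2) (e : E) :
    dd G (w + w') e = dd G w e + dd G w' e := by
  simp only [dd, Pi.add_apply]; ring

theorem dd_one_add (G : MultiGraph V E) (w : V → ZMod 2) (e : E) :
    dd G (1 + w) e = dd G w e := by
  rw [dd_add]
  have : dd G (1 : V → ZMod 2) e = 0 := by simp only [dd, Pi.one_apply]; decide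
  rw [this, zero_add]

theorem ev_add (τ w w' : V → ZMod 2) : ev τ (w + w') = ev τ w + ev τ w' := by
  simp only [ev, Pi.add_apply, mul_add, sum_add_distrib]

theorem ev_single (τ : V → ZMod 2) (t : V) : ev τ (Pi.single t 1) = τ t := by
  simp [ev, Pi.single_apply]

theorem yc_one_add (G : MultiGraph V E) (y : E → ℝ) (w : V → ZMod 2) :
    yc G y (1 + w) = yc G y w := by
  simp only [yc, dd_one_add]

theorem yc_lin (G : MultiGraph V E) (y d : E → ℝ) (ε : ℝ) (w : V → ZMod 2) :
    yc G (fun e => y e + ε * d e) w = yc G y w + ε * yc G d w := by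
  simp only [yc, mul_sum, ← sum_add_distrib]
  refine sum_congr rfl fun e _ => ?_
  split_ifs <;> ring

theorem yc_nonneg (G : MultiGraph V E) {y : E → ℝ} (hy : ∀ e, 0 ≤ y e) (w : V → ZMod 2) :
    0 ≤ yc G y w := sum_nonneg fun e _ => by split_ifs <;> simp [hy]

theorem domOn_family {ι : Type*} [Fintype ι] {G : MultiGraph V E} {τ : V → ZMod 2}
    {W : (V → ZMod 2) → Prop} {y : E → ℝ} (r : ι → ℝ) (M : ι → Finset E)
    (h0 : ∀ i, 0 ≤ r i) (h1 : ∑ i, r i = 1) (hJ : ∀ i, r i ≠ 0 → JoinOn G τ W (M i))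
    (hm : ∀ e, ∑ i, (if e ∈ M i then r i else 0) ≤ y e) : DomOn G τ W y := by
  refine ⟨fun J => ∑ i, if M i = J then r i else 0, ?_, ?_, ?_, ?_⟩
  · intro J
    exact sum_nonneg fun i _ => by split_ifs <;> simp [h0]
  · rw [sum_comm]; simpa using h1
  · intro J h
    obtain ⟨i, -, hi⟩ := exists_ne_zero_of_sum_ne_zero h
    by_cases hM : M i = J
    · subst hM
      exact hJ i (by simpa using hi)
    · simp [hM] at hi
  · intro e
    refine le_trans (le_of_eq ?_) (hm e)
    have : ∀ J : Finset E, (if e ∈ J then ∑ i, (if M i = J then r i else 0) else 0)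
        = ∑ i, (if M i = J then (if e ∈ M i then r i else 0) else 0) := by
      intro J
      split_ifs with h
      · refine sum_congr rfl fun i _ => ?_
        by_cases hM : M i = J
        · simp [hM, h]
        · simp [hM]
      · symm
        refine sum_eq_zero fun i _ => ?_
        by_cases hM : M i = J
        · simp [hM, h]
        · simp [hM]
    simp only [this]
    rw [sum_comm]
    simp

theorem domOn_mono {G : MultiGraph V E} {τ : V → ZMod 2}
    {W : (V → ZMod 2) → Prop} {y y' : E → ℝ} (h : DomOn G τ W y) (hy : ∀ e, y e ≤ y' e) :
    DomOn G τ W y' := by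
  obtain ⟨p, h0, h1, h2, h3⟩ := h
  exact ⟨p, h0, h1, h2, fun e => (h3 e).trans (hy e)⟩

theorem domOn_convex {G : MultiGraph V E} {τ : V → ZMod 2}
    {W : (V → ZMod 2) → Prop} {y y' : E → ℝ} (h : DomOn G τ W y) (h' : DomOn G τ W y')
    (a b : ℝ) (ha : 0 ≤ a) (hb : 0 ≤ b) (hab : a + b = 1) :
    DomOn G τ W (fun e => a * y e + b * y' e) := by
  obtain ⟨p, h0, h1, h2, h3⟩ := h
  obtain ⟨p', h0', h1', h2', h3'⟩ := h'
  refine ⟨fun J => a * p J + b * p' J, ?_, ?_, ?_, ?_⟩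
  · intro J
    have := mul_nonneg ha (h0 J)
    have := mul_nonneg hb (h0' J)
    linarith
  · rw [sum_add_distrib, ← mul_sum, ← mul_sum, h1, h1']; linarith
  · intro J hJ
    by_cases hp : p J = 0
    · by_cases hp' : p' J = 0
      · simp [hp, hp'] at hJ
      · exact h2' J hp'
    · exact h2 J hp
  · intro e
    have : ∀ J : Finset E, (if e ∈ J then a * p J + b * p' J else 0)
      = a * (if e ∈ J then p J else 0) + b * (if e ∈ J then p' J else 0) := by
      intro J; split_ifs <;> ring
    simp only [this]
    rw [sum_add_distrib, ← mul_sum, ← mul_sum]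
    exact add_le_add (mul_le_mul_of_nonneg_left (h3 e) ha) (mul_le_mul_of_nonneg_left (h3' e) hb)

/-- Functions constant on `U`. -/
def ConstOn (U : V → Prop) (w : V → ZMod 2) : Prop := ∀ a b, U a → U b → w a = w b

/-- The result for all smaller vertex sets. -/
def EJBelow (E : Type v) [Fintype E] (n : ℕ) : Prop :=
  ∀ (V' : Type u) [Fintype V'], Fintype.card V' < n → ∀ (G : MultiGraph V' E) (τ : V' → ZMod 2)
    (y : E → ℝ), FeasOn G τ All y → DomOn G τ All y

theorem contract {G : MultiGraph V E} {τ : V → ZMod 2} {y : E → ℝ}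
    (IH : EJBelow.{u} E (Fintype.card V)) (U : V → Prop) (a b : V) (hab : a ≠ b)
    (ha : U a) (hb : U b) (hy : FeasOn G τ (ConstOn U) y) : DomOn G τ (ConstOn U) y := by
  let V' := Option {v // ¬ U v}
  let π : V → V' := fun v => if h : U v then none else some ⟨v, h⟩
  let G' : MultiGraph V' E := ⟨fun e => π (G.fst e), fun e => π (G.snd e)⟩
  let τ' : V' → ZMod 2 := fun v' => ∑ v, if π v = v' then τ v else 0
  have hdd : ∀ w' e, dd G' w' e = dd G (w' ∘ π) e := fun w' e => rfl
  have hev : ∀ w', ev τ' w' = ev τ (w' ∘ π) := by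
    intro w'
    simp only [ev, τ', sum_mul]
    rw [sum_comm]
    refine sum_congr rfl fun v _ => ?_
    rw [sum_eq_single (π v)]
    · simp
    · intro b _ hb; simp [Ne.symm hb]
    · intro h; exact absurd (mem_univ _) h
  have hconst : ∀ w' : V' → ZMod 2, ConstOn U (w' ∘ π) := by
    intro w' a b ha hb
    simp [π, ha, hb]
  have hfac : ∀ w, ConstOn U w → ∃ w' : V' → ZMod 2, w = w' ∘ π := by
    intro w hw
    refine ⟨fun o => match o with | none => w a | some v => w v.1, ?_⟩
    funext v
    by_cases h : U v
    · simp [π, h, hw v a h ha]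
    · simp [π, h]
  have hcard : Fintype.card V' < Fintype.card V := by
    rw [Fintype.card_option, Fintype.card_subtype]
    have h2 : ({a, b} : Finset V).card = 2 := by simp [hab]
    have h3 : ({a, b} : Finset V) ⊆ univ.filter fun v => U v := by
      intro v hv; simp at hv; rcases hv with rfl | rfl <;> simp [ha, hb]
    have h4 := card_le_card h3
    have h5 := card_filter_add_card_filter_not (s := (univ : Finset V)) (fun v => U v)
    rw [card_univ] at h5
    omega
  obtain ⟨p, h0, h1, h2, h3⟩ := IH V' hcard G' τ' y ⟨hy.1, fun w' _ hw' => by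
    rw [hev] at hw'
    exact hy.2 _ (hconst w') hw'⟩
  refine ⟨p, h0, h1, ?_, h3⟩
  intro J hJ w hw
  obtain ⟨w', rfl⟩ := hfac w hw
  rw [← hev, ← h2 J hJ w' trivial]
  rfl

/-- Nontrivial cuts. -/
def Nontriv (w : V → ZMod 2) : Prop :=
  (∃ a b, a ≠ b ∧ w a = 1 ∧ w b = 1) ∧ (∃ a b, a ≠ b ∧ w a = 0 ∧ w b = 0)

theorem not_nontriv {G : MultiGraph V E} {y : E → ℝ} {w : V → ZMod 2} (h : ¬ Nontriv w)
    (hy : yc G y w ≠ 0) : ∃ v, w = Pi.single v 1 ∨ w = 1 + Pi.single v 1 := by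
  obtain ⟨e, -, he⟩ := exists_ne_zero_of_sum_ne_zero hy
  have he1 : dd G w e = 1 := by by_contra h; simp [h] at he
  have : (∃ a, w a = 1) ∧ ∃ b, w b = 0 := by
    unfold dd at he1
    rcases z2 (w (G.fst e)) with h1 | h1 <;> rcases z2 (w (G.snd e)) with h2 | h2 <;>
      rw [h1, h2] at he1
    · simp at he1
    · exact ⟨⟨_, h2⟩, _, h1⟩
    · exact ⟨⟨_, h1⟩, _, h2⟩
    · exact absurd he1 (by decide)
  obtain ⟨⟨a, ha⟩, b, hb⟩ := this
  unfold Nontriv at h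
  rw [not_and_or] at h
  rcases h with h | h
  · refine ⟨a, Or.inl ?_⟩
    push Not at h
    funext v
    by_cases hv : v = a
    · subst hv; simp [ha]
    · have := h v a hv
      rw [Pi.single_eq_of_ne hv]
      rcases z2 (w v) with h1 | h1
      · exact h1
      · exact absurd ha (this h1)
  · refine ⟨b, Or.inr ?_⟩
    push Not at h
    funext v
    by_cases hv : v = b
    · subst hv; simp [hb]; decide
    · have := h v b hv
      rw [Pi.add_apply, Pi.single_eq_of_ne hv]
      rcases z2 (w v) with h1 | h1
      · exact absurd hb (this h1)
      · simp [h1]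

end TTour

namespace TTour

universe u v

variable {V : Type u} {E : Type v} [Fintype V] [Fintype E]

theorem sum_mem_univ {M : Type*} [AddCommMonoid M] (J : Finset E) (f : E → M) :
    ∑ e, (if e ∈ J then f e else 0) = ∑ e ∈ J, f e := by
  rw [← sum_filter]; simp

theorem card_cut_pos {G : MultiGraph V E} {w : V → ZMod 2} {J : Finset E}
    (h : ∑ e ∈ J, dd G w e = 1) : ((J.filter fun e => dd G w e = 1).card : ZMod 2) = 1 := by
  refine Eq.trans ?_ h
  rw [card_filter, Nat.cast_sum]
  refine sum_congr rfl fun e _ => ?_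
  rcases z2 (dd G w e) with h | h <;> simp [h]

/-- On a tight cut a dominated convex combination of joins is tight. -/
theorem tight_facts {G : MultiGraph V E} {y : E → ℝ} {w : V → ZMod 2} {p : Finset E → ℝ}
    (h0 : ∀ J, 0 ≤ p J) (h1 : ∑ J, p J = 1)
    (hJ : ∀ J, p J ≠ 0 → ∑ e ∈ J, dd G w e = 1)
    (hm : ∀ e, ∑ J, (if e ∈ J then p J else 0) ≤ y e) (hw : yc G y w = 1) :
    (∀ J, p J ≠ 0 → (J.filter fun e => dd G w e = 1).card = 1) ∧
    (∀ e, dd G w e = 1 → ∑ J, (if e ∈ J then p J else 0) = y e) := by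
  have hswap : ∑ e, (if dd G w e = 1 then ∑ J, (if e ∈ J then p J else 0) else 0)
      = ∑ J, p J * ((J.filter fun e => dd G w e = 1).card : ℝ) := by
    have : ∀ J : Finset E, p J * ((J.filter fun e => dd G w e = 1).card : ℝ)
        = ∑ e, (if dd G w e = 1 then (if e ∈ J then p J else 0) else 0) := by
      intro J
      rw [card_filter, Nat.cast_sum, mul_sum, ← sum_mem_univ J]
      refine sum_congr rfl fun e _ => ?_
      split_ifs <;> simp
    simp only [this]
    rw [sum_comm]
    refine sum_congr rfl fun e _ => ?_
    split_ifs <;> simp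
  have hle1 : ∀ J, p J ≤ p J * ((J.filter fun e => dd G w e = 1).card : ℝ) := by
    intro J
    by_cases h : p J = 0
    · simp [h]
    · have : (J.filter fun e => dd G w e = 1).card ≠ 0 := by
        intro h'
        have := card_cut_pos (hJ J h)
        rw [h'] at this; simp at this
      have : (1 : ℝ) ≤ ((J.filter fun e => dd G w e = 1).card : ℝ) := by
        exact_mod_cast Nat.one_le_iff_ne_zero.mpr this
      exact le_mul_of_one_le_right (h0 J) this
  have hle2 : ∀ e, (if dd G w e = 1 then ∑ J, (if e ∈ J then p J else 0) else 0)
      ≤ (if dd G w e = 1 then y e else 0) := by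
    intro e; split_ifs
    · exact hm e
    · exact le_rfl
  have hs1 := sum_le_sum fun J (_ : J ∈ univ) => hle1 J
  have hs2 := sum_le_sum fun e (_ : e ∈ univ) => hle2 e
  have hw' : ∑ e, (if dd G w e = 1 then y e else 0) = 1 := hw
  have e1 : ∑ J, p J = ∑ J, p J * ((J.filter fun e => dd G w e = 1).card : ℝ) := by
    linarith
  have e2 : ∑ e, (if dd G w e = 1 then ∑ J, (if e ∈ J then p J else 0) else 0)
    = ∑ e, (if dd G w e = 1 then y e else 0) := by linarith
  rw [sum_eq_sum_iff_of_le fun J _ => hle1 J] at e1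
  rw [sum_eq_sum_iff_of_le fun e _ => hle2 e] at e2
  constructor
  · intro J h
    have := e1 J (mem_univ _)
    have h' : ((J.filter fun e => dd G w e = 1).card : ℝ) = 1 := by
      have : p J * 1 = p J * ((J.filter fun e => dd G w e = 1).card : ℝ) := by linarith
      exact (mul_left_cancel₀ h this).symm
    exact_mod_cast h'
  · intro e he
    have := e2 e (mem_univ _)
    simpa [he] using this

theorem glue_marg {G : MultiGraph V E} {y : E → ℝ} {w : V → ZMod 2} {p q : Finset E → ℝ}
    (hp0 : ∀ J, 0 ≤ p J)
    (hp : ∀ J, p J ≠ 0 → (J.filter fun e => dd G w e = 1).card = 1)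
    (hpy : ∀ e, dd G w e = 1 → ∑ J, (if e ∈ J then p J else 0) = y e)
    (hqy : ∀ e, dd G w e = 1 → ∑ J, (if e ∈ J then q J else 0) = y e) (J : Finset E) :
    ∑ K, ∑ e, (if dd G w e = 1 ∧ e ∈ J ∧ e ∈ K then p J * q K / y e else 0) = p J := by
  rw [sum_comm]
  have h1 : ∀ e, ∑ K, (if dd G w e = 1 ∧ e ∈ J ∧ e ∈ K then p J * q K / y e else 0)
      = if dd G w e = 1 ∧ e ∈ J then p J else 0 := by
    intro e
    by_cases h : dd G w e = 1 ∧ e ∈ J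
    · have : ∀ K : Finset E, (if dd G w e = 1 ∧ e ∈ J ∧ e ∈ K then p J * q K / y e else 0)
        = p J / y e * (if e ∈ K then q K else 0) := by
        intro K
        simp only [h.1, h.2, true_and]
        split_ifs <;> ring
      simp only [this]
      rw [← mul_sum, hqy e h.1, if_pos h]
      by_cases hpJ : p J = 0
      · simp [hpJ]
      · have hpos : 0 < y e := by
          rw [← hpy e h.1]
          refine sum_pos' (fun J _ => by split_ifs <;> simp [hp0]) ⟨J, mem_univ _, ?_⟩
          simp only [h.2, if_true]
          exact lt_of_le_of_ne (hp0 J) (Ne.symm hpJ)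
        field_simp
    · rw [if_neg h]
      refine sum_eq_zero fun K _ => if_neg fun h' => h ⟨h'.1, h'.2.1⟩
  simp only [h1]
  by_cases hpJ : p J = 0
  · simp [hpJ]
  · rw [← sum_filter, sum_const]
    have : (univ.filter fun e => dd G w e = 1 ∧ e ∈ J) = J.filter fun e => dd G w e = 1 := by
      ext e; simp [and_comm]
    rw [this, hp J hpJ, one_smul]

theorem caseA {G : MultiGraph V E} {τ : V → ZMod 2} {y : E → ℝ}
    (IH : EJBelow.{u} E (Fintype.card V)) (hy : FeasOn G τ All y) (w0 : V → ZMod 2)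
    (hn : Nontriv w0) (hodd : ev τ w0 = 1) (ht : yc G y w0 = 1) : DomOn G τ All y := by
  obtain ⟨⟨a, b, hab, ha, hb⟩, a', b', hab', ha', hb'⟩ := hn
  obtain ⟨p, p0, p1, pJ, pm⟩ := contract IH (fun v => w0 v = 1) a b hab ha hb
    (⟨hy.1, fun w _ => hy.2 w trivial⟩ : FeasOn G τ _ y)
  obtain ⟨q, q0, q1, qJ, qm⟩ := contract IH (fun v => w0 v = 0) a' b' hab' ha' hb'
    (⟨hy.1, fun w _ => hy.2 w trivial⟩ : FeasOn G τ _ y)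
  have hc1 : ConstOn (fun v => w0 v = 1) w0 := fun a b h1 h2 => by rw [h1, h2]
  have hc0 : ConstOn (fun v => w0 v = 0) w0 := fun a b h1 h2 => by rw [h1, h2]
  obtain ⟨pc, py⟩ := tight_facts p0 p1 (fun J hJ => (pJ J hJ w0 hc1).trans hodd) pm ht
  obtain ⟨qc, qy⟩ := tight_facts q0 q1 (fun J hJ => (qJ J hJ w0 hc0).trans hodd) qm ht
  let r : Finset E × Finset E × E → ℝ := fun i =>
    if dd G w0 i.2.2 = 1 ∧ i.2.2 ∈ i.1 ∧ i.2.2 ∈ i.2.1 then p i.1 * q i.2.1 / y i.2.2 else 0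
  let ins : E → Prop := fun g => w0 (G.fst g) = 1 ∧ w0 (G.snd g) = 1
  let M : Finset E × Finset E × E → Finset E := fun i =>
    univ.filter fun g => if ins g then g ∈ i.2.1 else g ∈ i.1
  have hsp : ∀ J, ∑ K, ∑ e, r (J, K, e) = p J := glue_marg p0 pc py qy
  have hsq : ∀ K, ∑ J, ∑ e, r (J, K, e) = q K := by
    intro K
    rw [← glue_marg q0 qc qy py K]
    refine sum_congr rfl fun J _ => sum_congr rfl fun e _ => ?_
    simp only [r]
    rw [mul_comm (p J)]
    congr 1
    exact propext ⟨fun h => ⟨h.1, h.2.2, h.2.1⟩, fun h => ⟨h.1, h.2.2, h.2.1⟩⟩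
  refine domOn_family r M ?_ ?_ ?_ ?_
  · intro i
    simp only [r]
    split_ifs
    · exact div_nonneg (mul_nonneg (p0 _) (q0 _)) (hy.1 _)
    · exact le_rfl
  · rw [Fintype.sum_prod_type]
    simp only [Fintype.sum_prod_type, hsp, p1]
  · rintro ⟨J, K, e⟩ hr w -
    have hh : dd G w0 e = 1 ∧ e ∈ J ∧ e ∈ K := by
      by_contra h; simp only [r, if_neg h] at hr; exact hr rfl
    simp only [r, if_pos hh] at hr
    have hpJ : p J ≠ 0 := fun h => hr (by simp [h])
    have hqK : q K ≠ 0 := fun h => hr (by simp [h])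
    have hJe : ∀ g, dd G w0 g = 1 → (g ∈ J ↔ g = e) := by
      intro g hg
      obtain ⟨z, hz⟩ := card_eq_one.mp (pc J hpJ)
      have h1 : e ∈ J.filter fun e => dd G w0 e = 1 := by simp [hh]
      rw [hz, mem_singleton] at h1
      constructor
      · intro h
        have h2 : g ∈ J.filter fun e => dd G w0 e = 1 := by simp [hg, h]
        rw [hz, mem_singleton] at h2
        rw [h1, h2]
      · rintro rfl; exact hh.2.1
    have hKe : ∀ g, dd G w0 g = 1 → (g ∈ K ↔ g = e) := by
      intro g hg
      obtain ⟨z, hz⟩ := card_eq_one.mp (qc K hqK)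
      have h1 : e ∈ K.filter fun e => dd G w0 e = 1 := by simp [hh]
      rw [hz, mem_singleton] at h1
      constructor
      · intro h
        have h2 : g ∈ K.filter fun e => dd G w0 e = 1 := by simp [hg, h]
        rw [hz, mem_singleton] at h2
        rw [h1, h2]
      · rintro rfl; exact hh.2.2
    have hM : ∀ g, g ∈ M (J, K, e) ↔ if ins g then g ∈ K else g ∈ J := by
      intro g; simp [M]
    have hsplit : w = (fun v => w v * w0 v) + fun v => w v * (1 + w0 v) := by
      funext v
      simp only [Pi.add_apply]
      generalize w v = z
      generalize w0 v = z0
      revert z z0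
      decide
    have h1 : ∑ g ∈ M (J, K, e), dd G (fun v => w v * w0 v) g = ev τ (fun v => w v * w0 v) := by
      rw [← qJ K hqK _ (fun a b ha hb => by simp only [ha, hb, mul_zero])]
      rw [← sum_mem_univ (M (J, K, e)), ← sum_mem_univ K]
      refine sum_congr rfl fun g _ => ?_
      by_cases hg : ins g
      · simp only [hM, if_pos hg]
      · simp only [hM, if_neg hg]
        rcases z2 (w0 (G.fst g)) with h1 | h1 <;> rcases z2 (w0 (G.snd g)) with h2 | h2
        · simp [dd, h1, h2]
        · have : dd G w0 g = 1 := by simp [dd, h1, h2]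
          simp only [hJe g this, hKe g this]
        · have : dd G w0 g = 1 := by simp [dd, h1, h2]
          simp only [hJe g this, hKe g this]
        · exact absurd ⟨h1, h2⟩ hg
    have h2 : ∑ g ∈ M (J, K, e), dd G (fun v => w v * (1 + w0 v)) g
        = ev τ (fun v => w v * (1 + w0 v)) := by
      have h11 : (1 + 1 : ZMod 2) = 0 := by decide
      rw [← pJ J hpJ _ (fun a b ha hb => by simp only [ha, hb, h11, mul_zero])]
      rw [← sum_mem_univ (M (J, K, e)), ← sum_mem_univ J]
      refine sum_congr rfl fun g _ => ?_
      by_cases hg : ins g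
      · simp [dd, hg.1, hg.2, h11]
      · simp only [hM, if_neg hg]
    conv_lhs => rw [hsplit]
    conv_rhs => rw [hsplit]
    rw [ev_add, ← h1, ← h2, ← sum_add_distrib]
    exact sum_congr rfl fun g _ => dd_add _ _ _ _
  · intro g
    by_cases hg : ins g
    · refine le_trans (le_of_eq ?_) (qm g)
      simp only [M, mem_filter, mem_univ, true_and, if_pos hg, Fintype.sum_prod_type]
      rw [sum_comm]
      refine sum_congr rfl fun K _ => ?_
      split_ifs with h
      · exact hsq K
      · simp
    · refine le_trans (le_of_eq ?_) (pm g)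
      simp only [M, mem_filter, mem_univ, true_and, if_neg hg, Fintype.sum_prod_type]
      refine sum_congr rfl fun J _ => ?_
      split_ifs with h
      · exact hsp J
      · simp

end TTour

namespace TTour

universe u v

variable {V : Type u} {E : Type v} [Fintype V] [Fintype E]

/-- `e` has ends `a` and `b`. -/
def Ends (G : MultiGraph V E) (e : E) (a b : V) : Prop :=
  (G.fst e = a ∧ G.snd e = b) ∨ (G.fst e = b ∧ G.snd e = a)

theorem Ends.dd {G : MultiGraph V E} {e : E} {a b : V} (h : Ends G e a b) (w : V → ZMod 2) :
    dd G w e = w a + w b := by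
  rcases h with ⟨h1, h2⟩ | ⟨h1, h2⟩
  · simp [TTour.dd, h1, h2]
  · simp [TTour.dd, h1, h2, add_comm]

theorem exists_ends {G : MultiGraph V E} {e : E} {t : V} (h : dd G (Pi.single t 1) e = 1) :
    ∃ v, v ≠ t ∧ Ends G e t v := by
  unfold dd at h
  by_cases h1 : G.fst e = t <;> by_cases h2 : G.snd e = t
  · rw [h1, h2] at h; simp at h
  · exact ⟨_, h2, Or.inl ⟨h1, rfl⟩⟩
  · exact ⟨_, h1, Or.inr ⟨rfl, h2⟩⟩
  · rw [Pi.single_eq_of_ne h1, Pi.single_eq_of_ne h2] at h; simp at h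

theorem Ends.single {G : MultiGraph V E} {e : E} {a b : V} (h : Ends G e a b) (hab : a ≠ b)
    (t : V) : TTour.dd G (Pi.single t 1) e = 1 ↔ t = a ∨ t = b := by
  rw [h.dd]
  by_cases h1 : t = a
  · subst h1; simp [Pi.single_eq_of_ne hab.symm]
  · by_cases h2 : t = b
    · subst h2; simp [Pi.single_eq_of_ne hab]
    · rw [Pi.single_eq_of_ne (Ne.symm h1), Pi.single_eq_of_ne (Ne.symm h2)]; simp [h1, h2]

theorem caseB {G : MultiGraph V E} {τ : V → ZMod 2} {y : E → ℝ}
    (IH : EJBelow.{u} E (Fintype.card V)) (hy : FeasOn G τ All y) (t : V)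
    (hτ : τ t = 1) (e0 : E) (he0 : dd G (Pi.single t 1) e0 = 1) (hy0 : y e0 = 1)
    (huniq : ∀ g, dd G (Pi.single t 1) g = 1 → g ≠ e0 → y g = 0) : DomOn G τ All y := by
  obtain ⟨v, hvt, hends⟩ := exists_ends he0
  have hfeas : FeasOn G τ (ConstOn fun a => a = t ∨ a = v) (Function.update y e0 0) := by
    refine ⟨?_, ?_⟩
    · intro e
      by_cases h : e = e0
      · subst h; simp
      · rw [Function.update_of_ne h]; exact hy.1 e
    · intro w hw hodd
      refine (hy.2 w trivial hodd).trans (le_of_eq ?_)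
      refine sum_congr rfl fun e _ => ?_
      by_cases h : e = e0
      · subst h
        have : dd G w e = 0 := by
          rw [hends.dd, hw t v (Or.inl rfl) (Or.inr rfl), z2add]
        simp [this]
      · rw [Function.update_of_ne h]
  obtain ⟨p, p0, p1, pJ, pm⟩ := contract IH (fun a => a = t ∨ a = v) t v hvt.symm (Or.inl rfl)
    (Or.inr rfl) hfeas
  have hnot : ∀ J, p J ≠ 0 → ∀ g, dd G (Pi.single t 1) g = 1 → g ∉ J := by
    intro J hJ g hg hgJ
    have h1 := pm g
    have h2 : Function.update y e0 0 g = 0 := by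
      by_cases h : g = e0
      · subst h; simp
      · rw [Function.update_of_ne h]; exact huniq g hg h
    rw [h2] at h1
    have h3 : (if g ∈ J then p J else 0) ≤ ∑ J, (if g ∈ J then p J else 0) :=
      single_le_sum (f := fun J => if g ∈ J then p J else 0)
        (fun J _ => by split_ifs <;> simp [p0]) (mem_univ J)
    simp only [hgJ, if_true] at h3
    exact hJ (le_antisymm (h3.trans h1) (p0 J))
  refine domOn_family p (fun J => insert e0 J) p0 p1 ?_ ?_
  · intro J hJ w _
    have he0J := hnot J hJ e0 he0
    have key : ∀ w : V → ZMod 2, w t = w v → ∑ e ∈ insert e0 J, dd G w e = ev τ w := by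
      intro w hw
      rw [sum_insert he0J, hends.dd, hw, z2add, zero_add]
      refine pJ J hJ w ?_
      rintro a b (rfl | rfl) (rfl | rfl) <;> simp [hw]
    by_cases hw : w t = w v
    · exact key w hw
    · have h1 := key (w + Pi.single t 1) (by
        rw [Pi.add_apply, Pi.add_apply, Pi.single_eq_same, Pi.single_eq_of_ne hvt]
        revert hw; generalize w t = a; generalize w v = b; revert a b; decide)
      simp only [dd_add, sum_add_distrib, ev_add, ev_single, hτ] at h1
      have h2 : ∑ e ∈ insert e0 J, dd G (Pi.single t 1) e = 1 := by
        rw [sum_insert he0J, he0, sum_eq_zero, add_zero]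
        intro g hg
        exact z2ne1.mp fun h => hnot J hJ g h hg
      rw [h2] at h1
      exact add_right_cancel h1
  · intro e
    by_cases h : e = e0
    · subst h; simp [p1, hy0]
    · have := pm e
      rw [Function.update_of_ne h] at this
      simpa [h] using this

/-- Ratio test. -/
theorem ratio {I : Type*} [Fintype I] (s a : I → ℝ) (hs : ∀ i, 0 ≤ s i)
    (h0 : ∀ i, s i = 0 → 0 ≤ a i) (hneg : ∃ i, a i < 0) :
    ∃ ε > 0, (∀ i, 0 ≤ s i + ε * a i) ∧ ∃ i, s i ≠ 0 ∧ s i + ε * a i = 0 := by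
  obtain ⟨i0, hi0⟩ := hneg
  obtain ⟨j, hj, hmin⟩ := exists_min_image (univ.filter fun i => a i < 0) (fun i => s i / (- a i))
    ⟨i0, by simp [hi0]⟩
  simp only [mem_filter, mem_univ, true_and] at hj hmin
  have hsj : s j ≠ 0 := fun h => absurd (h0 j h) (not_le.mpr hj)
  have hsj' : 0 < s j := lt_of_le_of_ne (hs j) (Ne.symm hsj)
  have hε : 0 < s j / (- a j) := div_pos hsj' (by linarith)
  refine ⟨s j / (- a j), hε, ?_, j, hsj, ?_⟩
  · intro i
    by_cases h : a i < 0
    · have := hmin i h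
      rw [le_div_iff₀ (by linarith)] at this
      linarith
    · have := mul_nonneg hε.le (not_lt.mp h)
      linarith [hs i]
  · have : a j ≠ 0 := ne_of_lt hj
    field_simp
    ring

/-- Induction measure. -/
noncomputable def meas (G : MultiGraph V E) (τ : V → ZMod 2) (y : E → ℝ) : ℕ :=
  (univ.filter fun e => y e ≠ 0).card +
    (univ.filter fun v => τ v = 1 ∧ yc G y (Pi.single v 1) ≠ 1).card

theorem caseC {G : MultiGraph V E} {τ : V → ZMod 2} {y : E → ℝ}
    (IH : EJBelow.{u} E (Fintype.card V)) (hy : FeasOn G τ All y)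
    (IH2 : ∀ y', FeasOn G τ All y' → meas G τ y' < meas G τ y → DomOn G τ All y')
    (hA : ¬ ∃ w, Nontriv w ∧ ev τ w = 1 ∧ yc G y w = 1)
    (d : E → ℝ) (hd : ∀ e, y e = 0 → d e = 0)
    (hR : ∀ t, τ t = 1 → yc G y (Pi.single t 1) = 1 → yc G d (Pi.single t 1) = 0)
    (hneg : ∃ e, d e < 0) : ∃ ε > 0, DomOn G τ All (fun e => y e + ε * d e) := by
  have hev1 : ev τ 1 = 0 := by
    by_contra h
    have := hy.2 1 trivial (z2ne0.mp h)
    have h0 : yc G y 1 = 0 := by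
      refine sum_eq_zero fun e _ => ?_
      rw [if_neg]
      simp only [dd, Pi.one_apply]; decide
    rw [h0] at this; linarith
  have htriv : ∀ z : E → ℝ, ∀ w, ev τ w = 1 → yc G z w = 1 → ¬ Nontriv w →
      ∃ v, τ v = 1 ∧ (∀ z', yc G z' w = yc G z' (Pi.single v 1)) := by
    intro z w hw hz hn
    obtain ⟨v, rfl | rfl⟩ := not_nontriv (G := G) (y := z) hn (by rw [hz]; norm_num)
    · exact ⟨v, by rwa [ev_single] at hw, fun z' => rfl⟩
    · exact ⟨v, by rwa [ev_add, hev1, zero_add, ev_single] at hw, fun z' => yc_one_add _ _ _⟩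
  obtain ⟨ε, hε, hall, i, hi0, hi⟩ := ratio (I := E ⊕ {w : V → ZMod 2 // ev τ w = 1})
    (Sum.elim y fun w => yc G y w.1 - 1) (Sum.elim d fun w => yc G d w.1)
    (by
      rintro (e | ⟨w, hw⟩)
      · exact hy.1 e
      · simpa using hy.2 w trivial hw)
    (by
      rintro (e | ⟨w, hw⟩) h
      · exact le_of_eq (hd e h).symm
      · simp only [Sum.elim_inr] at h ⊢
        have h1 : yc G y w = 1 := by linarith
        obtain ⟨v, hv, hvw⟩ := htriv y w hw h1 (fun hn => hA ⟨w, hn, hw, h1⟩)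
        rw [hvw, hR v hv (by rw [← hvw, h1])])
    (by obtain ⟨e, he⟩ := hneg; exact ⟨Sum.inl e, he⟩)
  refine ⟨ε, hε, ?_⟩
  have hfeas : FeasOn G τ All (fun e => y e + ε * d e) := by
    refine ⟨fun e => hall (Sum.inl e), fun w _ hw => ?_⟩
    have := hall (Sum.inr ⟨w, hw⟩)
    simp only [Sum.elim_inr] at this
    rw [yc_lin]; linarith
  by_cases hA' : ∃ w, Nontriv w ∧ ev τ w = 1 ∧ yc G (fun e => y e + ε * d e) w = 1
  · obtain ⟨w, h1, h2, h3⟩ := hA'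
    exact caseA IH hfeas w h1 h2 h3
  · apply IH2 _ hfeas
    have hsub1 : (univ.filter fun e => y e + ε * d e ≠ 0) ⊆ univ.filter fun e => y e ≠ 0 := by
      intro e he
      simp only [mem_filter, mem_univ, true_and] at he ⊢
      intro h; exact he (by rw [h, hd e h]; simp)
    have hsub2 : (univ.filter fun v => τ v = 1 ∧ yc G (fun e => y e + ε * d e) (Pi.single v 1) ≠ 1)
        ⊆ univ.filter fun v => τ v = 1 ∧ yc G y (Pi.single v 1) ≠ 1 := by
      intro v hv
      simp only [mem_filter, mem_univ, true_and] at hv ⊢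
      refine ⟨hv.1, fun h => hv.2 ?_⟩
      rw [yc_lin, h, hR v hv.1 h]; ring
    unfold meas
    rcases i with e | ⟨w, hw⟩
    · refine add_lt_add_of_lt_of_le (card_lt_card ?_) (card_le_card hsub2)
      refine (ssubset_iff_of_subset hsub1).mpr ⟨e, by simpa using hi0, ?_⟩
      simpa using hi
    · simp only [Sum.elim_inr] at hi0 hi
      have h1 : yc G (fun e => y e + ε * d e) w = 1 := by rw [yc_lin]; linarith
      obtain ⟨v, hv, hvw⟩ := htriv _ w hw h1 (fun hn => hA' ⟨w, hn, hw, h1⟩)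
      refine add_lt_add_of_le_of_lt (card_le_card hsub1) (card_lt_card ?_)
      refine (ssubset_iff_of_subset hsub2).mpr ⟨v, ?_, ?_⟩
      · simp only [mem_filter, mem_univ, true_and]
        refine ⟨hv, ?_⟩
        rw [← hvw]
        intro h; apply hi0; linarith
      · simp only [mem_filter, mem_univ, true_and, not_and, not_not]
        intro _
        rw [← hvw, h1]

end TTour

namespace TTour

universe u v

variable {V : Type u} {E : Type v} [Fintype V] [Fintype E]

theorem kernel_dim {G : MultiGraph V E} {R : Finset V} {S : Finset E}
    (hK : ∀ d : E → ℝ, (∀ e, e ∉ S → d e = 0) → (∀ t ∈ R, yc G d (Pi.single t 1) = 0) →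
      ∀ e, d e = 0) : S.card ≤ R.card := by
  let ext : (S → ℝ) → E → ℝ := fun d e => if h : e ∈ S then d ⟨e, h⟩ else 0
  let A : (S → ℝ) →ₗ[ℝ] (R → ℝ) :=
    { toFun := fun d t => yc G (ext d) (Pi.single t.1 1)
      map_add' := by
        intro d d'
        funext t
        simp only [yc, ext, Pi.add_apply, ← sum_add_distrib]
        refine sum_congr rfl fun e _ => ?_
        split_ifs <;> simp
      map_smul' := by
        intro c d
        funext t
        simp only [yc, ext, Pi.smul_apply, smul_eq_mul, mul_sum, RingHom.id_apply]
        refine sum_congr rfl fun e _ => ?_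
        split_ifs <;> simp }
  have hinj : Function.Injective A := by
    rw [injective_iff_map_eq_zero]
    intro d hd
    have := hK (ext d) (fun e he => by simp [ext, he]) (fun t ht => congrFun hd ⟨t, ht⟩)
    funext e
    have h := this e.1
    simpa [ext] using h
  have := LinearMap.finrank_le_finrank_of_injective hinj
  simpa using this

theorem card_ends_le {G : MultiGraph V E} (R : Finset V) (e : E) :
    (R.filter fun t => dd G (Pi.single t 1) e = 1) ⊆ {G.fst e, G.snd e} := by
  intro t ht
  rw [mem_filter] at ht
  obtain ⟨v, hv, h⟩ := exists_ends ht.2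
  rcases h with h | h
  · simp [h.1]
  · simp [h.2]

theorem yc_two {G : MultiGraph V E} {y : E → ℝ} {w : V → ZMod 2} {e f : E} (hef : e ≠ f)
    (h : ∀ g, y g ≠ 0 → dd G w g = 1 → g = e ∨ g = f)
    (he : dd G w e = 1) (hf : dd G w f = 1) : yc G y w = y e + y f := by
  unfold yc
  rw [← sum_pair (f := y) hef, ← sum_mem_univ {e, f} y]
  refine sum_congr rfl fun g _ => ?_
  by_cases hg : g = e
  · subst hg; simp [he]
  · by_cases hg' : g = f
    · subst hg'; simp [hf]
    · by_cases hy : y g = 0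
      · simp [hy]
      · have : ¬ dd G w g = 1 := fun h1 => by
          rcases h g hy h1 with h | h
          · exact hg h
          · exact hg' h
        simp [this, hg, hg']

theorem yc_le_single {G : MultiGraph V E} {y : E → ℝ} {w : V → ZMod 2} {g : E}
    (hy : ∀ e, 0 ≤ y e) (h : ∀ g', y g' ≠ 0 → dd G w g' = 1 → g' = g) : yc G y w ≤ y g := by
  unfold yc
  rw [sum_eq_single g]
  · split_ifs
    · exact le_rfl
    · exact hy g
  · intro b _ hb
    split_ifs with h1
    · by_contra h2; exact hb (h b h2 h1)
    · rfl
  · intro h; exact absurd (mem_univ _) h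

theorem yc_pi_single {G : MultiGraph V E} (a : E) (r : ℝ) (w : V → ZMod 2) :
    yc G (Pi.single a r) w = if dd G w a = 1 then r else 0 := by
  unfold yc
  rw [sum_eq_single a]
  · simp
  · intro b _ hb; simp [hb]
  · intro h; exact absurd (mem_univ _) h

theorem yc_sub (G : MultiGraph V E) (y z : E → ℝ) (w : V → ZMod 2) :
    yc G (y - z) w = yc G y w - yc G z w := by
  simp only [yc, ← sum_sub_distrib]
  refine sum_congr rfl fun e _ => ?_
  split_ifs <;> simp

theorem yc_add (G : MultiGraph V E) (y z : E → ℝ) (w : V → ZMod 2) :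
    yc G (y + z) w = yc G y w + yc G z w := by
  simp only [yc, ← sum_add_distrib]
  refine sum_congr rfl fun e _ => ?_
  split_ifs <;> simp

theorem caseD_struct {G : MultiGraph V E} {τ : V → ZMod 2} {y : E → ℝ}
    (hy : FeasOn G τ All y)
    (hB : ∀ t e0, τ t = 1 → yc G y (Pi.single t 1) = 1 → dd G (Pi.single t 1) e0 = 1 →
      y e0 = 1 → ¬ (∀ g, dd G (Pi.single t 1) g = 1 → g ≠ e0 → y g = 0))
    (hK : ∀ d : E → ℝ, (∀ e, y e = 0 → d e = 0) →
      (∀ t, τ t = 1 → yc G y (Pi.single t 1) = 1 → yc G d (Pi.single t 1) = 0) → ∀ e, d e = 0) :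
    (∀ t, τ t = 1 → yc G y (Pi.single t 1) = 1 →
      (univ.filter fun e => y e ≠ 0 ∧ dd G (Pi.single t 1) e = 1).card = 2) ∧
    (∀ e, y e ≠ 0 → ∃ a b, a ≠ b ∧ Ends G e a b ∧ (τ a = 1 ∧ yc G y (Pi.single a 1) = 1) ∧
      (τ b = 1 ∧ yc G y (Pi.single b 1) = 1)) := by
  set R : Finset V := univ.filter fun t => τ t = 1 ∧ yc G y (Pi.single t 1) = 1 with hR
  set S : Finset E := univ.filter fun e => y e ≠ 0 with hS
  have hcard : S.card ≤ R.card := kernel_dim (G := G) fun d h1 h2 =>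
    hK d (fun e he => h1 e (by simp [hS, he])) fun t ht ht' => h2 t (by simp [hR, ht, ht'])
  have hge : ∀ t ∈ R, 2 ≤ (S.filter fun e => dd G (Pi.single t 1) e = 1).card := by
    intro t ht
    simp only [hR, mem_filter, mem_univ, true_and] at ht
    have hyc : yc G y (Pi.single t 1) = ∑ e ∈ S.filter (fun e => dd G (Pi.single t 1) e = 1), y e := by
      unfold yc
      rw [← sum_mem_univ (S.filter fun e => dd G (Pi.single t 1) e = 1) y]
      refine sum_congr rfl fun e _ => ?_
      by_cases h : y e = 0
      · simp [h]
      · simp [hS, h]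
    by_contra hlt
    have hlt' : (S.filter fun e => dd G (Pi.single t 1) e = 1).card = 0 ∨
      (S.filter fun e => dd G (Pi.single t 1) e = 1).card = 1 := by omega
    rcases hlt' with h | h
    · rw [card_eq_zero] at h
      rw [h, sum_empty, ht.2] at hyc
      norm_num at hyc
    · obtain ⟨e0, he0⟩ := card_eq_one.mp h
      rw [he0, sum_singleton, ht.2] at hyc
      have hm : e0 ∈ S.filter fun e => dd G (Pi.single t 1) e = 1 := by rw [he0]; simp
      rw [mem_filter] at hm
      refine hB t e0 ht.1 ht.2 hm.2 hyc.symm fun g hg hge => ?_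
      by_contra h0
      have : g ∈ S.filter fun e => dd G (Pi.single t 1) e = 1 := by simp [hS, h0, hg]
      rw [he0, mem_singleton] at this
      exact hge this
  have hle : ∀ e ∈ S, (R.filter fun t => dd G (Pi.single t 1) e = 1).card ≤ 2 := fun e _ =>
    (card_le_card (card_ends_le R e)).trans card_le_two
  have hdc := sum_card_bipartiteAbove_eq_sum_card_bipartiteBelow (s := R) (t := S)
    (fun t e => dd G (Pi.single t 1) e = 1)
  simp only [bipartiteAbove, bipartiteBelow] at hdc
  have hs1 := sum_le_sum hge
  have hs2 := sum_le_sum hle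
  simp only [sum_const, smul_eq_mul] at hs1 hs2
  have e1 : ∑ t ∈ R, 2 = ∑ t ∈ R, (S.filter fun e => dd G (Pi.single t 1) e = 1).card := by
    simp only [sum_const, smul_eq_mul]; omega
  have e2 : ∑ e ∈ S, (R.filter fun t => dd G (Pi.single t 1) e = 1).card = ∑ e ∈ S, 2 := by
    simp only [sum_const, smul_eq_mul]; omega
  rw [sum_eq_sum_iff_of_le hge] at e1
  rw [sum_eq_sum_iff_of_le hle] at e2
  constructor
  · intro t h1 h2
    have := e1 t (by simp [hR, h1, h2])
    rw [hS, filter_filter] at this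
    exact this.symm
  · intro e he
    have h := e2 e (by simp [hS, he])
    have hsub := card_ends_le (G := G) R e
    have hEq := eq_of_subset_of_card_le hsub (card_le_two.trans h.ge)
    rw [hEq] at h
    have hne : G.fst e ≠ G.snd e := by
      intro h'; rw [h'] at h; simp at h
    have ha : G.fst e ∈ R.filter fun t => dd G (Pi.single t 1) e = 1 := by rw [hEq]; simp
    have hb : G.snd e ∈ R.filter fun t => dd G (Pi.single t 1) e = 1 := by rw [hEq]; simp
    simp only [hR, mem_filter, mem_univ, true_and] at ha hb
    exact ⟨_, _, hne, Or.inl ⟨rfl, rfl⟩, ha.1, hb.1⟩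

theorem two_other {α : Type*} {s : Finset α} {a : α} (hs : s.card = 2) (ha : a ∈ s) :
    ∃ b, b ≠ a ∧ b ∈ s ∧ ∀ g ∈ s, g = a ∨ g = b := by
  obtain ⟨x, y, hxy, rfl⟩ := card_eq_two.mp hs
  simp only [mem_insert, mem_singleton] at ha
  rcases ha with rfl | rfl
  · exact ⟨y, hxy.symm, by simp, by simp⟩
  · exact ⟨x, hxy, by simp, fun g hg => by simpa [or_comm] using hg⟩

theorem caseD {G : MultiGraph V E} {τ : V → ZMod 2} {y : E → ℝ}
    (hy : FeasOn G τ All y)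
    (hA : ¬ ∃ w, Nontriv w ∧ ev τ w = 1 ∧ yc G y w = 1)
    (hB : ∀ t e0, τ t = 1 → yc G y (Pi.single t 1) = 1 → dd G (Pi.single t 1) e0 = 1 →
      y e0 = 1 → ¬ (∀ g, dd G (Pi.single t 1) g = 1 → g ≠ e0 → y g = 0))
    (hK : ∀ d : E → ℝ, (∀ e, y e = 0 → d e = 0) →
      (∀ t, τ t = 1 → yc G y (Pi.single t 1) = 1 → yc G d (Pi.single t 1) = 0) → ∀ e, d e = 0) :
    DomOn G τ All y := by
  obtain ⟨hR2, hends⟩ := caseD_struct hy hB hK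
  by_cases hsupp : ∀ e, y e = 0
  · have hev : ∀ w, ev τ w = 0 := by
      intro w
      rw [← z2ne1]
      intro h
      have := hy.2 w trivial h
      simp [yc, hsupp] at this
      linarith
    refine domOn_family (ι := Unit) (fun _ => 1) (fun _ => ∅) (by simp) (by simp) ?_ ?_
    · intro i _ w _; simp [hev]
    · intro e; simp [hsupp]
  · exfalso
    push Not at hsupp
    obtain ⟨e, he⟩ := hsupp
    obtain ⟨u, v, huv, heuv, hu, hv⟩ := hends e he
    have hother : ∀ t g, (τ t = 1 ∧ yc G y (Pi.single t 1) = 1) → y g ≠ 0 →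
        dd G (Pi.single t 1) g = 1 → ∃ g', g' ≠ g ∧ y g' ≠ 0 ∧ dd G (Pi.single t 1) g' = 1 ∧
          y g + y g' = 1 ∧
          ∀ g'', y g'' ≠ 0 → dd G (Pi.single t 1) g'' = 1 → g'' = g ∨ g'' = g' := by
      intro t g ht hg hdg
      obtain ⟨g', h1, h2, h3⟩ := two_other (a := g) (hR2 t ht.1 ht.2) (by simp [hg, hdg])
      simp only [mem_filter, mem_univ, true_and] at h2 h3
      have h4 : ∀ g'', y g'' ≠ 0 → dd G (Pi.single t 1) g'' = 1 → g'' = g ∨ g'' = g' :=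
        fun g'' a b => h3 g'' ⟨a, b⟩
      refine ⟨g', h1, h2.1, h2.2, ?_, h4⟩
      rw [← yc_two h1.symm h4 hdg h2.2, ht.2]
    obtain ⟨f, hfe, hf, huf, hsum1, honly1⟩ := hother u e hu he ((heuv.single huv u).mpr (Or.inl rfl))
    obtain ⟨x, hxu, hfux⟩ := exists_ends huf
    have hux : u ≠ x := hxu.symm
    have hxR : τ x = 1 ∧ yc G y (Pi.single x 1) = 1 := by
      obtain ⟨a, b, hab, hfab, ha, hb⟩ := hends f hf
      rcases (hfab.single hab x).mp ((hfux.single hux x).mpr (Or.inr rfl)) with rfl | rfl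
      · exact ha
      · exact hb
    by_cases hvx : v = x
    · subst hvx
      have := hK (Pi.single e 1 - Pi.single f 1) (by
        intro g hg
        have h1 : g ≠ e := fun h => he (h ▸ hg)
        have h2 : g ≠ f := fun h => hf (h ▸ hg)
        simp [h1, h2]) (by
        intro t _ _
        rw [yc_sub, yc_pi_single, yc_pi_single]
        simp only [heuv.single huv, hfux.single huv]
        ring) e
      simp [hfe.symm] at this
    · obtain ⟨e2, he2e, hye2, hve2, hsum2, honly2⟩ :=
        hother v e hv he ((heuv.single huv v).mpr (Or.inr rfl))
      obtain ⟨f2, hf2f, hyf2, hxf2, hsum3, honly3⟩ :=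
        hother x f hxR hf ((hfux.single hux x).mpr (Or.inr rfl))
      set w : V → ZMod 2 := Pi.single u 1 + Pi.single v 1 + Pi.single x 1 with hw
      have hwu : w u = 1 := by simp [hw, huv.symm, huv, hux]
      have hwv : w v = 1 := by simp [hw, huv.symm, hvx]
      have hwx : w x = 1 := by simp [hw, Ne.symm hvx, Ne.symm hux, hxu]
      have hwe : dd G w e = 0 := by rw [heuv.dd, hwu, hwv]; decide
      have hwf : dd G w f = 0 := by rw [hfux.dd, hwu, hwx]; decide
      have hodd : ev τ w = 1 := by
        rw [hw, ev_add, ev_add, ev_single, ev_single, ev_single, hu.1, hv.1, hxR.1]; decide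
      have honly : ∀ g, y g ≠ 0 → dd G w g = 1 → g = e2 ∨ g = f2 := by
        intro g hg hdg
        have hne : g ≠ e := fun h => by rw [h, hwe] at hdg; simp at hdg
        have hnf : g ≠ f := fun h => by rw [h, hwf] at hdg; simp at hdg
        by_cases h1 : dd G (Pi.single u 1) g = 1
        · rcases honly1 g hg h1 with h | h
          · exact absurd h hne
          · exact absurd h hnf
        by_cases h2 : dd G (Pi.single v 1) g = 1
        · rcases honly2 g hg h2 with h | h
          · exact absurd h hne
          · exact Or.inl h
        by_cases h3 : dd G (Pi.single x 1) g = 1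
        · rcases honly3 g hg h3 with h | h
          · exact absurd h hnf
          · exact Or.inr h
        rw [z2ne1] at h1 h2 h3
        rw [hw, dd_add, dd_add, h1, h2, h3] at hdg
        simp at hdg
      have hfe1 := hy.2 w trivial hodd
      have hpos2 : 0 < y e2 := lt_of_le_of_ne (hy.1 _) (Ne.symm hye2)
      have hpos3 : 0 < y f2 := lt_of_le_of_ne (hy.1 _) (Ne.symm hyf2)
      have hpos0 : 0 < y e := lt_of_le_of_ne (hy.1 _) (Ne.symm he)
      have hpos1 : 0 < y f := lt_of_le_of_ne (hy.1 _) (Ne.symm hf)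
      have hone : ∀ g, (∀ g', y g' ≠ 0 → dd G w g' = 1 → g' = g) → y g < 1 → False :=
        fun g h1 h2 => absurd (yc_le_single hy.1 h1) (by linarith)
      have hde2 : dd G w e2 = 1 := by
        by_contra h
        refine hone f2 (fun g h1 h2 => (honly g h1 h2).resolve_left ?_) (by linarith)
        rintro rfl; exact h h2
      have hdf2 : dd G w f2 = 1 := by
        by_contra h
        refine hone e2 (fun g h1 h2 => (honly g h1 h2).resolve_right ?_) (by linarith)
        rintro rfl; exact h h2
      have hef2 : e2 ≠ f2 := by
        rintro rfl
        exact hone e2 (fun g h1 h2 => by simpa using honly g h1 h2) (by linarith)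
      have htight : yc G y w = 1 := by
        rw [yc_two hef2 honly hde2 hdf2]; linarith
      obtain ⟨z, hzv, hez⟩ := exists_ends hve2
      obtain ⟨z', hzx, hfz⟩ := exists_ends hxf2
      have hwz : w z = 0 := by
        have := hez.dd w
        rw [hde2, hwv] at this
        revert this; generalize w z = a; revert a; decide
      have hwz' : w z' = 0 := by
        have := hfz.dd w
        rw [hdf2, hwx] at this
        revert this; generalize w z' = a; revert a; decide
      have hall : ∀ b, w b = 0 → b = z := by
        intro b hb
        by_contra hne
        exact hA ⟨w, ⟨⟨u, v, huv, hwu, hwv⟩, b, z, hne, hb, hwz⟩, hodd, htight⟩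
      obtain rfl : z' = z := hall z' hwz'
      have hzu : z' ≠ u := by rintro rfl; rw [hwu] at hwz; simp at hwz
      have hne1 : e ≠ f2 := by rintro rfl; rw [hwe] at hdf2; simp at hdf2
      have := hK (Pi.single e 1 - Pi.single e2 1 + Pi.single f2 1 - Pi.single f 1) (by
        intro g hg
        have h1 : g ≠ e := fun h => he (h ▸ hg)
        have h2 : g ≠ f := fun h => hf (h ▸ hg)
        have h3 : g ≠ e2 := fun h => hye2 (h ▸ hg)
        have h4 : g ≠ f2 := fun h => hyf2 (h ▸ hg)
        simp [h1, h2, h3, h4]) (by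
        intro t _ _
        rw [yc_sub, yc_add, yc_sub, yc_pi_single, yc_pi_single, yc_pi_single, yc_pi_single]
        simp only [heuv.single huv, hfux.single hux, hez.single hzv.symm, hfz.single hzx.symm]
        by_cases t1 : t = u
        · subst t1; simp [huv, hux, hzu.symm]
        by_cases t2 : t = v
        · subst t2; simp [hvx, hzv.symm, huv.symm]
        by_cases t3 : t = x
        · subst t3; simp [Ne.symm hvx, hzx.symm, hxu]
        by_cases t4 : t = z'
        · subst t4; simp [hzv, hzx, hzu]
        simp [t1, t2, t3, t4]) e
      simp [he2e.symm, hne1, hfe.symm] at this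

theorem ej_aux (E : Type v) [Fintype E] (n : ℕ) : EJBelow.{u} E n := by
  induction n with
  | zero => intro V _ h; omega
  | succ n IH =>
    intro V _ hcard G τ
    have IH' : EJBelow.{u} E (Fintype.card V) := fun V' _ h => IH V' (by omega)
    have key : ∀ m : ℕ, ∀ y, meas G τ y = m → FeasOn G τ All y → DomOn G τ All y := by
      intro m
      induction m using Nat.strong_induction_on with
      | _ m IH2 =>
        intro y hm hy
        by_cases hA : ∃ w, Nontriv w ∧ ev τ w = 1 ∧ yc G y w = 1
        · obtain ⟨w, h1, h2, h3⟩ := hA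
          exact caseA IH' hy w h1 h2 h3
        by_cases hB : ∃ t e0, τ t = 1 ∧ yc G y (Pi.single t 1) = 1 ∧ dd G (Pi.single t 1) e0 = 1 ∧
            y e0 = 1 ∧ (∀ g, dd G (Pi.single t 1) g = 1 → g ≠ e0 → y g = 0)
        · obtain ⟨t, e0, h1, h2, h3, h4, h5⟩ := hB
          exact caseB IH' hy t h1 e0 h3 h4 h5
        by_cases hK : ∃ d : E → ℝ, (∀ e, y e = 0 → d e = 0) ∧
            (∀ t, τ t = 1 → yc G y (Pi.single t 1) = 1 → yc G d (Pi.single t 1) = 0) ∧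
            ∃ e, d e ≠ 0
        · obtain ⟨d, hd, hR, e, he⟩ := hK
          have hC : ∀ d : E → ℝ, (∀ e, y e = 0 → d e = 0) →
              (∀ t, τ t = 1 → yc G y (Pi.single t 1) = 1 → yc G d (Pi.single t 1) = 0) →
              (∃ e, d e < 0) → ∃ ε > 0, DomOn G τ All (fun e => y e + ε * d e) :=
            fun d h1 h2 h3 => caseC IH' hy
              (fun y' hy' hlt => IH2 _ (hm ▸ hlt) y' rfl hy') hA d h1 h2 h3
          have hd' : ∀ e, y e = 0 → (-d) e = 0 := fun e he => by simp [hd e he]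
          have hR' : ∀ t, τ t = 1 → yc G y (Pi.single t 1) = 1 → yc G (-d) (Pi.single t 1) = 0 := by
            intro t h1 h2
            have h3 := yc_sub G 0 d (Pi.single t 1)
            have h4 : yc G 0 (Pi.single t 1) = 0 := by simp [yc]
            rw [zero_sub, h4, hR t h1 h2] at h3
            simpa using h3
          by_cases hneg : ∃ e, d e < 0
          · obtain ⟨ε, hε, hdom⟩ := hC d hd hR hneg
            by_cases hpos : ∃ e, (-d) e < 0
            · obtain ⟨ε', hε', hdom'⟩ := hC (-d) hd' hR' hpos
              refine domOn_mono (domOn_convex hdom hdom' (ε' / (ε + ε')) (ε / (ε + ε'))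
                (by positivity) (by positivity) (by field_simp; ring)) ?_
              intro e
              refine le_of_eq ?_
              simp only [Pi.neg_apply]
              field_simp
              ring
            · push Not at hpos
              refine domOn_mono hdom fun e => ?_
              have h1 := hpos e
              simp only [Pi.neg_apply] at h1
              nlinarith
          · have hpos : ∃ e, (-d) e < 0 := by
              push Not at hneg
              refine ⟨e, ?_⟩
              have := lt_of_le_of_ne (hneg e) (Ne.symm he)
              simpa using this
            obtain ⟨ε', hε', hdom'⟩ := hC (-d) hd' hR' hpos
            push Not at hneg
            refine domOn_mono hdom' fun e => ?_
            have h1 := hneg e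
            simp only [Pi.neg_apply]
            nlinarith
        · refine caseD hy hA ?_ ?_
          · intro t e0 h1 h2 h3 h4 h5
            exact hB ⟨t, e0, h1, h2, h3, h4, h5⟩
          · intro d h1 h2 e
            by_contra h3
            exact hK ⟨d, h1, h2, e, h3⟩
    exact fun y hy => key _ y rfl hy

/-- The Edmonds and Johnson theorem. -/
theorem ej (G : MultiGraph V E) (τ : V → ZMod 2) (y : E → ℝ) (hy : ∀ e, 0 ≤ y e)
    (h : ∀ w, ev τ w = 1 → 1 ≤ yc G y w) : DomOn G τ All y :=
  ej_aux E (Fintype.card V + 1) V (Nat.lt_succ_self _) G τ y ⟨hy, fun w _ => h w⟩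

end TTour

namespace TTour

universe u v

variable {V : Type u} {E : Type v} [Fintype V] [Fintype E]

theorem conn_iff {G : MultiGraph V E} {P : E → Prop} :
    G.ConnectedOn P ↔ ∀ w : V → ZMod 2, (∀ e, P e → dd G w e = 0) → ∀ a b, w a = w b := by
  constructor
  · intro h w hw a b
    have := h a b
    induction this with
    | refl => rfl
    | tail _ hbc ih =>
      rw [ih]
      obtain ⟨e, he, hE⟩ := hbc
      have := hw e he
      rw [Ends.dd (G := G) (e := e) hE] at this
      revert this
      generalize w _ = a
      generalize w _ = b
      revert a b
      decide
  · intro h a b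
    let w : V → ZMod 2 := fun v => if Relation.ReflTransGen (G.Adj P) a v then 1 else 0
    have hw : ∀ e, P e → dd G w e = 0 := by
      intro e he
      have h1 : Relation.ReflTransGen (G.Adj P) a (G.fst e) ↔
          Relation.ReflTransGen (G.Adj P) a (G.snd e) :=
        ⟨fun h => h.tail ⟨e, he, Or.inl ⟨rfl, rfl⟩⟩, fun h => h.tail ⟨e, he, Or.inr ⟨rfl, rfl⟩⟩⟩
      simp only [dd, w, h1, z2add]
    have h2 := h w hw a b
    have h3 : w a = 1 := if_pos Relation.ReflTransGen.refl
    rw [h3] at h2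
    by_contra h4
    simp [w, h4] at h2

/-- Feasibility for all partition inequalities (in function form). -/
def PartFeas (G : MultiGraph V E) (x : E → ℝ) : Prop :=
  ∀ (β : Type u) (φ : V → β),
    ((univ.image φ).card : ℝ) - 1 ≤ ∑ e, if φ (G.fst e) ≠ φ (G.snd e) then x e else 0

theorem min_connector (n : ℕ) : ∀ (V : Type u) [Fintype V] (G : MultiGraph V E) (x : E → ℝ),
    Fintype.card V = n → (∀ e, 0 ≤ x e) → PartFeas G x → ∀ w : E → ℝ, (∀ e, 0 ≤ w e) →
    ∃ S : Finset E, G.ConnectedOn (· ∈ S) ∧ S.card ≤ n - 1 ∧ ∑ e ∈ S, w e ≤ ∑ e, w e * x e := by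
  induction n with
  | zero =>
    intro V _ G x hc hx hp w hw
    refine ⟨∅, ?_, by simp, ?_⟩
    · intro a; exact ((Fintype.card_eq_zero_iff.mp hc).false a).elim
    · simpa using sum_nonneg fun e _ => mul_nonneg (hw e) (hx e)
  | succ n IH =>
    intro V _ G x hc hx hp w hw
    have hfin := hp V id
    simp only [image_id, card_univ, hc, id, Nat.cast_add, Nat.cast_one] at hfin
    by_cases hn : n = 0
    · refine ⟨∅, ?_, by simp, ?_⟩
      · intro a b
        have : Fintype.card V ≤ 1 := by omega
        rw [Fintype.card_le_one_iff.mp this a b]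
      · simpa using sum_nonneg fun e _ => mul_nonneg (hw e) (hx e)
    · have hne : (univ.filter fun e => G.fst e ≠ G.snd e).Nonempty := by
        by_contra h
        rw [not_nonempty_iff_eq_empty, filter_eq_empty_iff] at h
        have h0 : ∑ e, (if G.fst e ≠ G.snd e then x e else 0) = 0 :=
          sum_eq_zero fun e he => if_neg (h he)
        rw [h0] at hfin
        have : (1 : ℝ) ≤ n := by exact_mod_cast Nat.one_le_iff_ne_zero.mpr hn
        linarith
      obtain ⟨e0, he0, hmin⟩ := exists_min_image _ w hne
      simp only [mem_filter, mem_univ, true_and] at he0 hmin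
      set μ := w e0 with hμ
      have hμ0 : 0 ≤ μ := hw e0
      let w' : E → ℝ := fun e => if G.fst e ≠ G.snd e then w e - μ else w e
      have hw' : ∀ e, 0 ≤ w' e := by
        intro e
        simp only [w']
        split_ifs with h
        · linarith [hmin e h]
        · exact hw e
      let a := G.fst e0
      let b := G.snd e0
      let V' := {v : V // v ≠ b}
      let π : V → V' := fun v => if h : v = b then ⟨a, he0⟩ else ⟨v, h⟩
      have hπs : Function.Surjective π := fun v' => ⟨v'.1, by simp [π, v'.2]⟩
      let G' : MultiGraph V' E := ⟨fun e => π (G.fst e), fun e => π (G.snd e)⟩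
      have hcard : Fintype.card V' = n := by
        have := Fintype.card_subtype_compl (fun v : V => v = b)
        simp only [Fintype.card_subtype_eq] at this
        change Fintype.card {v : V // ¬ v = b} = n
        rw [this, hc]; rfl
      have hp' : PartFeas G' x := by
        intro β φ
        have h1 := hp β (φ ∘ π)
        have h2 : univ.image (φ ∘ π) = univ.image φ := by
          rw [← image_image, image_univ_of_surjective hπs]
        rw [h2] at h1
        exact h1
      obtain ⟨S, hS, hScard, hSw⟩ := IH V' G' x hcard hx hp' w' hw'
      refine ⟨insert e0 S, ?_, ?_, ?_⟩
      · rw [conn_iff] at hS ⊢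
        intro w hw
        have hab : w a = w b := by
          have := hw e0 (mem_insert_self _ _)
          change w a + w b = 0 at this
          revert this
          generalize w a = a
          generalize w b = b
          revert a b
          decide
        have hf : ∀ v, w v = w (π v).1 := by
          intro v
          by_cases h : v = b
          · subst h; simp [π, hab]
          · simp [π, h]
        have := hS (fun v' => w v'.1) (fun e he => by
          have := hw e (mem_insert_of_mem he)
          simp only [dd] at this ⊢
          rw [hf (G.fst e), hf (G.snd e)] at this
          exact this)
        intro c d
        rw [hf c, hf d]; exact this _ _
      · have := card_insert_le e0 S
        omega
      · have hle : ∀ e, w e ≤ w' e + μ := by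
          intro e; simp only [w']; split_ifs <;> linarith
        have hw'0 : w' e0 = 0 := by simp [w', he0, hμ]
        have h1 : ∑ e ∈ insert e0 S, w' e = ∑ e ∈ S, w' e := by
          by_cases h : e0 ∈ S
          · rw [insert_eq_of_mem h]
          · rw [sum_insert h, hw'0, zero_add]
        have h2 : ((insert e0 S).card : ℝ) ≤ n := by
          have := card_insert_le e0 S
          exact_mod_cast (by omega : (insert e0 S).card ≤ n)
        have h3 : ∑ e, w e * x e = ∑ e, w' e * x e
            + μ * ∑ e, (if G.fst e ≠ G.snd e then x e else 0) := by
          rw [mul_sum, ← sum_add_distrib]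
          refine sum_congr rfl fun e _ => ?_
          simp only [w']
          split_ifs <;> ring
        calc ∑ e ∈ insert e0 S, w e ≤ ∑ e ∈ insert e0 S, (w' e + μ) := sum_le_sum fun e _ => hle e
          _ = ∑ e ∈ S, w' e + (insert e0 S).card * μ := by
            rw [sum_add_distrib, h1, sum_const, nsmul_eq_mul]
          _ ≤ ∑ e, w' e * x e + n * μ := add_le_add hSw (mul_le_mul_of_nonneg_right h2 hμ0)
          _ ≤ _ := by
            rw [h3]
            have : μ * n ≤ μ * ∑ e, (if G.fst e ≠ G.snd e then x e else 0) :=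
              mul_le_mul_of_nonneg_left (by linarith) hμ0
            linarith

open scoped Pointwise in
/-- Convex domination from weak duality. -/
theorem dominate (𝒮 : Finset (Finset E)) (x : E → ℝ)
    (h : ∀ w : E → ℝ, (∀ e, 0 ≤ w e) → ∃ S ∈ 𝒮, ∑ e ∈ S, w e ≤ ∑ e, w e * x e) :
    ∃ p : Finset E → ℝ, (∀ S, 0 ≤ p S) ∧ ∑ S, p S = 1 ∧ (∀ S, p S ≠ 0 → S ∈ 𝒮) ∧
      ∀ e, ∑ S, (if e ∈ S then p S else 0) ≤ x e := by
  let χ : Finset E → E → ℝ := fun S e => if e ∈ S then 1 else 0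
  have hχ : Function.Injective χ := by
    intro S S' hSS
    ext e
    have := congrFun hSS e
    simp only [χ] at this
    by_cases h1 : e ∈ S <;> by_cases h2 : e ∈ S' <;> simp_all
  let A : Set (E → ℝ) := convexHull ℝ ((𝒮.image χ : Finset (E → ℝ)) : Set (E → ℝ))
  let O : Set (E → ℝ) := {z | ∀ e, 0 ≤ z e}
  have hAc : IsCompact A := Set.Finite.isCompact_convexHull ℝ (𝒮.image χ).finite_toSet
  have hOc : IsClosed O := by
    have : O = ⋂ e, {z : E → ℝ | 0 ≤ z e} := by ext z; simp [O]
    rw [this]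
    exact isClosed_iInter fun e => isClosed_le continuous_const (continuous_apply e)
  have hOconv : Convex ℝ O := by
    intro y hy z hz a b ha hb _ e
    simp only [Pi.add_apply, Pi.smul_apply, smul_eq_mul]
    exact add_nonneg (mul_nonneg ha (hy e)) (mul_nonneg hb (hz e))
  have hK : IsClosed (A + O) := hOc.add_left_of_isCompact hAc
  have hKc : Convex ℝ (A + O) := (convex_convexHull ℝ _).add hOconv
  have hmem : x ∈ A + O := by
    by_contra hx
    obtain ⟨f, u, hfx, hfb⟩ := geometric_hahn_banach_point_closed hKc hK hx
    let w : E → ℝ := fun e => f (Pi.single e 1)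
    have hf : ∀ z, f z = ∑ e, w e * z e := by
      intro z
      have : z = ∑ e, z e • (Pi.single e 1 : E → ℝ) := by
        funext g
        simp [Finset.sum_apply, Pi.single_apply]
      conv_lhs => rw [this]
      rw [map_sum]
      refine sum_congr rfl fun e _ => ?_
      rw [map_smul, smul_eq_mul, mul_comm]
    obtain ⟨S0, hS0, -⟩ := h 0 (by simp)
    have hχmem : ∀ S ∈ 𝒮, χ S ∈ A := fun S hS =>
      subset_convexHull ℝ _ (by simpa using ⟨S, hS, rfl⟩)
    have hw : ∀ e, 0 ≤ w e := by
      intro e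
      by_contra hneg
      push Not at hneg
      have hb : ∀ t : ℝ, 0 ≤ t → u < f (χ S0) + t * w e := by
        intro t ht
        have := hfb (χ S0 + t • Pi.single e 1) (Set.add_mem_add (hχmem S0 hS0) (by
          intro g
          simp only [Pi.smul_apply, smul_eq_mul, Pi.single_apply]
          split_ifs <;> simp [ht]))
        rw [map_add, map_smul, smul_eq_mul] at this
        exact this
      have h1 := hb 0 le_rfl
      have h2 := hb ((f (χ S0) - u) / (- w e)) (div_nonneg (by linarith) (by linarith))
      have h3 : (f (χ S0) - u) / (- w e) * w e = -(f (χ S0) - u) := by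
        have : w e ≠ 0 := ne_of_lt hneg
        field_simp
      linarith
    obtain ⟨S, hS, hle⟩ := h w hw
    have h1 := hfb (χ S) (by
      have := Set.add_mem_add (hχmem S hS) (show (0 : E → ℝ) ∈ O from fun e => le_rfl)
      simpa using this)
    have h2 : f (χ S) = ∑ e ∈ S, w e := by
      rw [hf, ← sum_mem_univ S w]
      refine sum_congr rfl fun e _ => ?_
      simp [χ]
    rw [hf] at hfx
    linarith
  obtain ⟨a, ha, z, hz, haz⟩ := hmem
  simp only [A, Finset.mem_convexHull'] at ha
  obtain ⟨q, hq0, hq1, hq⟩ := ha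
  rw [sum_image fun a _ b _ h => hχ h] at hq1 hq
  refine ⟨fun S => if S ∈ 𝒮 then q (χ S) else 0, ?_, ?_, ?_, ?_⟩
  · intro S
    dsimp only
    split_ifs with hS
    · exact hq0 _ (mem_image_of_mem _ hS)
    · exact le_rfl
  · rw [← hq1, ← sum_mem_univ 𝒮 fun S => q (χ S)]
    refine sum_congr rfl fun S _ => ?_
    by_cases h2 : S ∈ 𝒮 <;> simp [h2]
  · intro S hS
    by_contra h; simp [h] at hS
  · intro e
    have h1 : ∑ S, (if e ∈ S then (if S ∈ 𝒮 then q (χ S) else 0) else 0) = a e := by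
      rw [← hq, Finset.sum_apply, ← sum_mem_univ 𝒮 fun S => (q (χ S) • χ S) e]
      refine sum_congr rfl fun S _ => ?_
      by_cases h1 : e ∈ S <;> by_cases h2 : S ∈ 𝒮 <;> simp [h1, h2, χ]
    rw [h1, ← haz]
    have := hz e
    simp only [Pi.add_apply]
    linarith

theorem connector (G : MultiGraph V E) (x : E → ℝ) (hx : ∀ e, 0 ≤ x e) (hp : PartFeas G x) :
    ∃ p : Finset E → ℝ, (∀ S, 0 ≤ p S) ∧ ∑ S, p S = 1 ∧
      (∀ S, p S ≠ 0 → G.ConnectedOn (· ∈ S)) ∧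
      ∀ e, ∑ S, (if e ∈ S then p S else 0) ≤ x e := by
  obtain ⟨p, h0, h1, h2, h3⟩ := dominate (univ.filter fun S => G.ConnectedOn (· ∈ S)) x (by
    intro w hw
    obtain ⟨S, hS, -, hle⟩ := min_connector _ V G x rfl hx hp w hw
    exact ⟨S, by simp [hS], hle⟩)
  exact ⟨p, h0, h1, fun S hS => by simpa using h2 S hS, h3⟩

end TTour

namespace TTour

universe u v

variable {V : Type u} {E : Type v} [Fintype V] [Fintype E]

/-- Indicator of `T` with values in `ZMod 2`. -/
noncomputable def ind (T : Finset V) : V → ZMod 2 := fun v => if v ∈ T then 1 else 0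

theorem dom_min {G : MultiGraph V E} {τ : V → ZMod 2} {y c : E → ℝ} (h : DomOn G τ All y)
    (hc : ∀ e, 0 ≤ c e) : ∃ J, JoinOn G τ All J ∧ ∑ e ∈ J, c e ≤ ∑ e, y e * c e := by
  obtain ⟨p, p0, p1, pJ, pm⟩ := h
  by_contra hcon
  push Not at hcon
  have h1 : ∀ J, p J * ∑ e, y e * c e ≤ p J * ∑ e ∈ J, c e := by
    intro J
    by_cases h : p J = 0
    · simp [h]
    · exact mul_le_mul_of_nonneg_left (hcon J (pJ J h)).le (p0 J)
  obtain ⟨J0, -, hJ0⟩ := exists_ne_zero_of_sum_ne_zero (f := p) (s := univ) (by rw [p1]; norm_num)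
  have h2 : ∑ J, p J * ∑ e, y e * c e < ∑ J, p J * ∑ e ∈ J, c e :=
    sum_lt_sum (fun J _ => h1 J) ⟨J0, mem_univ _, mul_lt_mul_of_pos_left (hcon J0 (pJ J0 hJ0))
      (lt_of_le_of_ne (p0 J0) (Ne.symm hJ0))⟩
  rw [← sum_mul, p1, one_mul] at h2
  have h3 : ∑ J, p J * ∑ e ∈ J, c e = ∑ e, (∑ J, if e ∈ J then p J else 0) * c e := by
    simp only [sum_mul]
    rw [sum_comm]
    refine sum_congr rfl fun J _ => ?_
    rw [mul_sum, ← sum_mem_univ J]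
    refine sum_congr rfl fun e _ => ?_
    split_ifs <;> simp
  rw [h3] at h2
  have h4 : ∑ e, (∑ J, if e ∈ J then p J else 0) * c e ≤ ∑ e, y e * c e :=
    sum_le_sum fun e _ => mul_le_mul_of_nonneg_right (pm e) (hc e)
  linarith

theorem sum_single_dd (G : MultiGraph V E) (w : V → ZMod 2) (e : E) :
    ∑ v, dd G (Pi.single v 1) e * w v = dd G w e := by
  simp only [dd, add_mul, sum_add_distrib]
  simp [Pi.single_apply]

theorem isTTour_of {G : MultiGraph V E} {T : Finset V} {F : Multiset E}
    (h1 : G.ConnectedOn (· ∈ F))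
    (h2 : ∀ v, (F.map (dd G (Pi.single v 1))).sum = ind T v) : G.IsTTour T F := by
  refine ⟨h1, ?_⟩
  ext v
  simp only [MultiGraph.oddVerts, mem_filter, mem_univ, true_and]
  have h3 : ((G.deg F v : ℕ) : ZMod 2) = (F.map (dd G (Pi.single v 1))).sum := by
    unfold MultiGraph.deg
    rw [Nat.cast_multiset_sum, Multiset.map_map]
    congr 1
    refine Multiset.map_congr rfl fun e _ => ?_
    simp [dd, Pi.single_apply]
  rw [← ZMod.natCast_eq_one_iff_odd, h3, h2]
  unfold ind
  split_ifs with h <;> simp [h]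

/-- Edges of `L` whose fundamental cut contains `e`. -/
noncomputable def PP (G : MultiGraph V E) (L : Finset E) (U : E → V → ZMod 2) (e : E) : Finset E :=
  L.filter fun f => dd G (U f) e = 1

theorem dd_sum (G : MultiGraph V E) {ι : Type*} (A : Finset ι) (U : ι → V → ZMod 2) (e : E) :
    dd G (∑ f ∈ A, U f) e = ∑ f ∈ A, dd G (U f) e := by
  simp only [dd, Finset.sum_apply, sum_add_distrib]

theorem tour {G : MultiGraph V E} {T : Finset V} {S L : Finset E}
    (hS : G.ConnectedOn (· ∈ S)) {U : E → V → ZMod 2}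
    (hU : ∀ f ∈ L, ∀ s ∈ S, dd G (U f) s = 1 ↔ s = f)
    (hUodd : ∀ f ∈ L, ev (ind T) (U f) = 1) {y c : E → ℝ} (hy : ∀ e, 0 ≤ y e)
    (hyf : ∀ w, ev (ind T) w + ∑ e ∈ S \ L, dd G w e = 1 → 1 ≤ yc G y w)
    (hc : ∀ e, 0 ≤ c e) (m : E → E) :
    ∃ F : Multiset E, G.IsTTour T F ∧ (F.map c).sum ≤ ∑ e ∈ S \ L, c e +
      ∑ e, y e * (c e + 2 * ∑ f ∈ (PP G L U e).erase (m e), c f) := by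
  let τ : V → ZMod 2 := fun v => ind T v + ∑ e ∈ S \ L, dd G (Pi.single v 1) e
  have hτ : ∀ w, ev τ w = ev (ind T) w + ∑ e ∈ S \ L, dd G w e := by
    intro w
    simp only [ev, τ, add_mul, sum_add_distrib, sum_mul]
    rw [sum_comm (s := univ) (t := S \ L)]
    simp only [sum_single_dd]
  obtain ⟨J, hJ, hJc⟩ := dom_min (c := fun e => c e + 2 * ∑ f ∈ (PP G L U e).erase (m e), c f)
    (ej G τ y hy fun w hw => hyf w (by rw [← hτ, hw])) (fun e =>
      add_nonneg (hc e) (mul_nonneg (by norm_num) (sum_nonneg fun f _ => hc f)))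
  let F : Multiset E := (S \ L).val + J.val + 2 • ∑ e ∈ J, ((PP G L U e).erase (m e)).val
  have hF1 : ∀ e ∈ S, e ∉ L → e ∈ F := by
    intro e h1 h2
    simp only [F, Multiset.mem_add]
    left; left
    rw [mem_val, mem_sdiff]; exact ⟨h1, h2⟩
  have hF2 : ∀ e ∈ J, e ∈ F := by
    intro e h1
    simp only [F, Multiset.mem_add]
    left; right; exact h1
  have hF3 : ∀ e ∈ J, ∀ f ∈ PP G L U e, f ≠ m e → f ∈ F := by
    intro e he f hf hfm
    simp only [F, Multiset.mem_add]
    right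
    rw [Multiset.mem_nsmul]
    refine ⟨by norm_num, ?_⟩
    rw [Multiset.mem_sum]
    exact ⟨e, he, by rw [mem_val, mem_erase]; exact ⟨hfm, hf⟩⟩
  refine ⟨F, isTTour_of ?_ ?_, ?_⟩
  · rw [conn_iff] at hS ⊢
    intro w hw
    set A := S.filter fun s => dd G w s = 1 with hA
    by_cases hAe : A = ∅
    · apply hS
      intro e he
      rw [← z2ne1]
      intro h
      have : e ∈ A := by simp [hA, he, h]
      rw [hAe] at this; simp at this
    exfalso
    obtain ⟨f, hf⟩ := nonempty_iff_ne_empty.mpr hAe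
    have hAL : ∀ g ∈ A, g ∈ L ∧ g ∈ S ∧ dd G w g = 1 := by
      intro g hg
      rw [hA, mem_filter] at hg
      refine ⟨?_, hg.1, hg.2⟩
      by_contra h
      have := hw g (hF1 g hg.1 h)
      rw [hg.2] at this; simp at this
    have hnF : ∀ g ∈ A, g ∉ F := by
      intro g hg h
      have := hw g h
      rw [(hAL g hg).2.2] at this; simp at this
    have h1 : ∑ e ∈ J, dd G (U f) e = 1 := by
      rw [hJ (U f) trivial, hτ, hUodd f (hAL f hf).1, sum_eq_zero, add_zero]
      intro s hs
      rw [mem_sdiff] at hs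
      rw [← z2ne1, hU f (hAL f hf).1 s hs.1]
      rintro rfl
      exact hs.2 (hAL s hf).1
    obtain ⟨e, heJ, he⟩ := exists_ne_zero_of_sum_ne_zero (by rw [h1]; simp : ∑ e ∈ J, dd G (U f) e ≠ 0)
    replace he : dd G (U f) e = 1 := z2ne0.mp he
    have hP : ∀ g ∈ A, dd G (U g) e = 1 → g = m e := by
      intro g hg hge
      by_contra hgm
      exact hnF g hg (hF3 e heJ g (by simp [PP, (hAL g hg).1, hge]) hgm)
    have hfm := hP f hf he
    have h2 : ∑ g ∈ A, dd G (U g) e = 1 := by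
      rw [sum_eq_single f]
      · exact he
      · intro g hg hgf
        rw [← z2ne1]
        intro h
        exact hgf ((hP g hg h).trans hfm.symm)
      · intro h; exact absurd hf h
    have h3 := hS (w + ∑ g ∈ A, U g) (by
      intro s hs
      rw [dd_add, dd_sum]
      by_cases hsA : s ∈ A
      · rw [(hAL s hsA).2.2, sum_eq_single s]
        · rw [(hU s (hAL s hsA).1 s hs).mpr rfl]; decide
        · intro g hg hgs
          rw [← z2ne1, hU g (hAL g hg).1 s hs]
          exact Ne.symm hgs
        · intro h; exact absurd hsA h
      · have h4 : dd G w s = 0 := by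
          rw [← z2ne1]; intro h; exact hsA (by simp [hA, hs, h])
        rw [h4, zero_add]
        refine sum_eq_zero fun g hg => ?_
        rw [← z2ne1, hU g (hAL g hg).1 s hs]
        rintro rfl; exact hsA hg)
    have h5 : dd G (w + ∑ g ∈ A, U g) e = 0 := by
      unfold dd
      rw [h3 (G.fst e) (G.snd e), z2add]
    rw [dd_add, dd_sum, h2, hw e (hF2 e heJ)] at h5
    simp at h5
  · intro v
    simp only [F, Multiset.map_add, Multiset.sum_add, Multiset.map_nsmul, Multiset.sum_nsmul]
    have h1 : (Multiset.map (dd G (Pi.single v 1)) J.val).sum = ∑ e ∈ J, dd G (Pi.single v 1) e := rfl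
    have h2 : (Multiset.map (dd G (Pi.single v 1)) (S \ L).val).sum
      = ∑ e ∈ S \ L, dd G (Pi.single v 1) e := rfl
    rw [h1, h2, hJ _ trivial, hτ, ev_single, two_nsmul, z2add, add_zero]
    generalize (∑ e ∈ S \ L, dd G (Pi.single v 1) e) = a
    generalize ind T v = b
    revert a b
    decide
  · simp only [F, Multiset.map_add, Multiset.sum_add, Multiset.map_nsmul, Multiset.sum_nsmul]
    have h1 : (Multiset.map c J.val).sum = ∑ e ∈ J, c e := rfl
    have h2 : (Multiset.map c (S \ L).val).sum = ∑ e ∈ S \ L, c e := rfl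
    have h3 : (Multiset.map c (∑ e ∈ J, ((PP G L U e).erase (m e)).val)).sum
        = ∑ e ∈ J, ∑ f ∈ (PP G L U e).erase (m e), c f := by
      have := map_sum (Multiset.sumAddMonoidHom.comp (Multiset.mapAddMonoidHom c))
        (fun e => ((PP G L U e).erase (m e)).val) J
      exact this
    rw [h1, h2, h3, nsmul_eq_mul]
    rw [sum_add_distrib, ← mul_sum] at hJc
    push_cast
    linarith

theorem partFeas_any {G : MultiGraph V E} {x : E → ℝ} (h : PartFeas G x) {β : Type*} (φ : V → β) :
    ((univ.image φ).card : ℝ) - 1 ≤ ∑ e, if φ (G.fst e) ≠ φ (G.snd e) then x e else 0 := by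
  let q : V → Quotient (Setoid.ker φ) := Quotient.mk _
  let g : Quotient (Setoid.ker φ) → β := Quotient.lift φ (fun a b h => h)
  have hg : Function.Injective g := by
    intro a b
    induction a using Quotient.inductionOn
    induction b using Quotient.inductionOn
    intro h
    exact Quotient.sound h
  have hφ : φ = g ∘ q := rfl
  have h1 := h _ q
  have h2 : (univ.image φ).card = (univ.image q).card := by
    have h3 : univ.image φ = (univ.image q).image g := by rw [image_image, ← hφ]
    rw [h3, card_image_of_injective _ hg]
  rw [h2]
  have h5 : ((univ.image q).card : ℝ) - 1 ≤ ∑ e, if q (G.fst e) ≠ q (G.snd e) then x e else 0 := by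
    convert h1
  refine h5.trans (le_of_eq ?_)
  refine sum_congr rfl fun e _ => ?_
  have : q (G.fst e) ≠ q (G.snd e) ↔ φ (G.fst e) ≠ φ (G.snd e) := not_congr hg.eq_iff.symm
  simp only [this]

theorem parts_lower {G : MultiGraph V E} {x : E → ℝ} (hx : ∀ e, 0 ≤ x e) (hp : PartFeas G x)
    {L : Finset E} {U : E → V → ZMod 2}
    (hU : ∀ f ∈ L, ∀ s ∈ L, dd G (U f) s = 1 ↔ s = f) :
    (L.card : ℝ) ≤ ∑ e, if ∃ f ∈ L, dd G (U f) e = 1 then x e else 0 := by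
  by_cases hne : L = ∅
  · subst hne; simp
  obtain ⟨g0, hg0⟩ := nonempty_iff_ne_empty.mpr hne
  let φ : V → (L → ZMod 2) := fun v f => U f.1 v
  have h1 : ((univ.image φ).card : ℝ) - 1 ≤ ∑ e, if φ (G.fst e) ≠ φ (G.snd e) then x e else 0 := by
    convert partFeas_any hp φ
  have h2 : L.card + 1 ≤ (univ.image φ).card := by
    let Θ : (ZMod 2 × (L → ZMod 2)) →ₗ[ZMod 2] ({z // z ∈ univ.image φ} → ZMod 2) :=
      { toFun := fun ab z => ab.1 + ∑ f, ab.2 f * z.1 f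
        map_add' := by
          intro a b
          funext z
          simp only [Prod.fst_add, Prod.snd_add, Pi.add_apply, add_mul, sum_add_distrib]
          ring
        map_smul' := by
          intro r a
          funext z
          simp only [Prod.smul_fst, Prod.smul_snd, Pi.smul_apply, smul_eq_mul, RingHom.id_apply,
            mul_add, mul_sum, mul_assoc] }
    have hinj : Function.Injective Θ := by
      rw [injective_iff_map_eq_zero]
      rintro ⟨a, b⟩ hab
      have hv : ∀ v, a + ∑ f, b f * U f.1 v = 0 := fun v =>
        congrFun hab ⟨φ v, mem_image_of_mem _ (mem_univ v)⟩
      have hb : b = 0 := by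
        funext g
        have e1 : ∑ f : L, b f * dd G (U f.1) g.1 = 0 := by
          have h1 := hv (G.fst g.1)
          have h2 := hv (G.snd g.1)
          simp only [dd, mul_add, sum_add_distrib]
          have h3 : (a + ∑ f : L, b f * U f.1 (G.fst g.1)) + (a + ∑ f : L, b f * U f.1 (G.snd g.1)) = 0 := by
            rw [h1, h2, add_zero]
          have h4 := z2add a
          linear_combination h3 - h4
        rw [sum_eq_single g] at e1
        · rw [(hU g.1 g.2 g.1 g.2).mpr rfl, mul_one] at e1
          exact e1
        · intro f _ hfg
          have : dd G (U f.1) g.1 = 0 := by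
            rw [← z2ne1, hU f.1 f.2 g.1 g.2]
            intro h; exact hfg (Subtype.ext h.symm)
          rw [this, mul_zero]
        · intro h; exact absurd (mem_univ _) h
      have ha := hv (G.fst g0)
      rw [hb] at ha
      simp at ha
      rw [ha, hb]; rfl
    have := LinearMap.finrank_le_finrank_of_injective hinj
    simp only [Module.finrank_prod, Module.finrank_self, Module.finrank_fintype_fun_eq_card,
      Fintype.card_coe] at this
    omega
  have h3 : ((L.card + 1 : ℕ) : ℝ) ≤ ((univ.image φ).card : ℝ) := by exact_mod_cast h2
  push_cast at h3
  have h4 : ∑ e, (if φ (G.fst e) ≠ φ (G.snd e) then x e else 0)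
      ≤ ∑ e, if ∃ f ∈ L, dd G (U f) e = 1 then x e else 0 := by
    refine sum_le_sum fun e _ => ?_
    by_cases h : φ (G.fst e) ≠ φ (G.snd e)
    · obtain ⟨f, hf⟩ := Function.ne_iff.mp h
      rw [if_pos h, if_pos]
      refine ⟨f.1, f.2, ?_⟩
      rw [← z2ne0]
      intro h0
      apply hf
      change U f.1 (G.fst e) + U f.1 (G.snd e) = 0 at h0
      change U f.1 (G.fst e) = U f.1 (G.snd e)
      revert h0
      generalize U f.1 (G.fst e) = a
      generalize U f.1 (G.snd e) = b
      revert a b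
      decide
    · rw [if_neg h]
      split_ifs <;> simp [hx]
  linarith

theorem cost_lower {G : MultiGraph V E} {x : E → ℝ} (hx : ∀ e, 0 ≤ x e) (hp : PartFeas G x)
    {U : E → V → ZMod 2} (n : ℕ) : ∀ (L : Finset E) (c M : E → ℝ), L.card = n →
    (∀ f ∈ L, ∀ s ∈ L, dd G (U f) s = 1 ↔ s = f) → (∀ f ∈ L, 0 ≤ c f) → (∀ e, 0 ≤ M e) →
    (∀ f ∈ L, ∀ e, dd G (U f) e = 1 → c f ≤ M e) → ∑ f ∈ L, c f ≤ ∑ e, x e * M e := by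
  induction n with
  | zero =>
    intro L c M hL _ _ hM _
    rw [card_eq_zero] at hL
    subst hL
    simpa using sum_nonneg fun e _ => mul_nonneg (hx e) (hM e)
  | succ n IH =>
    intro L c M hL hU hc hM hcM
    have hne : L.Nonempty := card_pos.mp (by omega)
    obtain ⟨f0, hf0, hmin⟩ := exists_min_image L c hne
    have hIH := IH (L.erase f0) (fun f => c f - c f0)
      (fun e => if ∃ f ∈ L, dd G (U f) e = 1 then M e - c f0 else M e)
      (by rw [card_erase_of_mem hf0]; omega)
      (fun f hf s hs => hU f (mem_of_mem_erase hf) s (mem_of_mem_erase hs))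
      (fun f hf => sub_nonneg.mpr (hmin f (mem_of_mem_erase hf)))
      (by
        intro e
        split_ifs with h
        · obtain ⟨f, hf, hfe⟩ := h
          linarith [hcM f hf e hfe, hmin f hf]
        · exact hM e)
      (by
        intro f hf e hfe
        rw [if_pos ⟨f, mem_of_mem_erase hf, hfe⟩]
        linarith [hcM f (mem_of_mem_erase hf) e hfe])
    have h1 : ∑ f ∈ L.erase f0, (c f - c f0) = ∑ f ∈ L, c f - L.card * c f0 := by
      rw [← sum_erase_add L _ hf0, sum_sub_distrib, sum_const, nsmul_eq_mul,
        card_erase_of_mem hf0, Nat.cast_sub (by omega)]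
      push_cast
      ring
    have h2 := parts_lower hx hp hU
    have h3 : ∑ e, x e * (if ∃ f ∈ L, dd G (U f) e = 1 then M e - c f0 else M e)
        = ∑ e, x e * M e - (∑ e, if ∃ f ∈ L, dd G (U f) e = 1 then x e else 0) * c f0 := by
      rw [sum_mul, ← sum_sub_distrib]
      refine sum_congr rfl fun e _ => ?_
      split_ifs <;> ring
    rw [h1, h3] at hIH
    have := mul_le_mul_of_nonneg_right h2 (hc f0 hf0)
    linarith

theorem tourB {G : MultiGraph V E} {T : Finset V} {S L : Finset E} (hLS : L ⊆ S)
    (hS : G.ConnectedOn (· ∈ S)) {U : E → V → ZMod 2}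
    (hU : ∀ f ∈ L, ∀ s ∈ S, dd G (U f) s = 1 ↔ s = f)
    (hUodd : ∀ f ∈ L, ev (ind T) (U f) = 1) {x b c : E → ℝ} (hx : ∀ e, 0 ≤ x e)
    (hp : PartFeas G x) (a : ℝ) (ha : 0 ≤ a) (hb : ∀ e, 0 ≤ b e) (hbS : ∀ e, e ∉ S → b e = 0)
    (hyf : ∀ w, ev (ind T) w + ∑ e ∈ S \ L, dd G w e = 1 → 1 ≤ a * yc G x w + yc G b w)
    (hc : ∀ e, 0 ≤ c e) :
    ∃ F : Multiset E, G.IsTTour T F ∧ (F.map c).sum ≤ ∑ e ∈ S \ L, c e + a * ∑ e, c e * x e +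
      2 * a * ∑ f ∈ L, c f * (yc G x (U f) - 1) + ∑ e, b e * c e := by
  have hm : ∀ e, ∃ g, (PP G L U e).Nonempty → g ∈ PP G L U e ∧ ∀ f ∈ PP G L U e, c f ≤ c g := by
    intro e
    by_cases h : (PP G L U e).Nonempty
    · obtain ⟨g, hg, hmax⟩ := exists_max_image _ c h
      exact ⟨g, fun _ => ⟨hg, hmax⟩⟩
    · exact ⟨e, fun h' => absurd h' h⟩
  choose m hm using hm
  obtain ⟨F, hF, hFc⟩ := tour hS hU hUodd (y := fun e => b e + a * x e)
    (fun e => add_nonneg (hb e) (mul_nonneg ha (hx e)))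
    (fun w hw => by rw [yc_lin]; linarith [hyf w hw]) hc m
  refine ⟨F, hF, hFc.trans ?_⟩
  have hbe : ∀ e, b e * ∑ f ∈ (PP G L U e).erase (m e), c f = 0 := by
    intro e
    by_cases he : e ∈ S
    · have : (PP G L U e).erase (m e) = ∅ := by
        have hsub : ∀ f ∈ PP G L U e, f = e := by
          intro f hf
          simp only [PP, mem_filter] at hf
          exact ((hU f hf.1 e he).mp hf.2).symm
        rw [eq_empty_iff_forall_notMem]
        intro f hf
        rw [mem_erase] at hf
        have h1 := hsub f hf.2
        have h2 := hsub _ (hm e ⟨f, hf.2⟩).1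
        exact hf.1 (h1.trans h2.symm)
      rw [this]; simp
    · rw [hbS e he, zero_mul]
  let M : E → ℝ := fun e => if (PP G L U e).Nonempty then c (m e) else 0
  have hM : ∀ e, ∑ f ∈ (PP G L U e).erase (m e), c f = ∑ f ∈ PP G L U e, c f - M e := by
    intro e
    by_cases h : (PP G L U e).Nonempty
    · simp only [M, if_pos h]
      rw [← sum_erase_add _ _ (hm e h).1]; ring
    · simp only [M, if_neg h]
      rw [not_nonempty_iff_eq_empty] at h
      rw [h]; simp
  have hlow := cost_lower hx hp (U := U) _ L c M rfl (fun f hf s hs => hU f hf s (hLS hs))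
    (fun f _ => hc f)
    (fun e => by simp only [M]; split_ifs <;> simp [hc])
    (fun f hf e hfe => by
      have hmem : f ∈ PP G L U e := by simp [PP, hf, hfe]
      have hne : (PP G L U e).Nonempty := ⟨f, hmem⟩
      simp only [M]
      rw [if_pos hne]
      exact (hm e ⟨f, hmem⟩).2 f hmem)
  have hsw : ∑ e, x e * ∑ f ∈ PP G L U e, c f = ∑ f ∈ L, c f * yc G x (U f) := by
    simp only [PP, sum_filter, mul_sum, yc]
    rw [sum_comm]
    refine sum_congr rfl fun f _ => sum_congr rfl fun e _ => ?_
    split_ifs <;> ring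
  have e1 : ∑ e, (b e + a * x e) * (c e + 2 * ∑ f ∈ (PP G L U e).erase (m e), c f)
      = ∑ e, b e * c e + a * ∑ e, c e * x e
        + 2 * a * (∑ f ∈ L, c f * yc G x (U f) - ∑ e, x e * M e) := by
    rw [← hsw, ← sum_sub_distrib, mul_sum, mul_sum, ← sum_add_distrib, ← sum_add_distrib]
    refine sum_congr rfl fun e _ => ?_
    have h1 := hbe e
    rw [hM] at h1 ⊢
    linear_combination 2 * h1
  rw [e1]
  have e2 : ∑ f ∈ L, c f * (yc G x (U f) - 1) = ∑ f ∈ L, c f * yc G x (U f) - ∑ f ∈ L, c f := by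
    rw [← sum_sub_distrib]
    exact sum_congr rfl fun f _ => by ring
  rw [e2]
  have := mul_le_mul_of_nonneg_left hlow (by linarith : 0 ≤ 2 * a)
  linarith

end TTour

namespace TTour

universe u v

variable {V : Type u} {E : Type v} [Fintype V] [Fintype E]

/-- The cut of `w` as a set of edges. -/
noncomputable def cw (G : MultiGraph V E) (w : V → ZMod 2) : Finset E :=
  univ.filter fun e => dd G w e = 1

/-- The narrow cuts. -/
noncomputable def NN (G : MultiGraph V E) (τ : V → ZMod 2) (x : E → ℝ) : Finset (Finset E) :=
  univ.filter fun C => ∃ w, ev τ w = 1 ∧ yc G x w < 2 ∧ C = cw G w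

theorem yc_cw (G : MultiGraph V E) (y : E → ℝ) (w : V → ZMod 2) :
    yc G y w = ∑ e ∈ cw G w, y e := by
  unfold yc cw
  rw [sum_filter]

theorem mem_cw {G : MultiGraph V E} {w : V → ZMod 2} {e : E} : e ∈ cw G w ↔ dd G w e = 1 := by
  simp [cw]

theorem sum_dd (G : MultiGraph V E) (A : Finset E) (w : V → ZMod 2) :
    ∑ e ∈ A, dd G w e = ((A ∩ cw G w).card : ZMod 2) := by
  rw [card_eq_sum_ones, Nat.cast_sum, ← sum_filter_add_sum_filter_not A (fun e => dd G w e = 1)]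
  have h1 : A.filter (fun e => dd G w e = 1) = A ∩ cw G w := by
    ext e; simp [mem_cw]
  rw [h1]
  have h2 : ∑ e ∈ A.filter (fun e => ¬ dd G w e = 1), dd G w e = 0 :=
    sum_eq_zero fun e he => z2ne1.mp (mem_filter.mp he).2
  rw [h2, add_zero]
  refine sum_congr rfl fun e he => ?_
  rw [mem_inter, mem_cw] at he
  simp [he.2]

theorem sum_chi (G : MultiGraph V E) (A : Finset E) (w : V → ZMod 2) (r : E → ℝ) :
    yc G (fun e => if e ∈ A then r e else 0) w = ∑ e ∈ A ∩ cw G w, r e := by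
  rw [yc_cw, ← sum_filter]
  refine sum_congr ?_ fun _ _ => rfl
  ext e; simp [and_comm]

theorem const_ev {G : MultiGraph V E} {τ : V → ZMod 2} (ht : ev τ 1 = 0) {w : V → ZMod 2}
    (hw : ∀ a b, w a = w b) : ev τ w = 0 ∧ ∀ e, dd G w e = 0 := by
  constructor
  · rcases isEmpty_or_nonempty V with h | ⟨⟨a⟩⟩
    · simp [ev]
    · have : ev τ w = ev τ 1 * w a := by
        simp only [ev, sum_mul, Pi.one_apply, mul_one]
        exact sum_congr rfl fun v _ => by rw [hw v a]
      rw [this, ht, zero_mul]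
  · intro e
    unfold dd
    rw [hw (G.fst e) (G.snd e), z2add]

theorem conn_hit {G : MultiGraph V E} {S : Finset E} (hS : G.ConnectedOn (· ∈ S))
    {w : V → ZMod 2} (hw : ¬ ∀ a b, w a = w b) : 1 ≤ (S ∩ cw G w).card := by
  rw [conn_iff] at hS
  by_contra h
  apply hw
  apply hS
  intro e he
  rw [← z2ne1]
  intro h1
  apply h
  rw [Nat.succ_le_iff, card_pos]
  exact ⟨e, by rw [mem_inter, mem_cw]; exact ⟨he, h1⟩⟩

theorem exists_join {G : MultiGraph V E} {τ : V → ZMod 2} (ht : ev τ 1 = 0) {S : Finset E}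
    (hS : G.ConnectedOn (· ∈ S)) : ∃ I ⊆ S, ∀ w, ((I ∩ cw G w).card : ZMod 2) = ev τ w := by
  obtain ⟨p, p0, p1, pJ, pm⟩ := ej G τ (fun e => if e ∈ S then 1 else 0)
    (fun e => by split_ifs <;> norm_num) (by
      intro w hw
      rw [sum_chi G S w (fun _ => 1), sum_const, nsmul_eq_mul, mul_one]
      have := conn_hit hS (w := w) (by
        intro h
        rw [(const_ev (G := G) ht h).1] at hw
        simp at hw)
      exact_mod_cast this)
  obtain ⟨I, -, hI⟩ := exists_ne_zero_of_sum_ne_zero (f := p) (s := univ) (by rw [p1]; norm_num)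
  refine ⟨I, ?_, ?_⟩
  · intro e he
    by_contra heS
    have h1 := pm e
    simp only [heS, if_false] at h1
    have h2 : p I ≤ ∑ J, if e ∈ J then p J else 0 := by
      have := single_le_sum (f := fun J => if e ∈ J then p J else 0) (s := univ)
        (fun J _ => by split_ifs <;> simp [p0]) (mem_univ I)
      simpa [he] using this
    exact hI (le_antisymm (h2.trans h1) (p0 I))
  · intro w
    rw [← sum_dd, pJ I hI w trivial]

/-- A distribution on connectors dominated by `x`. -/
structure Dist (G : MultiGraph V E) (x : E → ℝ) (p : Finset E → ℝ) : Prop where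
  p0 : ∀ S, 0 ≤ p S
  p1 : ∑ S, p S = 1
  conn : ∀ S, p S ≠ 0 → G.ConnectedOn (· ∈ S)
  marg : ∀ e, ∑ S, (if e ∈ S then p S else 0) ≤ x e

/-- Probability that `C` is lonely. -/
noncomputable def PL (p : Finset E → ℝ) (C : Finset E) : ℝ :=
  ∑ S, if (S ∩ C).card = 1 then p S else 0

/-- Probability that the intersection with `C` is even. -/
noncomputable def PE (p : Finset E → ℝ) (C : Finset E) : ℝ :=
  ∑ S, if Even (S ∩ C).card then p S else 0

theorem swap_sum (p : Finset E → ℝ) (C : Finset E) (r : E → ℝ) :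
    ∑ e ∈ C, r e * ∑ S, (if e ∈ S then p S else 0) = ∑ S, p S * ∑ e ∈ S ∩ C, r e := by
  simp only [mul_sum]
  rw [sum_comm]
  refine sum_congr rfl fun S _ => ?_
  have : S ∩ C = C.filter (· ∈ S) := by ext e; simp [and_comm]
  rw [this, sum_filter]
  refine sum_congr rfl fun e _ => ?_
  split_ifs <;> ring

theorem PL_lower {G : MultiGraph V E} {x : E → ℝ} {p : Finset E → ℝ} (D : Dist G x p)
    {w : V → ZMod 2} (hw : ¬ ∀ a b, w a = w b) : 2 - yc G x w ≤ PL p (cw G w) := by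
  have h1 : ∑ S, p S * ∑ e ∈ S ∩ cw G w, (1 : ℝ) ≤ yc G x w := by
    rw [← swap_sum, yc_cw]
    exact sum_le_sum fun e _ => by rw [one_mul]; exact D.marg e
  have h2 : ∑ S, (2 * p S - if (S ∩ cw G w).card = 1 then p S else 0)
      ≤ ∑ S, p S * ∑ e ∈ S ∩ cw G w, (1 : ℝ) := by
    refine sum_le_sum fun S _ => ?_
    rw [sum_const, nsmul_eq_mul, mul_one]
    by_cases hp : p S = 0
    · simp [hp]
    have h3 := conn_hit (D.conn S hp) hw
    have h0 := D.p0 S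
    split_ifs with h
    · rw [h]; push_cast; linarith
    · have h4 : (2 : ℝ) ≤ ((S ∩ cw G w).card : ℝ) := by
        have : 2 ≤ (S ∩ cw G w).card := by omega
        exact_mod_cast this
      nlinarith
  rw [sum_sub_distrib, ← mul_sum, D.p1] at h2
  unfold PL
  linarith

theorem PE_upper {G : MultiGraph V E} {x : E → ℝ} {p : Finset E → ℝ} (D : Dist G x p)
    (C : Finset E) : PE p C ≤ 1 - PL p C := by
  unfold PE PL
  rw [← D.p1, ← sum_sub_distrib]
  refine sum_le_sum fun S _ => ?_
  have h0 := D.p0 S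
  split_ifs with h1 h2 h2
  · rw [h2] at h1; exact absurd h1 (by decide)
  all_goals linarith

theorem PL_nonneg {G : MultiGraph V E} {x : E → ℝ} {p : Finset E → ℝ} (D : Dist G x p)
    (C : Finset E) : 0 ≤ PL p C :=
  sum_nonneg fun S _ => by have := D.p0 S; split_ifs <;> simp [this]

/-- The weight of a narrow cut with value `t`. -/
noncomputable def gg (t : ℝ) : ℝ := max 0 ((1 / 2) * (1 - 1 / (7 * (2 - t))))

theorem gg_nonneg (t : ℝ) : 0 ≤ gg t := le_max_left _ _

theorem gg_mul {t : ℝ} (ht : t < 2) {q : ℝ} (hq : 2 - t ≤ q) :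
    1 / 2 * (2 - t) - 1 / 14 ≤ gg t * q := by
  have h0 : 0 < 2 - t := by linarith
  have h1 : gg t * (2 - t) ≤ gg t * q := mul_le_mul_of_nonneg_left hq (gg_nonneg t)
  have h2 : (1 / 2) * (1 - 1 / (7 * (2 - t))) * (2 - t) ≤ gg t * (2 - t) :=
    mul_le_mul_of_nonneg_right (le_max_right _ _) h0.le
  have h3 : (1 / 2) * (1 - 1 / (7 * (2 - t))) * (2 - t) = 1 / 2 * (2 - t) - 1 / 14 := by
    field_simp
    ring
  linarith

theorem gg_final {t : ℝ} (ht : t < 2) (h1 : 1 ≤ t) :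
    2 / 3 * (gg t * (t - 1)) + 1 / 3 * (2 / 7 * (t - 1) - 4 / 7) ≤ 0 := by
  have h0 : 0 < 2 - t := by linarith
  unfold gg
  rcases max_cases 0 ((1 / 2) * (1 - 1 / (7 * (2 - t)))) with ⟨h, -⟩ | ⟨h, -⟩
  · rw [h]; linarith
  · rw [h]
    have : 2 / 3 * ((1 / 2) * (1 - 1 / (7 * (2 - t))) * (t - 1)) + 1 / 3 * (2 / 7 * (t - 1) - 4 / 7)
        = - (3 * (2 - t) - 1) ^ 2 / (21 * (2 - t)) := by
      field_simp
      ring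
    rw [this]
    apply div_nonpos_of_nonpos_of_nonneg
    · have := sq_nonneg (3 * (2 - t) - 1); linarith
    · linarith

/-- Cost of the single edges in a lonely cut, averaged. -/
noncomputable def WW (p : Finset E → ℝ) (c : E → ℝ) (C : Finset E) : ℝ :=
  ∑ S, if (S ∩ C).card = 1 then p S * ∑ e ∈ S ∩ C, c e else 0

/-- The correction vector of a cut. -/
noncomputable def qq (p : Finset E → ℝ) (C : Finset E) (e : E) : ℝ :=
  ∑ S, if (S ∩ C).card = 1 then (if e ∈ S ∩ C then p S else 0) else 0

theorem qq_sum (p : Finset E → ℝ) (C : Finset E) (r : E → ℝ) :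
    ∑ e, qq p C e * r e = WW p r C := by
  unfold qq WW
  simp only [sum_mul]
  rw [sum_comm]
  refine sum_congr rfl fun S _ => ?_
  split_ifs with h
  · rw [mul_sum, ← sum_mem_univ (S ∩ C)]
    refine sum_congr rfl fun e _ => ?_
    split_ifs <;> simp
  · simp

theorem qq_cut (p : Finset E → ℝ) (C : Finset E) : ∑ e ∈ C, qq p C e = PL p C := by
  unfold qq PL
  rw [sum_comm]
  refine sum_congr rfl fun S _ => ?_
  split_ifs with h
  · rw [← sum_filter]
    have : C.filter (· ∈ S ∩ C) = S ∩ C := by ext e; simp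
    rw [this, sum_const, h, one_smul]
  · simp

theorem qq_nonneg {G : MultiGraph V E} {x : E → ℝ} {p : Finset E → ℝ} (D : Dist G x p)
    (C : Finset E) (e : E) : 0 ≤ qq p C e :=
  sum_nonneg fun S _ => by have := D.p0 S; split_ifs <;> simp [this]

theorem tourA {G : MultiGraph V E} {T : Finset V} {x c : E → ℝ} (hx : ∀ e, 0 ≤ x e)
    (hc : ∀ e, 0 ≤ c e) (ht : ev (ind T) 1 = 0)
    (h2 : ∀ w, (¬ ∀ a b, w a = w b) → ev (ind T) w = 0 → 2 ≤ yc G x w)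
    {p : Finset E → ℝ} (D : Dist G x p) {S I : Finset E} (hS : G.ConnectedOn (· ∈ S))
    (hI : ∀ w, ((I ∩ cw G w).card : ZMod 2) = ev (ind T) w) :
    ∃ F : Multiset E, G.IsTTour T F ∧ (F.map c).sum ≤ ∑ e ∈ S, c e + 1 / 2 * ∑ e, c e * x e
      + 1 / 14 * ∑ e ∈ I, c e + ∑ C ∈ (NN G (ind T) x).filter (fun C => Even (S ∩ C).card),
        gg (∑ e ∈ C, x e) * WW p c C := by
  set 𝒩 := (NN G (ind T) x).filter (fun C => Even (S ∩ C).card) with hN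
  let z : E → ℝ := fun e => ∑ C ∈ 𝒩, gg (∑ e ∈ C, x e) * qq p C e
  have hz : ∀ e, 0 ≤ z e := fun e => sum_nonneg fun C _ =>
    mul_nonneg (gg_nonneg _) (qq_nonneg D C e)
  let χ : E → ℝ := fun e => if e ∈ I then 1 else 0
  have hχ : ∀ e, 0 ≤ χ e := fun e => by simp only [χ]; split_ifs <;> norm_num
  have hycz : ∀ w, 0 ≤ yc G z w := fun w => by
    rw [yc_cw]; exact sum_nonneg fun e _ => hz e
  have hycχ : ∀ w, yc G χ w = (I ∩ cw G w).card := fun w => by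
    rw [sum_chi G I w (fun _ => 1), sum_const, nsmul_eq_mul, mul_one]
  obtain ⟨F, hF, hFc⟩ := tour (L := ∅) (T := T) hS (U := fun _ => 0) (by simp) (by simp)
    (y := fun e => (z e + (1 / 2) * x e) + (1 / 14) * χ e) (c := c)
    (fun e => by have := hz e; have := hx e; have := hχ e; linarith)
    (by
      intro w hw
      rw [yc_lin, yc_lin, hycχ]
      have hI0 : (0 : ℝ) ≤ ((I ∩ cw G w).card : ℝ) := Nat.cast_nonneg _
      rw [sdiff_empty] at hw
      have hnc : ¬ ∀ a b, w a = w b := by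
        intro h
        obtain ⟨h1, h2⟩ := const_ev (G := G) ht h
        rw [h1, sum_eq_zero fun e _ => h2 e] at hw
        simp at hw
      by_cases hy : 2 ≤ yc G x w
      · linarith [hycz w]
      have hev : ev (ind T) w = 1 := by
        rw [← z2ne0]; intro h; exact hy (h2 w hnc h)
      push Not at hy
      have hI1 : (1 : ℝ) ≤ ((I ∩ cw G w).card : ℝ) := by
        have : (I ∩ cw G w).card ≠ 0 := by
          intro h
          have := hI w
          rw [h, hev] at this
          simp at this
        exact_mod_cast Nat.one_le_iff_ne_zero.mpr this
      have hmem : cw G w ∈ 𝒩 := by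
        rw [hN, mem_filter]
        refine ⟨?_, ?_⟩
        · simp only [NN, mem_filter, mem_univ, true_and]
          exact ⟨w, hev, hy, rfl⟩
        · rw [← ZMod.natCast_eq_zero_iff_even, ← sum_dd]
          rw [hev] at hw
          simpa using hw
      have hz1 : gg (yc G x w) * PL p (cw G w) ≤ yc G z w := by
        rw [← qq_cut, yc_cw, yc_cw, mul_sum]
        refine sum_le_sum fun e _ => ?_
        exact single_le_sum (f := fun C => gg (∑ e ∈ C, x e) * qq p C e)
          (fun C _ => mul_nonneg (gg_nonneg _) (qq_nonneg D C e)) hmem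
      have := gg_mul hy (PL_lower D hnc)
      linarith) hc id
  refine ⟨F, hF, hFc.trans (le_of_eq ?_)⟩
  have e1 : ∀ e, (PP G ∅ (fun _ => (0 : V → ZMod 2)) e).erase (id e) = ∅ := by
    intro e; simp [PP]
  simp only [e1, sum_empty, mul_zero, add_zero, sdiff_empty, add_mul, sum_add_distrib]
  have e2 : ∑ e, z e * c e = ∑ C ∈ 𝒩, gg (∑ e ∈ C, x e) * WW p c C := by
    simp only [z, sum_mul]
    rw [sum_comm]
    refine sum_congr rfl fun C _ => ?_
    rw [← qq_sum, mul_sum]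
    exact sum_congr rfl fun e _ => by ring
  have e3 : ∑ e, 1 / 2 * x e * c e = 1 / 2 * ∑ e, c e * x e := by
    rw [mul_sum]; exact sum_congr rfl fun e _ => by ring
  have e4 : ∑ e, 1 / 14 * χ e * c e = 1 / 14 * ∑ e ∈ I, c e := by
    rw [← sum_mem_univ I, mul_sum]
    refine sum_congr rfl fun e _ => ?_
    simp only [χ]
    split_ifs <;> ring
  rw [e2, e3, e4]
  ring

end TTour

namespace TTour

universe u v

variable {V : Type u} {E : Type v} [Fintype V] [Fintype E]

theorem cw_unique {G : MultiGraph V E} {S : Finset E} (hS : G.ConnectedOn (· ∈ S))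
    {w w' : V → ZMod 2} (h : S ∩ cw G w = S ∩ cw G w') : cw G w = cw G w' := by
  rw [conn_iff] at hS
  have h1 := hS (w + w') (by
    intro e he
    rw [dd_add]
    have h2 : dd G w e = 1 ↔ dd G w' e = 1 := by
      rw [← mem_cw, ← mem_cw]
      have := Finset.ext_iff.mp h e
      simpa [he] using this
    rcases z2 (dd G w e) with h3 | h3 <;> rcases z2 (dd G w' e) with h4 | h4 <;>
      rw [h3, h4] at h2 ⊢ <;> simp_all <;> decide)
  ext e
  rw [mem_cw, mem_cw]
  have h2 : dd G (w + w') e = 0 := by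
    unfold dd; rw [h1 (G.fst e) (G.snd e), z2add]
  rw [dd_add] at h2
  generalize dd G w e = a at h2
  generalize dd G w' e = b at h2
  revert a b
  decide

theorem card_split1 {L I : Finset E} (hLI : L ⊆ I) (C : Finset E) :
    (I ∩ C).card = ((I \ L) ∩ C).card + (L ∩ C).card := by
  rw [← card_union_of_disjoint]
  · congr 1
    ext e
    have := @hLI e
    simp only [mem_inter, mem_union, mem_sdiff]
    tauto
  · rw [disjoint_left]
    intro e h h'
    rw [mem_inter, mem_sdiff] at h
    rw [mem_inter] at h'
    exact h.1.2 h'.1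

theorem card_split2 {L I S : Finset E} (hLI : L ⊆ I) (hIS : I ⊆ S) (C : Finset E) :
    ((S \ L) ∩ C).card = ((S \ I) ∩ C).card + ((I \ L) ∩ C).card := by
  rw [← card_union_of_disjoint]
  · congr 1
    ext e
    have := @hLI e
    have := @hIS e
    simp only [mem_inter, mem_union, mem_sdiff]
    tauto
  · rw [disjoint_left]
    intro e h h'
    rw [mem_inter, mem_sdiff] at h h'
    exact h.1.2 h'.1.1

theorem inter_split {L I S C : Finset E} (hLI : L ⊆ I) (hIS : I ⊆ S)
    (z1 : ((S \ I) ∩ C).card = 0) (z2 : ((I \ L) ∩ C).card = 0) : S ∩ C = L ∩ C := by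
  rw [card_eq_zero] at z1 z2
  ext e
  have e1 := Finset.ext_iff.mp z1 e
  have e2 := Finset.ext_iff.mp z2 e
  have := @hLI e
  have := @hIS e
  simp only [mem_inter, mem_sdiff, notMem_empty, iff_false] at e1 e2 ⊢
  tauto

set_option maxHeartbeats 800000 in
theorem tourB2 {G : MultiGraph V E} {T : Finset V} {x c : E → ℝ} (hx : ∀ e, 0 ≤ x e)
    (hp : PartFeas G x) (hc : ∀ e, 0 ≤ c e) (ht : ev (ind T) 1 = 0)
    (h1 : ∀ w, (¬ ∀ a b, w a = w b) → 1 ≤ yc G x w)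
    (h2 : ∀ w, (¬ ∀ a b, w a = w b) → ev (ind T) w = 0 → 2 ≤ yc G x w)
    {S I : Finset E} (hS : G.ConnectedOn (· ∈ S)) (hIS : I ⊆ S)
    (hI : ∀ w, ((I ∩ cw G w).card : ZMod 2) = ev (ind T) w) :
    ∃ F : Multiset E, G.IsTTour T F ∧ (F.map c).sum ≤ 10 / 7 * ∑ e ∈ S, c e
      + 2 / 7 * ∑ e, c e * x e - 1 / 7 * ∑ e ∈ I, c e
      + ∑ C ∈ (NN G (ind T) x).filter (fun C => (S ∩ C).card = 1),
        (2 / 7 * (∑ e ∈ C, x e - 1) - 4 / 7) * ∑ e ∈ S ∩ C, c e := by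
  let L : Finset E := S.filter fun f => ∃ w, ev (ind T) w = 1 ∧ yc G x w < 2 ∧ S ∩ cw G w = {f}
  have hLS : L ⊆ S := filter_subset _ _
  have hex : ∀ f, ∃ w, f ∈ L → ev (ind T) w = 1 ∧ yc G x w < 2 ∧ S ∩ cw G w = {f} := by
    intro f
    by_cases hf : f ∈ L
    · obtain ⟨w, hw⟩ := (mem_filter.mp hf).2
      exact ⟨w, fun _ => hw⟩
    · exact ⟨0, fun h => absurd h hf⟩
  choose U hU using hex
  have hLI : L ⊆ I := by
    intro f hf
    obtain ⟨e1, -, e3⟩ := hU f hf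
    by_contra hfI
    have : I ∩ cw G (U f) = ∅ := by
      rw [eq_empty_iff_forall_notMem]
      intro g hg
      rw [mem_inter] at hg
      have : g ∈ S ∩ cw G (U f) := mem_inter.mpr ⟨hIS hg.1, hg.2⟩
      rw [e3, mem_singleton] at this
      rw [this] at hg
      exact hfI hg.1
    have h := hI (U f)
    rw [this, e1] at h
    simp at h
  let r : E → ℝ := fun f => 1 - 2 / 7 * yc G x (U f)
  have hr : ∀ f ∈ L, 3 / 7 ≤ r f := by
    intro f hf
    have := (hU f hf).2.1
    simp only [r]; linarith
  let b1 : E → ℝ := fun e => if e ∈ L then r e else 0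
  let b2 : E → ℝ := fun e => if e ∈ S \ I then 1 else 0
  let b3 : E → ℝ := fun e => if e ∈ I \ L then 1 else 0
  have hb1 : ∀ e, 0 ≤ b1 e := fun e => by
    simp only [b1]
    split_ifs with h
    · linarith [hr e h]
    · exact le_rfl
  have hb2 : ∀ e, 0 ≤ b2 e := fun e => by simp only [b2]; split_ifs <;> norm_num
  have hb3 : ∀ e, 0 ≤ b3 e := fun e => by simp only [b3]; split_ifs <;> norm_num
  obtain ⟨F, hF, hFc⟩ := tourB (T := T) hLS hS (U := U)
    (by
      intro f hf s hs
      rw [← mem_cw]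
      have := Finset.ext_iff.mp (hU f hf).2.2 s
      simpa [hs] using this)
    (fun f hf => (hU f hf).1) (b := fun e => (b1 e + 3 / 7 * b2 e) + 2 / 7 * b3 e) hx hp (2 / 7)
    (by norm_num)
    (fun e => by have := hb1 e; have := hb2 e; have := hb3 e; linarith)
    (by
      intro e he
      have n1 : e ∉ L := fun h => he (hLS h)
      have n2 : e ∉ S \ I := fun h => he (mem_sdiff.mp h).1
      have n3 : e ∉ I \ L := fun h => he (hIS (mem_sdiff.mp h).1)
      simp only [b1, b2, b3, n1, n2, n3, if_false]
      norm_num)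
    (by
      intro w hw
      rw [yc_lin, yc_lin, sum_chi G L w r, sum_chi G (S \ I) w (fun _ => 1),
        sum_chi G (I \ L) w (fun _ => 1), sum_const, sum_const, nsmul_eq_mul, nsmul_eq_mul,
        mul_one, mul_one]
      have hnc : ¬ ∀ a b, w a = w b := by
        intro h
        obtain ⟨h1, h2⟩ := const_ev (G := G) ht h
        rw [h1, sum_eq_zero fun e _ => h2 e] at hw
        simp at hw
      set C := cw G w with hC
      have k1 := card_split1 hLI C
      have k2 := card_split2 hLI hIS C
      have hIw := hI w
      rw [sum_dd, ← hC, ← hIw, k1, k2] at hw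
      rw [← hC, k1] at hIw
      have hsum : 3 / 7 * ((L ∩ C).card : ℝ) ≤ ∑ e ∈ L ∩ C, r e := by
        have := card_nsmul_le_sum (L ∩ C) r (3 / 7) (fun e he => hr e (mem_inter.mp he).1)
        rw [nsmul_eq_mul] at this
        linarith
      have hlone : ((S \ I) ∩ C).card = 0 → ((I \ L) ∩ C).card = 0 → (L ∩ C).card = 1 →
          ev (ind T) w = 1 → yc G x w < 2 → ∑ e ∈ L ∩ C, r e = 1 - 2 / 7 * yc G x w := by
        intro z1 z2 z3 z4 z5
        obtain ⟨f, hf⟩ := card_eq_one.mp z3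
        have hfL : f ∈ L := by
          have : f ∈ L ∩ C := by rw [hf]; simp
          exact (mem_inter.mp this).1
        have hSC : S ∩ C = {f} := by
          rw [← hf]
          exact inter_split hLI hIS z1 z2
        have : cw G (U f) = cw G w := cw_unique hS (by rw [(hU f hfL).2.2, ← hC, hSC])
        rw [hf, sum_singleton]
        simp only [r]
        rw [yc_cw, yc_cw, this]
      generalize hj : ((S \ I) ∩ C).card = j at *
      generalize hi : ((I \ L) ∩ C).card = i at *
      generalize hl : (L ∩ C).card = l at *
      generalize (∑ e ∈ L ∩ C, r e) = R at *
      have hodd : (j + l) % 2 = 1 := by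
        rw [← Nat.odd_iff, ← ZMod.natCast_eq_one_iff_odd]
        push_cast at hw ⊢
        have := z2add (i : ZMod 2)
        linear_combination hw - this
      by_cases hy : 2 ≤ yc G x w
      · have : (1 : ℝ) ≤ (j : ℝ) + l := by
          have : 1 ≤ j + l := by omega
          exact_mod_cast this
        have hi0 : (0 : ℝ) ≤ i := Nat.cast_nonneg i
        linarith
      have hev : ev (ind T) w = 1 := by
        rw [← z2ne0]; intro h; exact hy (h2 w hnc h)
      push Not at hy
      have hodd2 : (i + l) % 2 = 1 := by
        rw [hev] at hIw
        rw [← Nat.odd_iff, ← ZMod.natCast_eq_one_iff_odd]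
        exact hIw
      have hy1 := h1 w hnc
      by_cases hone : j = 0 ∧ i = 0 ∧ l = 1
      · rw [hlone hone.1 hone.2.1 hone.2.2 hev hy, hone.1, hone.2.1]
        push_cast
        linarith
      · have : (5 : ℝ) ≤ 3 * (j : ℝ) + 2 * i + 3 * l := by
          have : 5 ≤ 3 * j + 2 * i + 3 * l := by omega
          exact_mod_cast this
        linarith) hc
  refine ⟨F, hF, hFc.trans (le_of_eq ?_)⟩
  have hbr : ∑ C ∈ (NN G (ind T) x).filter (fun C => (S ∩ C).card = 1),
        (2 / 7 * (∑ e ∈ C, x e - 1) - 4 / 7) * ∑ e ∈ S ∩ C, c e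
      = ∑ f ∈ L, (2 / 7 * (yc G x (U f) - 1) - 4 / 7) * c f := by
    symm
    refine sum_bij (fun f _ => cw G (U f)) ?_ ?_ ?_ ?_
    · intro f hf
      rw [mem_filter]
      simp only [NN, mem_filter, mem_univ, true_and]
      refine ⟨⟨U f, (hU f hf).1, (hU f hf).2.1, rfl⟩, ?_⟩
      rw [(hU f hf).2.2, card_singleton]
    · intro f hf g hg h
      have := (hU f hf).2.2
      rw [h, (hU g hg).2.2] at this
      exact (singleton_injective this).symm
    · intro C hCm
      rw [mem_filter] at hCm
      simp only [NN, mem_filter, mem_univ, true_and] at hCm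
      obtain ⟨⟨w, w1, w2, rfl⟩, w3⟩ := hCm
      obtain ⟨f, hf⟩ := card_eq_one.mp w3
      have hfS : f ∈ S := by
        have : f ∈ S ∩ cw G w := by rw [hf]; simp
        exact (mem_inter.mp this).1
      have hfL : f ∈ L := mem_filter.mpr ⟨hfS, w, w1, w2, hf⟩
      exact ⟨f, hfL, cw_unique hS (by rw [(hU f hfL).2.2, hf])⟩
    · intro f hf
      rw [(hU f hf).2.2, sum_singleton, yc_cw]
  rw [hbr]
  have e1 : ∑ e ∈ S \ L, c e = ∑ e ∈ S, c e - ∑ e ∈ L, c e := by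
    rw [← sum_sdiff hLS]; ring
  have e2 : ∑ e ∈ S \ I, c e = ∑ e ∈ S, c e - ∑ e ∈ I, c e := by
    rw [← sum_sdiff hIS]; ring
  have e3 : ∑ e ∈ I \ L, c e = ∑ e ∈ I, c e - ∑ e ∈ L, c e := by
    rw [← sum_sdiff hLI]; ring
  have e4 : ∑ e, (b1 e + 3 / 7 * b2 e + 2 / 7 * b3 e) * c e = ∑ e ∈ L, r e * c e
      + 3 / 7 * ∑ e ∈ S \ I, c e + 2 / 7 * ∑ e ∈ I \ L, c e := by
    rw [← sum_mem_univ L, ← sum_mem_univ (S \ I), ← sum_mem_univ (I \ L), mul_sum, mul_sum,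
      ← sum_add_distrib, ← sum_add_distrib]
    refine sum_congr rfl fun e _ => ?_
    simp only [b1, b2, b3]
    split_ifs <;> ring
  rw [e4, e1, e2, e3]
  have e5 : ∑ f ∈ L, (2 / 7 * (yc G x (U f) - 1) - 4 / 7) * c f
      = - ∑ f ∈ L, c f + 2 * (2 / 7) * ∑ f ∈ L, c f * (yc G x (U f) - 1) + ∑ f ∈ L, r f * c f
        - 2 / 7 * ∑ f ∈ L, c f := by
    rw [mul_sum, mul_sum, ← sum_neg_distrib, ← sum_add_distrib, ← sum_add_distrib,
      ← sum_sub_distrib]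
    refine sum_congr rfl fun e _ => ?_
    simp only [r]
    ring
  rw [e5]
  ring

theorem main {G : MultiGraph V E} {T : Finset V} {x c : E → ℝ} (hx : ∀ e, 0 ≤ x e)
    (hp : PartFeas G x) (hc : ∀ e, 0 ≤ c e) (ht : ev (ind T) 1 = 0)
    (h1 : ∀ w, (¬ ∀ a b, w a = w b) → 1 ≤ yc G x w)
    (h2 : ∀ w, (¬ ∀ a b, w a = w b) → ev (ind T) w = 0 → 2 ≤ yc G x w) :
    ∃ F : Multiset E, G.IsTTour T F ∧ (F.map c).sum ≤ 11 / 7 * ∑ e, c e * x e := by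
  obtain ⟨p, p0, p1, pc, pm⟩ := connector G x hx hp
  have D : Dist G x p := ⟨p0, p1, pc, pm⟩
  by_contra hcon
  push Not at hcon
  set Z := ∑ e, c e * x e with hZ
  let 𝒩 := NN G (ind T) x
  let t : Finset E → ℝ := fun C => ∑ e ∈ C, x e
  let cs : Finset E → ℝ := fun S => ∑ e ∈ S, c e
  let R : Finset E → ℝ := fun S =>
    ∑ C ∈ 𝒩, if Even (S ∩ C).card then gg (t C) * WW p c C else 0
  let Q : Finset E → ℝ := fun S =>
    ∑ C ∈ 𝒩, if (S ∩ C).card = 1 then (2 / 7 * (t C - 1) - 4 / 7) * cs (S ∩ C) else 0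
  have hkey : ∀ S, p S ≠ 0 →
      11 / 7 * Z < 8 / 7 * cs S + 3 / 7 * Z + 2 / 3 * R S + 1 / 3 * Q S := by
    intro S hpS
    have hS := pc S hpS
    obtain ⟨I, hIS, hI⟩ := exists_join ht hS
    obtain ⟨F, hF, hFc⟩ := tourA hx hc ht h2 D hS hI
    obtain ⟨F', hF', hFc'⟩ := tourB2 hx hp hc ht h1 h2 hS hIS hI
    have a1 := hcon F hF
    have a2 := hcon F' hF'
    rw [sum_filter] at hFc hFc'
    have a3 := a1.trans_le hFc
    have a4 := a2.trans_le hFc'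
    change 11 / 7 * Z < cs S + 1 / 2 * Z + 1 / 14 * ∑ e ∈ I, c e + R S at a3
    change 11 / 7 * Z < 10 / 7 * cs S + 2 / 7 * Z - 1 / 7 * ∑ e ∈ I, c e + Q S at a4
    linarith
  obtain ⟨S0, -, hS0⟩ := exists_ne_zero_of_sum_ne_zero (f := p) (s := univ) (by rw [p1]; norm_num)
  have hlt : ∑ S, p S * (11 / 7 * Z)
      < ∑ S, p S * (8 / 7 * cs S + 3 / 7 * Z + 2 / 3 * R S + 1 / 3 * Q S) := by
    refine sum_lt_sum (fun S _ => ?_) ⟨S0, mem_univ _, mul_lt_mul_of_pos_left (hkey S0 hS0)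
      (lt_of_le_of_ne (p0 S0) (Ne.symm hS0))⟩
    by_cases h : p S = 0
    · simp [h]
    · exact mul_le_mul_of_nonneg_left (hkey S h).le (p0 S)
  have hcs : ∑ S, p S * cs S ≤ Z := by
    have := swap_sum p univ c
    simp only [inter_univ] at this
    change _ = ∑ S, p S * cs S at this
    rw [← this, hZ]
    exact sum_le_sum fun e _ => mul_le_mul_of_nonneg_left (pm e) (hc e)
  have hR : ∑ S, p S * R S = ∑ C ∈ 𝒩, gg (t C) * PE p C * WW p c C := by
    simp only [R, mul_sum]
    rw [sum_comm]
    refine sum_congr rfl fun C _ => ?_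
    simp only [PE, mul_sum, sum_mul]
    refine sum_congr rfl fun S _ => ?_
    split_ifs <;> ring
  have hQ : ∑ S, p S * Q S = ∑ C ∈ 𝒩, (2 / 7 * (t C - 1) - 4 / 7) * WW p c C := by
    simp only [Q, mul_sum]
    rw [sum_comm]
    refine sum_congr rfl fun C _ => ?_
    simp only [WW]
    rw [mul_sum]
    refine sum_congr rfl fun S _ => ?_
    simp only [cs]
    split_ifs <;> ring
  have hRQ : 2 / 3 * ∑ S, p S * R S + 1 / 3 * ∑ S, p S * Q S ≤ 0 := by
    rw [hR, hQ, mul_sum, mul_sum, ← sum_add_distrib]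
    refine sum_nonpos fun C hC => ?_
    simp only [𝒩, NN, mem_filter, mem_univ, true_and] at hC
    obtain ⟨w, w1, w2, rfl⟩ := hC
    have hnc : ¬ ∀ a b, w a = w b := by
      intro h
      rw [(const_ev (G := G) ht h).1] at w1
      simp at w1
    have e1 : t (cw G w) = yc G x w := (yc_cw G x w).symm
    have e2 := PE_upper D (cw G w)
    have e3 := PL_lower D hnc
    have e4 := gg_final w2 (h1 w hnc)
    have e5 : 0 ≤ WW p c (cw G w) := sum_nonneg fun S _ => by
      split_ifs
      · exact mul_nonneg (p0 S) (sum_nonneg fun e _ => hc e)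
      · exact le_rfl
    rw [e1]
    have e6 : gg (yc G x w) * PE p (cw G w) ≤ gg (yc G x w) * (yc G x w - 1) :=
      mul_le_mul_of_nonneg_left (by linarith) (gg_nonneg _)
    have e7 : (2 / 3 * (gg (yc G x w) * PE p (cw G w)) + 1 / 3 * (2 / 7 * (yc G x w - 1) - 4 / 7))
        * WW p c (cw G w) ≤ 0 := mul_nonpos_of_nonpos_of_nonneg (by linarith) e5
    linarith
  have hexp : ∑ S, p S * (8 / 7 * cs S + 3 / 7 * Z + 2 / 3 * R S + 1 / 3 * Q S)
      = 8 / 7 * ∑ S, p S * cs S + 3 / 7 * Z * ∑ S, p S + (2 / 3 * ∑ S, p S * R S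
        + 1 / 3 * ∑ S, p S * Q S) := by
    simp only [mul_sum, ← sum_add_distrib]
    exact sum_congr rfl fun S _ => by ring
  rw [hexp, ← sum_mul, p1] at hlt
  linarith

end TTour

namespace TTour

universe u v

variable {V : Type u} {E : Type v} [Fintype V] [Fintype E]

theorem partFeas_of {G : MultiGraph V E} {T : Finset V} {x : E → ℝ} (h : G.LPFeasible T x) :
    PartFeas G x := by
  intro β φ
  have h1 := h.2.2 (Finpartition.ofSetSetoid (Setoid.ker φ) univ)
  rw [Finpartition.ofSetSetoid_parts] at h1
  have hrel : ∀ a b, (Setoid.ker φ) a b ↔ φ a = φ b := fun a b => Iff.rfl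
  have e1 : (univ.image φ).card ≤
      (univ.image fun a => univ.filter fun b => (Setoid.ker φ) a b).card := by
    have : (univ.image fun a => univ.filter fun b => (Setoid.ker φ) a b)
        = (univ.image φ).image fun z => univ.filter fun b => z = φ b := by
      rw [image_image]
      refine image_congr fun a _ => ?_
      ext b
      simp
    rw [this]
    refine le_of_eq (card_image_of_injOn ?_).symm
    intro z hz z' hz' hzz
    rw [coe_image] at hz
    obtain ⟨a, -, rfl⟩ := hz
    have : a ∈ univ.filter fun b => φ a = φ b := by simp
    simp only at hzz
    rw [hzz] at this
    exact ((mem_filter.mp this).2).symm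
  have e2 : ∑ e ∈ G.partitionCut (Finpartition.ofSetSetoid (Setoid.ker φ) univ), x e
      = ∑ e, if φ (G.fst e) ≠ φ (G.snd e) then x e else 0 := by
    rw [← sum_filter]
    refine sum_congr ?_ fun _ _ => rfl
    ext e
    simp only [MultiGraph.partitionCut, Finpartition.ofSetSetoid_parts, mem_filter, mem_univ,
      true_and, mem_image, forall_exists_index, forall_apply_eq_imp_iff]
    constructor
    · intro h hφ
      apply h (G.fst e)
      exact ⟨rfl, hφ⟩
    · intro hne a hh
      exact hne (hh.1.symm.trans hh.2)
  rw [e2] at h1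
  have e3 : ((univ.image φ).card : ℝ)
      ≤ ((univ.image fun a => univ.filter fun b => (Setoid.ker φ) a b).card : ℝ) := by
    exact_mod_cast e1
  refine le_trans (sub_le_sub_right e3 1) ?_
  convert h1

theorem ev_ind (T : Finset V) (w : V → ZMod 2) :
    ev (ind T) w = ((T ∩ univ.filter fun v => w v = 1).card : ZMod 2) := by
  have e0 : T ∩ (univ.filter fun v => w v = 1) = univ.filter fun v => v ∈ T ∧ w v = 1 := by
    ext v; simp
  rw [e0, card_filter]
  push_cast
  unfold ev ind
  refine sum_congr rfl fun v _ => ?_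
  rcases z2 (w v) with h | h <;> by_cases hT : v ∈ T <;> simp [h, hT]

theorem final {G : MultiGraph V E} {T : Finset V} (hT : Even T.card) {c x : E → ℝ}
    (hc : ∀ e, 0 ≤ c e) (hx : G.LPFeasible T x) :
    ∃ F : Multiset E, G.IsTTour T F ∧ (F.map c).sum ≤ 11 / 7 * ∑ e, c e * x e := by
  have hp := partFeas_of hx
  refine main hx.1 hp hc ?_ ?_ ?_
  · rw [ev_ind]
    have : T ∩ (univ.filter fun v => (1 : V → ZMod 2) v = 1) = T := by ext v; simp
    rw [this, ZMod.natCast_eq_zero_iff_even]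
    exact hT
  · intro w hw
    have h1 := partFeas_any hp w
    have h2 : 1 < (univ.image w).card := by
      push Not at hw
      obtain ⟨a, b, hab⟩ := hw
      exact one_lt_card.mpr ⟨w a, by simp, w b, by simp, hab⟩
    have h3 : (2 : ℝ) ≤ ((univ.image w).card : ℝ) := by exact_mod_cast h2
    have h4 : yc G x w = ∑ e, if w (G.fst e) ≠ w (G.snd e) then x e else 0 := by
      unfold yc
      refine sum_congr rfl fun e _ => ?_
      have : dd G w e = 1 ↔ w (G.fst e) ≠ w (G.snd e) := by
        unfold dd
        generalize w (G.fst e) = a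
        generalize w (G.snd e) = b
        revert a b; decide
      by_cases h : w (G.fst e) ≠ w (G.snd e)
      · rw [if_pos h, if_pos (this.mpr h)]
      · rw [if_neg h, if_neg (fun h' => h (this.mp h'))]
    rw [h4]
    have h5 : (2 : ℝ) - 1 ≤ ((univ.image w).card : ℝ) - 1 := by linarith
    have h6 : ((univ.image w).card : ℝ) - 1
        ≤ ∑ e, if w (G.fst e) ≠ w (G.snd e) then x e else 0 := by convert h1
    linarith
  · intro w hw hev
    have hcut : yc G x w = ∑ e ∈ G.cut (univ.filter fun v => w v = 1), x e := by
      rw [yc_cw]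
      refine sum_congr ?_ fun _ _ => rfl
      ext e
      rw [mem_cw]
      simp only [MultiGraph.cut, mem_filter, mem_univ, true_and]
      unfold dd
      generalize w (G.fst e) = a
      generalize w (G.snd e) = b
      revert a b; decide
    rw [hcut]
    apply hx.2.1
    · rw [nonempty_iff_ne_empty]
      intro h
      apply hw
      intro a b
      have ha : ∀ a, w a = 0 := fun a => by
        rw [← z2ne1]; intro h'
        have : a ∈ univ.filter fun v => w v = 1 := by simp [h']
        rw [h] at this; simp at this
      rw [ha, ha]
    · intro h
      apply hw
      intro a b
      have ha : ∀ a, w a = 1 := fun a => by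
        have : a ∈ univ.filter fun v => w v = 1 := by rw [h]; simp
        simpa using this
      rw [ha, ha]
    · rw [← ZMod.natCast_eq_zero_iff_even, ← ev_ind]
      exact hev

end TTour

namespace MultiGraph

variable {V E : Type*} [Fintype V] [DecidableEq V] [Fintype E] [DecidableEq E]

/-- For every feasible solution `x*` of the LP relaxation of the `T`-tour
problem, there exists a `T`-tour `F` of `G` with `c(F) ≤ (11/7)·c(x*)`. -/
theorem ttour_eleven_sevenths_approx (G : MultiGraph V E) (hG : G.Connected)
    (T : Finset V) (hT : Even T.card) (c : E → ℝ) (hc : ∀ e, 0 ≤ c e)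
    (x : E → ℝ) (hx : G.LPFeasible T x) :
    ∃ F : Multiset E, G.IsTTour T F ∧
      (F.map c).sum ≤ (11 / 7 : ℝ) * ∑ e, c e * x e := by
  obtain rfl : ‹DecidableEq V› = fun a b => Classical.propDecidable (a = b) :=
    Subsingleton.elim _ _
  obtain rfl : ‹DecidableEq E› = fun a b => Classical.propDecidable (a = b) :=
    Subsingleton.elim _ _
  exact TTour.final hT hc hx

end MultiGraph
end

section
/- Let α ≥ 0. There exists a T-tour of G of cost at most (3/2)·c(x*) + α·c(I_p) + Σ_{C∈𝒩} (x*(C) − 1)·max{1 − (1/2)·x*(C) − α, 0}·c(v^C). -/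
open Finset
open scoped Classical symmDiff

namespace MultiGraph

section EdmondsJohnson

set_option linter.unusedSectionVars false
set_option linter.unusedSimpArgs false

variable {V E : Type*} [Fintype V] [DecidableEq V] [Fintype E] [DecidableEq E]

/-- The boundary of a `ZMod 2`-valued edge vector. -/
def bd (G : MultiGraph V E) (f : E → ZMod 2) : V → ZMod 2 :=
  ∑ e, f e • (Pi.single (G.fst e) 1 + Pi.single (G.snd e) 1 : V → ZMod 2)

/-- The cost of a `ZMod 2`-valued edge vector. -/
def cst {R : Type*} [AddCommMonoid R] (c : E → R) (f : E → ZMod 2) : R :=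
  ∑ e, if f e = 0 then 0 else c e

lemma bd_add (G : MultiGraph V E) (f g : E → ZMod 2) : G.bd (f + g) = G.bd f + G.bd g := by
  simp only [bd, Pi.add_apply, add_smul, Finset.sum_add_distrib]

lemma bd_single (G : MultiGraph V E) (e : E) :
    G.bd (Pi.single e 1) = Pi.single (G.fst e) 1 + Pi.single (G.snd e) 1 := by
  unfold bd
  rw [Finset.sum_eq_single e]
  · simp
  · intro b _ hb
    simp [Pi.single_apply, hb]
  · simp

lemma sum_bd (G : MultiGraph V E) (f : E → ZMod 2) (w : V → ZMod 2) :
    ∑ v, w v * G.bd f v = ∑ e, f e * (w (G.fst e) + w (G.snd e)) := by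
  simp only [bd, Finset.sum_apply, Pi.smul_apply, Pi.add_apply, smul_eq_mul, Finset.mul_sum]
  rw [Finset.sum_comm]
  refine Finset.sum_congr rfl fun e _ => ?_
  have : ∀ v, w v * (f e * ((Pi.single (G.fst e) 1 : V → ZMod 2) v
      + (Pi.single (G.snd e) 1 : V → ZMod 2) v))
      = f e * (if v = G.fst e then w v else 0) + f e * (if v = G.snd e then w v else 0) := by
    intro v
    simp only [Pi.single_apply]
    split_ifs <;> ring
  simp only [this, Finset.sum_add_distrib, ← Finset.mul_sum]
  simp [mul_add]

lemma sum_single_mem (U : Finset V) (a : V) :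
    ∑ v ∈ U, (Pi.single a 1 : V → ZMod 2) v = if a ∈ U then 1 else 0 := by
  simp [Pi.single_apply]

lemma z2 (a : ZMod 2) : a = 0 ∨ a = 1 := by
  revert a; decide

lemma sum_bd_cut (G : MultiGraph V E) (f : E → ZMod 2) (U : Finset V) :
    ∑ v ∈ U, G.bd f v = ∑ e ∈ G.cut U, f e := by
  have h := G.sum_bd f (fun v => if v ∈ U then 1 else 0)
  simp only [ite_mul, one_mul, zero_mul] at h
  rw [Finset.sum_ite_mem, Finset.univ_inter] at h
  rw [h, cut, Finset.sum_filter]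
  refine Finset.sum_congr rfl fun e _ => ?_
  have h2 : (1 + 1 : ZMod 2) = 0 := by decide
  by_cases h1 : G.fst e ∈ U <;> by_cases h3 : G.snd e ∈ U <;> simp [h1, h3, h2]

lemma path_join (G : MultiGraph V E) (P : E → Prop) (u w : V)
    (h : Relation.ReflTransGen (G.Adj P) u w) :
    ∃ f : E → ZMod 2, (∀ e, f e ≠ 0 → P e) ∧ G.bd f = Pi.single u 1 + Pi.single w 1 := by
  have hch : ∀ a : V → ZMod 2, a + a = 0 := fun a => by
    funext v; exact CharTwo.add_self_eq_zero (a v)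
  induction h with
  | refl => exact ⟨0, by simp, by simp [bd, hch]⟩
  | @tail b d _ hbc ih =>
    obtain ⟨f, hf, hb⟩ := ih
    obtain ⟨e, hPe, he⟩ := hbc
    refine ⟨f + Pi.single e 1, ?_, ?_⟩
    · intro e' he'
      by_cases h : e' = e
      · exact h ▸ hPe
      · apply hf; simpa [Pi.single_apply, h] using he'
    · rw [bd_add, hb, bd_single]
      have key : (Pi.single (G.fst e) 1 + Pi.single (G.snd e) 1 : V → ZMod 2)
          = Pi.single b 1 + Pi.single d 1 := by
        rcases he with ⟨h1, h2⟩ | ⟨h1, h2⟩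
        · rw [h1, h2]
        · rw [h1, h2, add_comm]
      rw [key, add_assoc, ← add_assoc (Pi.single b 1) (Pi.single b 1), hch, zero_add]

lemma adj_symm (G : MultiGraph V E) (P : E → Prop) {u w : V}
    (h : Relation.ReflTransGen (G.Adj P) u w) : Relation.ReflTransGen (G.Adj P) w u := by
  have hs : ∀ a b, G.Adj P a b → G.Adj P b a := by
    rintro a b ⟨e, he, h⟩
    exact ⟨e, he, h.symm⟩
  induction h with
  | refl => exact .refl
  | tail _ hbc ih => exact Relation.ReflTransGen.head (hs _ _ hbc) ih

lemma cst_add_zero (c : E → ℕ) (f g : E → ZMod 2) (hg : ∀ e, g e ≠ 0 → c e = 0) :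
    cst c (f + g) = cst c f := by
  refine Finset.sum_congr rfl fun e _ => ?_
  by_cases h : g e = 0
  · simp [h]
  · simp [hg e h]

lemma cst_add_single (c : E → ℕ) (f : E → ZMod 2) (e : E) (he : f e ≠ 0) :
    cst c (f + Pi.single e 1) + c e = cst c f := by
  unfold cst
  rw [← Finset.add_sum_erase _ _ (Finset.mem_univ e),
    ← Finset.add_sum_erase (a := e) _ (fun e => if f e = 0 then 0 else c e) (Finset.mem_univ e)]
  have h1 : f e = 1 := (z2 _).resolve_left he
  have h2 : (1 + 1 : ZMod 2) = 0 := by decide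
  have : ∑ x ∈ univ.erase e, (if (f + Pi.single e 1 : E → ZMod 2) x = 0 then 0 else c x)
      = ∑ x ∈ univ.erase e, (if f x = 0 then 0 else c x) := by
    refine Finset.sum_congr rfl fun x hx => ?_
    simp [Pi.single_apply, Finset.ne_of_mem_erase hx]
  rw [this]
  simp [h1, h2]
  ring

lemma cst_parity (G : MultiGraph V E) (c : E → ℕ) (w : V → ZMod 2)
    (hw : ∀ e, (c e : ZMod 2) = w (G.fst e) + w (G.snd e)) (f : E → ZMod 2) :
    ((cst c f : ℕ) : ZMod 2) = ∑ v, w v * G.bd f v := by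
  rw [sum_bd, cst, Nat.cast_sum]
  refine Finset.sum_congr rfl fun e _ => ?_
  rw [← hw]
  rcases z2 (f e) with h | h <;> simp [h]

/-- Swapping along a vector `q` contained in the difference of `f` and `g` (up to zero cost). -/
lemma cst_swap (c : E → ℕ) (f g q : E → ZMod 2)
    (hq : ∀ e, q e ≠ 0 → c e ≠ 0 → f e + g e ≠ 0) :
    cst c (f + q) + cst c (g + q) = cst c f + cst c g := by
  unfold cst
  rw [← Finset.sum_add_distrib, ← Finset.sum_add_distrib]
  refine Finset.sum_congr rfl fun e _ => ?_
  by_cases hc : c e = 0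
  · simp [hc]
  by_cases h : q e = 0
  · simp [h]
  have hfg := hq e h hc
  have h1 : (1 + 1 : ZMod 2) = 0 := by decide
  have hqe := (z2 (q e)).resolve_left h
  rcases z2 (f e) with hf | hf <;> rcases z2 (g e) with hg | hg <;>
    simp [hf, hg, hqe, h1] at hfg ⊢

/-- The endpoint of `e` outside of `U`. -/
noncomputable def outer (G : MultiGraph V E) (U : Finset V) (e : E) : V :=
  if G.fst e ∈ U then G.snd e else G.fst e

/-- The endpoint of `e` inside of `U`. -/
noncomputable def inner (G : MultiGraph V E) (U : Finset V) (e : E) : V :=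
  if G.fst e ∈ U then G.fst e else G.snd e

lemma mem_cut_iff (G : MultiGraph V E) (U : Finset V) (e : E) :
    e ∈ G.cut U ↔ G.inner U e ∈ U ∧ G.outer U e ∉ U := by
  simp only [cut, Finset.mem_filter, Finset.mem_univ, true_and, inner, outer]
  by_cases h : G.fst e ∈ U <;> simp [h]

lemma bd_single' (G : MultiGraph V E) (U : Finset V) (e : E) :
    G.bd (Pi.single e 1) = Pi.single (G.inner U e) 1 + Pi.single (G.outer U e) 1 := by
  rw [bd_single, inner, outer]
  split_ifs
  · rfl
  · rw [add_comm]

lemma key_cut (G : MultiGraph V E) (c : E → ℕ) (w : V → ZMod 2)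
    (hw : ∀ e, (c e : ZMod 2) = w (G.fst e) + w (G.snd e))
    (t : V → ZMod 2) (f0 : E → ZMod 2) (hf0 : G.bd f0 = t)
    (hmin : ∀ f, G.bd f = t → cst c f0 ≤ cst c f) (hpos : 0 < cst c f0) :
    ∃ U : Finset V, ∑ v ∈ U, t v = 1 ∧ (∀ e ∈ G.cut U, 0 < c e) ∧
      ∀ f, G.bd f = t → cst c f0 + ((G.cut U).filter (fun e => f e ≠ 0)).card ≤ cst c f + 1 := by
  have hch : ∀ a : V → ZMod 2, a + a = 0 := fun a => by
    funext v; exact CharTwo.add_self_eq_zero (a v)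
  obtain ⟨⟨a, b, g⟩, hg, hgmin⟩ := Finset.exists_min_image
    (univ.filter fun q : V × V × (E → ZMod 2) =>
      G.bd q.2.2 = t + (Pi.single q.1 1 + Pi.single q.2.1 1))
    (fun q => cst c q.2.2) (by
      obtain ⟨e, -, he⟩ : ∃ e ∈ (univ : Finset E), (if f0 e = 0 then 0 else c e) ≠ 0 :=
        Finset.exists_ne_zero_of_sum_ne_zero (by exact hpos.ne')
      exact ⟨(G.fst e, G.fst e, f0), by simp [hf0, hch]⟩)
  simp only [Finset.mem_filter, Finset.mem_univ, true_and] at hg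
  replace hgmin : ∀ a b g', G.bd g' = t + (Pi.single a 1 + Pi.single b 1) →
      cst c g ≤ cst c g' := fun a b g' h => hgmin (a, b, g') (by simpa using h)
  have hlt : cst c g < cst c f0 := by
    obtain ⟨e, -, he⟩ : ∃ e ∈ (univ : Finset E), (if f0 e = 0 then 0 else c e) ≠ 0 :=
      Finset.exists_ne_zero_of_sum_ne_zero (by exact hpos.ne')
    have h1 : f0 e ≠ 0 := by rintro h; simp [h] at he
    have h2 : c e ≠ 0 := by simpa [h1] using he
    have h3 := cst_add_single c f0 e h1
    have h4 := hgmin (G.fst e) (G.snd e) (f0 + Pi.single e 1) (by rw [bd_add, hf0, bd_single])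
    omega
  set U := G.reachSet (fun e => c e = 0) b with hU
  have memU : ∀ v, v ∈ U ↔ Relation.ReflTransGen (G.Adj (fun e => c e = 0)) b v := by
    intro v; simp [hU, reachSet]
  have hbU : b ∈ U := (memU b).2 .refl
  have hcutpos : ∀ e ∈ G.cut U, 0 < c e := by
    intro e he
    by_contra h0
    have h0 : c e = 0 := by omega
    simp only [cut, Finset.mem_filter, Finset.mem_univ, true_and] at he
    rcases he with ⟨h1, h2⟩ | ⟨h1, h2⟩
    · exact h2 ((memU _).2 (((memU _).1 h1).tail ⟨e, h0, Or.inl ⟨rfl, rfl⟩⟩))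
    · exact h1 ((memU _).2 (((memU _).1 h2).tail ⟨e, h0, Or.inr ⟨rfl, rfl⟩⟩))
  have hstrict : ∀ h, G.bd h = t + (Pi.single a 1 + Pi.single b 1) →
      ∀ e ∈ G.cut U, h e ≠ 0 → cst c g < cst c h := by
    intro h hh e he hne
    have he' := (mem_cut_iff G U e).1 he
    obtain ⟨ζ, hζ, hζb⟩ := path_join G _ _ _ ((memU _).1 he'.1)
    have h1 := hgmin a (G.outer U e) (h + Pi.single e 1 + ζ) (by
      rw [bd_add, bd_add, hh, bd_single' G U, hζb]
      have h1 := hch (Pi.single b 1)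
      have h2 := hch (Pi.single (G.inner U e) 1)
      linear_combination h1 + h2)
    rw [cst_add_zero c _ _ hζ] at h1
    have h2 := cst_add_single c h e hne
    have h3 := hcutpos e he
    omega
  have hg0 : ∀ e ∈ G.cut U, g e = 0 := by
    intro e he
    by_contra h
    exact lt_irrefl _ (hstrict g hg e he h)
  have haU : a ∉ U := by
    intro ha
    obtain ⟨ζ, hζ, hζb⟩ := path_join G _ _ _ ((memU _).1 ha)
    have h1 := hmin (g + ζ) (by
      rw [bd_add, hg, hζb]
      linear_combination hch (Pi.single b 1) + hch (Pi.single a 1))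
    rw [cst_add_zero c _ _ hζ] at h1
    omega
  have hstrict2 : ∀ h, G.bd h = t + (Pi.single a 1 + Pi.single b 1) →
      ∀ e ∈ G.cut U, h e ≠ 0 → cst c g + 2 ≤ cst c h := by
    intro h hh e he hne
    have h1 := hstrict h hh e he hne
    have h2 : ((cst c g : ℕ) : ZMod 2) = ((cst c h : ℕ) : ZMod 2) := by
      rw [cst_parity G c w hw, cst_parity G c w hw, hg, hh]
    rw [ZMod.natCast_eq_natCast_iff'] at h2
    omega
  refine ⟨U, ?_, hcutpos, ?_⟩
  · have h1 := G.sum_bd_cut g U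
    rw [hg, Finset.sum_eq_zero hg0] at h1
    simp only [Pi.add_apply, Finset.sum_add_distrib, sum_single_mem, haU, hbU, if_true,
      if_false, zero_add] at h1
    have h2 : (1 + 1 : ZMod 2) = 0 := by decide
    linear_combination h1 - h2
  -- the induction
  suffices H : ∀ k, ∀ f, G.bd f = t → ((G.cut U).filter (fun e => f e ≠ 0)).card = k →
      cst c f0 + k ≤ cst c f + 1 from fun f hf => H _ f hf rfl
  intro k
  induction k using Nat.strong_induction_on with
  | _ k ih =>
  intro f hf hk
  have hmf := hmin f hf
  by_cases hk2 : k ≤ 1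
  · omega
  set P : E → Prop := fun e => f e + g e ≠ 0 ∧ G.fst e ∉ U ∧ G.snd e ∉ U with hP
  -- find two crossing edges
  have hcomp : ∀ e ∈ G.cut U, f e ≠ 0 →
      (Relation.ReflTransGen (G.Adj P) (G.outer U e) a) ∨
      ∃ e' ∈ G.cut U, e' ≠ e ∧ f e' ≠ 0 ∧
        Relation.ReflTransGen (G.Adj P) (G.outer U e) (G.outer U e') := by
    intro e he hfe
    by_contra hcon
    push Not at hcon
    obtain ⟨hna, hcon⟩ := hcon
    have he' := (mem_cut_iff G U e).1 he
    set K := G.reachSet P (G.outer U e) with hK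
    have memK : ∀ v, v ∈ K ↔ Relation.ReflTransGen (G.Adj P) (G.outer U e) v := by
      intro v; simp [hK, reachSet]
    have hKU : ∀ v ∈ K, v ∉ U := by
      intro v hv
      rcases Relation.ReflTransGen.cases_tail ((memK v).1 hv) with h | ⟨d, -, e1, h1, h2⟩
      · rw [h]; exact he'.2
      · rcases h2 with ⟨-, h2⟩ | ⟨h2, -⟩
        · rw [← h2]; exact h1.2.2
        · rw [← h2]; exact h1.2.1
    have hs := G.sum_bd_cut (f + g) K
    have haK : a ∉ K := fun h => hna ((memK a).1 h)
    have hbK : b ∉ K := fun h => hKU b h hbU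
    have hbd : G.bd (f + g) = Pi.single a 1 + Pi.single b 1 := by
      rw [bd_add, hf, hg]; linear_combination hch t
    have heK : e ∈ G.cut K := by
      have h1 : G.outer U e ∈ K := (memK _).2 .refl
      have h2 : G.inner U e ∉ K := fun h => hKU _ h he'.1
      simp only [cut, Finset.mem_filter, Finset.mem_univ, true_and]
      unfold outer at h1
      unfold inner at h2
      split_ifs at h1 h2
      · exact Or.inr ⟨h2, h1⟩
      · exact Or.inl ⟨h1, h2⟩
    rw [hbd, Finset.sum_eq_single_of_mem e heK] at hs
    · simp only [Pi.add_apply, Finset.sum_add_distrib, sum_single_mem, haK, hbK, if_false,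
        hg0 e he, add_zero] at hs
      exact hfe hs.symm
    · intro e1 he1 hne
      by_contra hD
      simp only [cut, Finset.mem_filter, Finset.mem_univ, true_and] at he1
      have hfin : e1 ∈ G.cut U → G.outer U e1 ∈ K → False := by
        intro h1 h2
        refine hcon e1 h1 hne ?_ ((memK _).1 h2)
        simpa [hg0 e1 h1] using hD
      rcases he1 with ⟨h1, h2⟩ | ⟨h1, h2⟩
      · have h3 := hKU _ h1
        have h4 : G.snd e1 ∈ U := by
          by_contra h4
          exact h2 ((memK _).2 (((memK _).1 h1).tail ⟨e1, ⟨hD, h3, h4⟩, Or.inl ⟨rfl, rfl⟩⟩))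
        exact hfin (by simp [cut, h3, h4]) (by simpa [outer, h3] using h1)
      · have h3 := hKU _ h2
        have h4 : G.fst e1 ∈ U := by
          by_contra h4
          exact h1 ((memK _).2 (((memK _).1 h2).tail ⟨e1, ⟨hD, h4, h3⟩, Or.inr ⟨rfl, rfl⟩⟩))
        exact hfin (by simp [cut, h3, h4]) (by simpa [outer, h4] using h2)
  obtain ⟨e, he, e', he', hne, hfe, hfe', hreach⟩ : ∃ e ∈ G.cut U, ∃ e' ∈ G.cut U, e' ≠ e ∧
      f e ≠ 0 ∧ f e' ≠ 0 ∧
        Relation.ReflTransGen (G.Adj P) (G.outer U e) (G.outer U e') := by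
    obtain ⟨e, he, e', he', hne⟩ := Finset.one_lt_card.1 (show 1 <
      ((G.cut U).filter (fun e => f e ≠ 0)).card by omega)
    rw [Finset.mem_filter] at he he'
    rcases hcomp e he.1 he.2 with h1 | ⟨d, hd, h1, h2, h3⟩
    · rcases hcomp e' he'.1 he'.2 with h1' | ⟨d, hd, h1, h2, h3⟩
      · exact ⟨e, he.1, e', he'.1, hne.symm, he.2, he'.2, h1.trans (adj_symm G P h1')⟩
      · exact ⟨e', he'.1, d, hd, h1, he'.2, h2, h3⟩
    · exact ⟨e, he.1, d, hd, h1, he.2, h2, h3⟩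
  obtain ⟨q0, hq0, hq0b⟩ := path_join G _ _ _ hreach
  have hm := (mem_cut_iff G U e).1 he
  have hm' := (mem_cut_iff G U e').1 he'
  obtain ⟨ζ, hζ, hζb⟩ := path_join G _ _ _
    ((adj_symm G _ ((memU _).1 hm.1)).trans ((memU _).1 hm'.1))
  set q : E → ZMod 2 := q0 + ζ + (Pi.single e 1 + Pi.single e' 1) with hq
  have hqb : G.bd q = 0 := by
    rw [hq, bd_add, bd_add, bd_add, hq0b, hζb, bd_single' G U e, bd_single' G U e']
    linear_combination hch (Pi.single (G.outer U e) 1) + hch (Pi.single (G.outer U e') 1) +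
      hch (Pi.single (G.inner U e) 1) + hch (Pi.single (G.inner U e') 1)
  have hqcut : ∀ d ∈ G.cut U, q d = (Pi.single e 1 + Pi.single e' 1 : E → ZMod 2) d := by
    intro d hd
    have h1 : ζ d = 0 := by
      by_contra h
      have := hζ d h
      have := hcutpos d hd
      omega
    have h2 : q0 d = 0 := by
      by_contra h
      have := (hq0 d h).2
      simp only [cut, Finset.mem_filter, Finset.mem_univ, true_and] at hd
      tauto
    simp [hq, h1, h2]
  have hgq := hstrict2 (g + q) (by rw [bd_add, hqb, hg, add_zero]) e he (by
    simp [hg0 e he, hqcut e he, Pi.single_apply, hne.symm])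
  have hsw := cst_swap c f g q (by
    intro d hd hcd
    by_cases h1 : d = e
    · subst h1; simpa [hg0 d he] using hfe
    by_cases h2 : d = e'
    · subst h2; simpa [hg0 d he'] using hfe'
    have h3 : ζ d = 0 := by
      by_contra h
      exact hcd (hζ d h)
    refine (hq0 d ?_).1
    simpa [hq, h3, h1, h2, Pi.single_apply] using hd)
  have hfil : (G.cut U).filter (fun d => (f + q) d ≠ 0)
      = (((G.cut U).filter (fun d => f d ≠ 0)).erase e).erase e' := by
    ext d
    simp only [Finset.mem_filter, Finset.mem_erase]
    by_cases hd : d ∈ G.cut U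
    · have h1 : (1 + 1 : ZMod 2) = 0 := by decide
      simp only [hd, true_and, Pi.add_apply, hqcut d hd]
      by_cases h2 : d = e
      · subst h2
        simp [Pi.single_apply, hne.symm, (z2 (f d)).resolve_left hfe, h1]
      by_cases h3 : d = e'
      · subst h3
        simp [Pi.single_apply, h2, (z2 (f d)).resolve_left hfe', h1]
      simp [Pi.single_apply, h2, h3]
    · simp [hd]
  have hcard : ((G.cut U).filter (fun d => (f + q) d ≠ 0)).card = k - 2 := by
    rw [hfil, Finset.card_erase_of_mem, Finset.card_erase_of_mem, hk]
    · omega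
    · simp [he, hfe]
    · simp [he', hfe', hne]
  have := ih (k - 2) (by omega) (f + q) (by rw [bd_add, hqb, hf, add_zero]) hcard
  omega

end EdmondsJohnson

end MultiGraph

namespace MultiGraph

section EdmondsJohnson2

set_option linter.unusedSectionVars false
set_option linter.unusedSimpArgs false

variable {V E : Type*} [Fintype V] [DecidableEq V] [Fintype E] [DecidableEq E]

lemma ej_nat (G : MultiGraph V E) (t : V → ZMod 2) (z : E → ℝ) (hz : ∀ e, 0 ≤ z e)
    (hcut : ∀ U : Finset V, ∑ v ∈ U, t v = 1 → 1 ≤ ∑ e ∈ G.cut U, z e)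
    (hex : ∃ f, G.bd f = t) :
    ∀ N : ℕ, ∀ c : E → ℕ, ∀ w : V → ZMod 2,
    (∀ e, (c e : ZMod 2) = w (G.fst e) + w (G.snd e)) → ∑ e, c e = N →
    ∃ f, G.bd f = t ∧ ((cst c f : ℕ) : ℝ) ≤ ∑ e, c e * z e := by
  intro N
  induction N using Nat.strong_induction_on with
  | _ N ih =>
  intro c w hw hN
  obtain ⟨f0, hf0, hmin⟩ := Finset.exists_min_image
    (univ.filter fun f : E → ZMod 2 => G.bd f = t) (fun f => cst c f)
    (by obtain ⟨f, hf⟩ := hex; exact ⟨f, by simpa using hf⟩)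
  simp only [Finset.mem_filter, Finset.mem_univ, true_and] at hf0 hmin
  rcases Nat.eq_zero_or_pos (cst c f0) with h0 | hpos
  · refine ⟨f0, hf0, ?_⟩
    rw [h0]
    simp only [Nat.cast_zero]
    exact Finset.sum_nonneg fun e _ => mul_nonneg (Nat.cast_nonneg _) (hz e)
  obtain ⟨U, hU, hcp, hmain⟩ := key_cut G c w hw t f0 hf0 hmin hpos
  have hz1 := hcut U hU
  set c' : E → ℕ := fun e => if e ∈ G.cut U then c e - 1 else c e with hc'
  have hcc' : ∀ e, c e = c' e + if e ∈ G.cut U then 1 else 0 := by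
    intro e
    by_cases h : e ∈ G.cut U
    · have := hcp e h
      simp [hc', h]; omega
    · simp [hc', h]
  have hne : (G.cut U).Nonempty := by
    rw [Finset.nonempty_iff_ne_empty]
    intro h
    rw [h] at hz1
    norm_num at hz1
  have hsum : ∑ e, c e = ∑ e, c' e + (G.cut U).card := by
    rw [Finset.sum_congr rfl fun e _ => hcc' e, Finset.sum_add_distrib]
    simp
  have hcardpos := hne.card_pos
  obtain ⟨f, hf, hfc⟩ := ih (∑ e, c' e) (by omega) c' (fun v => w v + if v ∈ U then 1 else 0) (by
    intro e
    have h1 := hw e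
    rw [hcc' e] at h1
    have h2 : (1 + 1 : ZMod 2) = 0 := by decide
    push_cast at h1
    simp only [cut, Finset.mem_filter, Finset.mem_univ, true_and] at h1
    by_cases h3 : G.fst e ∈ U <;> by_cases h4 : G.snd e ∈ U <;> simp [h3, h4] at h1 ⊢
    · linear_combination h1 - h2
    · linear_combination h1 - h2
    · linear_combination h1 - h2
    · linear_combination h1) rfl
  refine ⟨f0, hf0, ?_⟩
  have h1 := hmain f hf
  have h2 : cst c f = cst c' f + ((G.cut U).filter (fun e => f e ≠ 0)).card := by
    unfold cst
    rw [Finset.card_filter, ← Finset.sum_filter_add_sum_filter_not univ (fun e => e ∈ G.cut U)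
      (fun e => if f e = 0 then 0 else c e),
      ← Finset.sum_filter_add_sum_filter_not univ (fun e => e ∈ G.cut U)
      (fun e => if f e = 0 then 0 else c' e)]
    simp only [Finset.filter_mem_eq_inter, Finset.univ_inter]
    rw [add_right_comm, ← Finset.sum_add_distrib]
    congr 1
    · refine Finset.sum_congr rfl fun e he => ?_
      by_cases h : f e = 0
      · simp [h]
      · simp [h]; rw [hcc' e]; simp [he]
    · refine Finset.sum_congr rfl fun e he => ?_
      simp only [Finset.mem_filter, Finset.mem_univ, true_and] at he
      rw [hcc' e]; simp [he]
  have h3 : cst c f0 ≤ cst c' f + 1 := by omega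
  have h4 : (∑ e, (c e : ℝ) * z e) = ∑ e, (c' e : ℝ) * z e + ∑ e ∈ G.cut U, z e := by
    have : ∀ e, (c e : ℝ) * z e = c' e * z e + if e ∈ G.cut U then z e else 0 := by
      intro e
      rw [hcc' e]
      push_cast
      split_ifs <;> ring
    rw [Finset.sum_congr rfl fun e _ => this e, Finset.sum_add_distrib]
    simp
  have h5 : ((cst c f0 : ℕ) : ℝ) ≤ (cst c' f : ℕ) + 1 := by exact_mod_cast h3
  linarith

/-- Edmonds-Johnson: a vector dominating every `T`-cut dominates a `T`-join in cost. -/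
lemma ej_real (G : MultiGraph V E) (t : V → ZMod 2) (z : E → ℝ) (hz : ∀ e, 0 ≤ z e)
    (hcut : ∀ U : Finset V, ∑ v ∈ U, t v = 1 → 1 ≤ ∑ e ∈ G.cut U, z e)
    (hex : ∃ f, G.bd f = t) (c : E → ℝ) (hc : ∀ e, 0 ≤ c e) :
    ∃ f, G.bd f = t ∧ cst c f ≤ ∑ e, c e * z e := by
  obtain ⟨f0, hf0, hmin⟩ := Finset.exists_min_image
    (univ.filter fun f : E → ZMod 2 => G.bd f = t) (fun f => cst c f)
    (by obtain ⟨f, hf⟩ := hex; exact ⟨f, by simpa using hf⟩)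
  simp only [Finset.mem_filter, Finset.mem_univ, true_and] at hf0 hmin
  refine ⟨f0, hf0, ?_⟩
  have key : ∀ n : ℕ, (n : ℝ) * (cst c f0 - ∑ e, c e * z e) ≤ ∑ e, z e := by
    intro n
    obtain ⟨f, hf, hle⟩ := ej_nat G t z hz hcut hex _ (fun e => 2 * ⌈n * c e⌉₊) 0 (by
      intro e
      have h2 : (2 : ZMod 2) = 0 := by decide
      push_cast
      simp [h2]) rfl
    have h1 := hmin f hf
    have h2 : 2 * ((n : ℝ) * cst c f) ≤ ((cst (fun e => 2 * ⌈n * c e⌉₊) f : ℕ) : ℝ) := by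
      unfold cst
      rw [Nat.cast_sum, Finset.mul_sum, Finset.mul_sum]
      refine Finset.sum_le_sum fun e _ => ?_
      have := Nat.le_ceil (n * c e)
      split_ifs
      · simp
      · push_cast; linarith
    have h3 : ∑ e, ((2 * ⌈n * c e⌉₊ : ℕ) : ℝ) * z e ≤ 2 * (n * ∑ e, c e * z e + ∑ e, z e) := by
      rw [Finset.mul_sum, ← Finset.sum_add_distrib, Finset.mul_sum]
      refine Finset.sum_le_sum fun e _ => ?_
      have := Nat.ceil_lt_add_one (mul_nonneg (Nat.cast_nonneg n) (hc e))
      push_cast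
      nlinarith [hz e]
    have h4 : (n : ℝ) * cst c f0 ≤ n * cst c f := by gcongr
    linarith
  by_contra hcon
  push Not at hcon
  obtain ⟨n, hn⟩ := exists_nat_gt ((∑ e, z e) / (cst c f0 - ∑ e, c e * z e))
  rw [div_lt_iff₀ (by linarith)] at hn
  linarith [key n]

/-- The `ZMod 2` indicator of an edge set. -/
def ind (F : Finset E) : E → ZMod 2 := fun e => if e ∈ F then 1 else 0

lemma deg_cast (G : MultiGraph V E) (F : Finset E) (v : V) :
    ((G.deg F.val v : ℕ) : ZMod 2) = G.bd (ind F) v := by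
  have h : G.deg F.val v = ∑ e ∈ F, ((if G.fst e = v then 1 else 0)
    + (if G.snd e = v then 1 else 0)) := rfl
  rw [h, bd, Finset.sum_apply, ← Finset.sum_subset (Finset.subset_univ F)]
  · push_cast
    refine Finset.sum_congr rfl fun e he => ?_
    simp [ind, he, Pi.single_apply, eq_comm]
  · intro e _ he
    simp [ind, he]

lemma deg_add (G : MultiGraph V E) (F F' : Multiset E) (v : V) :
    G.deg (F + F') v = G.deg F v + G.deg F' v := by
  simp [deg]

lemma mem_oddVerts (G : MultiGraph V E) (F : Multiset E) (v : V) :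
    v ∈ G.oddVerts F ↔ ((G.deg F v : ℕ) : ZMod 2) = 1 := by
  simp [oddVerts, ZMod.natCast_eq_one_iff_odd]

lemma sum_ind (F C : Finset E) : ∑ e ∈ C, ind F e = ((F ∩ C).card : ZMod 2) := by
  simp [ind, Finset.inter_comm]

lemma sum_chi (F C : Finset E) : ∑ e ∈ C, chi F e = ((F ∩ C).card : ℝ) := by
  simp [chi, Finset.inter_comm]

lemma crossing (G : MultiGraph V E) (S : Finset E) (hS : G.ConnectedOn (· ∈ S))
    (U : Finset V) (h1 : U.Nonempty) (h2 : U ≠ univ) : 1 ≤ (S ∩ G.cut U).card := by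
  rw [Nat.one_le_iff_ne_zero, Finset.card_ne_zero]
  by_contra hcon
  rw [Finset.not_nonempty_iff_eq_empty] at hcon
  have hno : ∀ e ∈ S, e ∉ G.cut U := by
    intro e he h
    have : e ∈ S ∩ G.cut U := Finset.mem_inter.2 ⟨he, h⟩
    rw [hcon] at this
    simp at this
  obtain ⟨u, hu⟩ := h1
  apply h2
  rw [Finset.eq_univ_iff_forall]
  intro w
  have := hS u w
  induction this with
  | refl => exact hu
  | tail _ hbc ih =>
    obtain ⟨e, he, h⟩ := hbc
    have := hno e he
    simp only [cut, Finset.mem_filter, Finset.mem_univ, true_and] at this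
    rcases h with ⟨rfl, rfl⟩ | ⟨rfl, rfl⟩ <;> tauto

end EdmondsJohnson2

end MultiGraph

namespace MultiGraph

variable {V E : Type*} [Fintype V] [DecidableEq V] [Fintype E] [DecidableEq E]

/-- For every `α ≥ 0` there is a `T`-tour of cost at most
`(3/2)c(x*) + α·c(I_p) + Σ_{C ∈ 𝒩} (x*(C) − 1)·max{1 − x*(C)/2 − α, 0}·c(v^C)`. -/
theorem bomc_bound (G : MultiGraph V E) (hG : G.Connected)
    (T : Finset V) (hT : Even T.card) (c : E → ℝ) (hc : ∀ e, 0 ≤ c e)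
    (x : E → ℝ) (hx : G.LPFeasible T x)
    (p : Finset E → ℝ) (hp0 : ∀ S, 0 ≤ p S)
    (hptree : ∀ S, p S ≠ 0 → G.IsSpanningTree S)
    (hpsum : ∑ S : Finset E, p S = 1)
    (hdom : ∀ e, ∑ S : Finset E, p S * chi S e ≤ x e)
    (I : Finset E → Finset E)
    (hI : ∀ S, p S ≠ 0 → I S ⊆ S ∧ G.oddVerts (I S).val = T)
    (α : ℝ) (hα : 0 ≤ α) :
    ∃ F : Multiset E, G.IsTTour T F ∧
      (F.map c).sum ≤
        (3 / 2 : ℝ) * (∑ e, c e * x e) +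
        α * (∑ e, c e * ∑ S : Finset E, p S * chi (I S) e) +
        ∑ C ∈ G.narrowCuts x,
          ((∑ f ∈ C, x f) - 1) * max (1 - (∑ f ∈ C, x f) / 2 - α) 0 *
            (∑ e, c e * G.vC x p C e) := by
  classical
  obtain ⟨hx0, hx1, -⟩ := hx
  set X : Finset E → ℝ := fun C => ∑ f ∈ C, x f with hX
  set M : Finset E → ℝ := fun C => max (1 - X C / 2 - α) 0 with hM
  set W : Finset E → ℝ := fun C => ∑ e, c e * G.vC x p C e with hW
  set b2 : Finset E → Finset E → ℝ := fun S C => if 2 ≤ (S ∩ C).card then 1 else 0 with hb2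
  have hM0 : ∀ C, 0 ≤ M C := fun C => le_max_right _ _
  have hXP : ∀ C, ∑ S : Finset E, p S * ((S ∩ C).card : ℝ) ≤ X C := by
    intro C
    calc ∑ S : Finset E, p S * ((S ∩ C).card : ℝ)
        = ∑ e ∈ C, ∑ S : Finset E, p S * chi S e := by
          rw [Finset.sum_comm]
          refine Finset.sum_congr rfl fun S _ => ?_
          rw [← Finset.mul_sum, sum_chi]
      _ ≤ X C := Finset.sum_le_sum fun e _ => hdom e
  have hcr : ∀ C ∈ G.narrowCuts x, ∀ S, p S ≠ 0 → 1 ≤ (S ∩ C).card := by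
    intro C hC S hS
    obtain ⟨⟨U, h1, h2, rfl⟩, -⟩ := (Finset.mem_filter.1 hC).2
    exact crossing G S (hptree S hS).1 U h1 h2
  have hXlt : ∀ C ∈ G.narrowCuts x, X C < 2 := fun C hC => (Finset.mem_filter.1 hC).2.2
  have hA : ∀ C ∈ G.narrowCuts x, ∑ S : Finset E, p S * b2 S C ≤ X C - 1 := by
    intro C hC
    have h : ∑ S : Finset E, (p S * b2 S C + p S) ≤ ∑ S : Finset E, p S * ((S ∩ C).card : ℝ) := by
      refine Finset.sum_le_sum fun S _ => ?_
      by_cases hS : p S = 0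
      · simp [hS]
      have h1 := hcr C hC S hS
      have h2 : b2 S C + 1 ≤ ((S ∩ C).card : ℝ) := by
        simp only [hb2]
        split_ifs with h
        · have : (2 : ℝ) ≤ ((S ∩ C).card : ℝ) := by exact_mod_cast h
          linarith
        · have : (1 : ℝ) ≤ ((S ∩ C).card : ℝ) := by exact_mod_cast h1
          linarith
      nlinarith [hp0 S]
    rw [Finset.sum_add_distrib, hpsum] at h
    linarith [hXP C]
  have hB : ∀ C ∈ G.narrowCuts x, 2 - X C ≤ ∑ S : Finset E, (if G.Lonely x S C then p S else 0) := by
    intro C hC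
    have hn : G.Narrow x C := (Finset.mem_filter.1 hC).2
    have h : ∑ S : Finset E, p S * 2 ≤ ∑ S : Finset E, (p S * ((S ∩ C).card : ℝ) +
        (if G.Lonely x S C then p S else 0)) := by
      refine Finset.sum_le_sum fun S _ => ?_
      by_cases hS : p S = 0
      · simp [hS]
      have h1 := hcr C hC S hS
      by_cases h : (S ∩ C).card = 1
      · have hl : G.Lonely x S C := ⟨hn, h⟩
        rw [if_pos hl, h]
        push_cast
        linarith
      · have hl : ¬ G.Lonely x S C := fun hl => h hl.2
        rw [if_neg hl]
        have : (2 : ℝ) ≤ ((S ∩ C).card : ℝ) := by exact_mod_cast (by omega : 2 ≤ (S ∩ C).card)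
        nlinarith [hp0 S]
    rw [Finset.sum_add_distrib, ← Finset.sum_mul, hpsum] at h
    linarith [hXP C]
  have hchi0 : ∀ (F : Finset E) e, 0 ≤ chi F e := by
    intro F e
    unfold chi
    split_ifs <;> norm_num
  have hv0 : ∀ C ∈ G.narrowCuts x, ∀ e, 0 ≤ G.vC x p C e := by
    intro C hC e
    have h1 : X C < 2 := hXlt C hC
    refine mul_nonneg (one_div_nonneg.2 (by simp only [hX] at h1; linarith))
      (Finset.sum_nonneg fun S _ => mul_nonneg ?_ (hchi0 _ _))
    split_ifs
    · exact hp0 S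
    · exact le_rfl
  have hv1 : ∀ C ∈ G.narrowCuts x, 1 ≤ ∑ e ∈ C, G.vC x p C e := by
    intro C hC
    have h1 : X C < 2 := hXlt C hC
    have h2 := hB C hC
    have h3 : ∑ e ∈ C, G.vC x p C e
        = (1 / (2 - X C)) * ∑ S : Finset E, (if G.Lonely x S C then p S else 0) := by
      simp only [vC]
      rw [← Finset.mul_sum, Finset.sum_comm]
      congr 1
      refine Finset.sum_congr rfl fun S _ => ?_
      rw [← Finset.mul_sum, sum_chi]
      split_ifs with hl
      · rw [Finset.inter_assoc, Finset.inter_self, hl.2]; simp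
      · simp
    rw [h3, one_div, inv_mul_eq_div, le_div_iff₀ (by linarith)]
    linarith
  have hW0 : ∀ C ∈ G.narrowCuts x, 0 ≤ W C := fun C hC =>
    Finset.sum_nonneg fun e _ => mul_nonneg (hc e) (hv0 C hC e)
  have hb20 : ∀ S C, 0 ≤ b2 S C := by
    intro S C
    simp only [hb2]
    split_ifs <;> norm_num
  -- the tour obtained from a single tree
  have htour : ∀ S, p S ≠ 0 → ∃ F : Multiset E, G.IsTTour T F ∧
      (F.map c).sum ≤ ∑ e, c e * chi S e + ((∑ e, c e * x e) / 2 + α * (∑ e, c e * chi (I S) e)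
        + ∑ C ∈ G.narrowCuts x, b2 S C * (M C * W C)) := by
    intro S hS
    obtain ⟨hIS, hIT⟩ := hI S hS
    have hIb : ∀ v, G.bd (ind (I S)) v = if v ∈ T then 1 else 0 := by
      intro v
      rw [← deg_cast]
      have := mem_oddVerts G (I S).val v
      rw [hIT] at this
      split_ifs with h
      · exact this.1 h
      · exact (z2 _).resolve_right fun h' => h (this.2 h')
    have hSI : ind S + ind (I S) = ind (S \ I S) := by
      funext e
      have h2 : (1 + 1 : ZMod 2) = 0 := by decide
      by_cases h1 : e ∈ I S
      · simp [ind, h1, hIS h1, h2]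
      · simp [ind, h1]
    set z : E → ℝ := fun e => x e / 2 + α * chi (I S) e
      + ∑ C ∈ G.narrowCuts x, b2 S C * (M C * G.vC x p C e) with hz
    have hterm : ∀ C ∈ G.narrowCuts x, ∀ e, 0 ≤ b2 S C * (M C * G.vC x p C e) := fun C hC e =>
      mul_nonneg (hb20 S C) (mul_nonneg (hM0 C) (hv0 C hC e))
    have hz0 : ∀ e, 0 ≤ z e := by
      intro e
      have h1 := hx0 e
      have h2 := mul_nonneg hα (hchi0 (I S) e)
      have h3 : 0 ≤ ∑ C ∈ G.narrowCuts x, b2 S C * (M C * G.vC x p C e) :=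
        Finset.sum_nonneg fun C hC => hterm C hC e
      simp only [hz]
      linarith
    have hzcut : ∀ U : Finset V, ∑ v ∈ U, G.bd (ind S + ind (I S)) v = 1 →
        1 ≤ ∑ e ∈ G.cut U, z e := by
      intro U hU
      have hsz : ∑ e ∈ G.cut U, z e = X (G.cut U) / 2 + α * ((I S ∩ G.cut U).card : ℝ)
          + ∑ C ∈ G.narrowCuts x, ∑ e ∈ G.cut U, b2 S C * (M C * G.vC x p C e) := by
        simp only [hz]
        rw [Finset.sum_add_distrib, Finset.sum_add_distrib, ← Finset.mul_sum, sum_chi,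
          Finset.sum_comm, ← Finset.sum_div]
      have h3 : 0 ≤ ∑ C ∈ G.narrowCuts x, ∑ e ∈ G.cut U, b2 S C * (M C * G.vC x p C e) :=
        Finset.sum_nonneg fun C hC => Finset.sum_nonneg fun e _ => hterm C hC e
      have h2 : 0 ≤ α * ((I S ∩ G.cut U).card : ℝ) := mul_nonneg hα (Nat.cast_nonneg _)
      by_cases hbig : 2 ≤ X (G.cut U)
      · rw [hsz]; linarith
      push Not at hbig
      have hcard : ((S ∩ G.cut U).card : ZMod 2) + ((I S ∩ G.cut U).card : ZMod 2) = 1 := by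
        rw [← hU, sum_bd_cut, ← sum_ind, ← sum_ind, ← Finset.sum_add_distrib]
        rfl
      have hcutne : G.cut U ≠ ∅ := by
        intro h
        rw [h] at hcard
        simp at hcard
      have hUne : U.Nonempty := by
        rw [Finset.nonempty_iff_ne_empty]
        rintro rfl
        exact hcutne (by simp [cut])
      have hUuniv : U ≠ univ := by
        rintro rfl
        exact hcutne (by simp [cut])
      have hodd : ¬ Even (T ∩ U).card := fun h => by
        have := hx1 U hUne hUuniv h
        simp only [hX] at hbig
        linarith
      have hIodd : ((I S ∩ G.cut U).card : ZMod 2) = 1 := by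
        rw [← sum_ind, ← sum_bd_cut]
        simp only [hIb]
        rw [Finset.sum_ite_mem, Finset.sum_const, nsmul_eq_mul, mul_one, Finset.inter_comm,
          ZMod.natCast_eq_one_iff_odd]
        exact Nat.not_even_iff_odd.1 hodd
      have hI1 : 1 ≤ (I S ∩ G.cut U).card := by
        rw [ZMod.natCast_eq_one_iff_odd] at hIodd
        exact hIodd.pos
      have hS1 := crossing G S (hptree S hS).1 U hUne hUuniv
      have hS2 : 2 ≤ (S ∩ G.cut U).card := by
        rw [hIodd] at hcard
        have h0 : ((S ∩ G.cut U).card : ZMod 2) = 0 := by linear_combination hcard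
        rw [ZMod.natCast_eq_zero_iff_even] at h0
        obtain ⟨r, hr⟩ := h0
        omega
      have hnar : G.cut U ∈ G.narrowCuts x :=
        Finset.mem_filter.2 ⟨Finset.mem_univ _, ⟨U, hUne, hUuniv, rfl⟩, hbig⟩
      have h4 : ∑ e ∈ G.cut U, b2 S (G.cut U) * (M (G.cut U) * G.vC x p (G.cut U) e) ≤
          ∑ C ∈ G.narrowCuts x, ∑ e ∈ G.cut U, b2 S C * (M C * G.vC x p C e) :=
        Finset.single_le_sum
          (f := fun C => ∑ e ∈ G.cut U, b2 S C * (M C * G.vC x p C e))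
          (fun C hC => Finset.sum_nonneg fun e _ => hterm C hC e) hnar
      have h5 : b2 S (G.cut U) = 1 := by simp only [hb2]; rw [if_pos hS2]
      rw [h5] at h4
      simp only [one_mul] at h4
      rw [← Finset.mul_sum] at h4
      have h6 := le_mul_of_one_le_right (hM0 (G.cut U)) (hv1 _ hnar)
      have h7 : 1 - X (G.cut U) / 2 - α ≤ M (G.cut U) := le_max_left _ _
      have h8 : α ≤ α * ((I S ∩ G.cut U).card : ℝ) :=
        le_mul_of_one_le_right hα (by exact_mod_cast hI1)
      rw [hsz]
      linarith
    obtain ⟨f, hf, hfc⟩ := ej_real G (G.bd (ind S + ind (I S))) z hz0 hzcut ⟨_, rfl⟩ c hc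
    have hfind : ind (univ.filter fun e => f e ≠ 0) = f := by
      funext e
      rcases z2 (f e) with h | h <;> simp [ind, h]
    refine ⟨S.val + (univ.filter fun e => f e ≠ 0).val, ⟨?_, ?_⟩, ?_⟩
    · intro u w
      refine Relation.ReflTransGen.mono ?_ _ _ ((hptree S hS).1 u w)
      rintro a b ⟨e, he, h⟩
      exact ⟨e, Multiset.mem_add.2 (Or.inl he), h⟩
    · ext v
      rw [mem_oddVerts, deg_add, Nat.cast_add, deg_cast, deg_cast, hfind, hf, bd_add]
      have h1 : G.bd (ind S) v + (G.bd (ind S) + G.bd (ind (I S))) v = G.bd (ind (I S)) v := by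
        have := CharTwo.add_self_eq_zero (G.bd (ind S) v)
        simp only [Pi.add_apply]
        linear_combination this
      rw [h1, hIb]
      split_ifs with h <;> simp [h]
    · rw [Multiset.map_add, Multiset.sum_add]
      have h1 : (S.val.map c).sum = ∑ e, c e * chi S e := by
        change ∑ e ∈ S, c e = _
        simp [chi]
      have h2 : (((univ.filter fun e => f e ≠ 0).val).map c).sum = cst c f := by
        change ∑ e ∈ univ.filter (fun e => f e ≠ 0), c e = _
        rw [Finset.sum_filter, cst]
        refine Finset.sum_congr rfl fun e _ => ?_
        by_cases h : f e = 0 <;> simp [h]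
      have h3 : ∑ e, c e * z e = (∑ e, c e * x e) / 2 + α * (∑ e, c e * chi (I S) e)
          + ∑ C ∈ G.narrowCuts x, b2 S C * (M C * W C) := by
        simp only [hz, hW, mul_add, Finset.sum_add_distrib, Finset.mul_sum, Finset.sum_div]
        rw [Finset.sum_comm (s := univ)]
        congr 1
        · congr 1
          · exact Finset.sum_congr rfl fun e _ => by ring
          · exact Finset.sum_congr rfl fun e _ => by ring
        · exact Finset.sum_congr rfl fun C _ => Finset.sum_congr rfl fun e _ => by ring
      rw [h1, h2, ← h3]
      linarith
  -- averaging
  set R : ℝ := (3 / 2 : ℝ) * (∑ e, c e * x e) +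
        α * (∑ e, c e * ∑ S : Finset E, p S * chi (I S) e) +
        ∑ C ∈ G.narrowCuts x, (X C - 1) * M C * W C with hR
  set K : Finset E → ℝ := fun S => ∑ e, c e * chi S e + ((∑ e, c e * x e) / 2
    + α * (∑ e, c e * chi (I S) e)
        + ∑ C ∈ G.narrowCuts x, b2 S C * (M C * W C)) with hK
  have havg : ∑ S : Finset E, p S * K S ≤ R := by
    have e1 : ∀ J : Finset E → Finset E, ∑ S : Finset E, p S * ∑ e, c e * chi (J S) e
        = ∑ e, c e * ∑ S : Finset E, p S * chi (J S) e := by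
      intro J
      simp only [Finset.mul_sum]
      rw [Finset.sum_comm]
      exact Finset.sum_congr rfl fun e _ => Finset.sum_congr rfl fun S _ => by ring
    have e2 : ∑ S : Finset E, p S * ∑ C ∈ G.narrowCuts x, b2 S C * (M C * W C)
        = ∑ C ∈ G.narrowCuts x, (∑ S : Finset E, p S * b2 S C) * (M C * W C) := by
      simp only [Finset.mul_sum, Finset.sum_mul]
      rw [Finset.sum_comm]
      exact Finset.sum_congr rfl fun e _ => Finset.sum_congr rfl fun S _ => by ring
    have e3 : ∑ S : Finset E, p S * K S = ∑ S : Finset E, p S * ∑ e, c e * chi S e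
        + ((∑ S : Finset E, p S) * ((∑ e, c e * x e) / 2)
        + α * ∑ S : Finset E, p S * (∑ e, c e * chi (I S) e)
        + ∑ S : Finset E, p S * ∑ C ∈ G.narrowCuts x, b2 S C * (M C * W C)) := by
      rw [Finset.sum_mul, Finset.mul_sum, ← Finset.sum_add_distrib, ← Finset.sum_add_distrib,
        ← Finset.sum_add_distrib]
      exact Finset.sum_congr rfl fun S _ => by simp only [hK]; ring
    have i1 : ∑ S : Finset E, p S * ∑ e, c e * chi S e ≤ ∑ e, c e * x e := by
      rw [e1 fun S => S]
      exact Finset.sum_le_sum fun e _ => mul_le_mul_of_nonneg_left (hdom e) (hc e)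
    have i2 : ∑ C ∈ G.narrowCuts x, (∑ S : Finset E, p S * b2 S C) * (M C * W C)
        ≤ ∑ C ∈ G.narrowCuts x, (X C - 1) * M C * W C := by
      refine Finset.sum_le_sum fun C hC => ?_
      rw [mul_assoc]
      exact mul_le_mul_of_nonneg_right (hA C hC) (mul_nonneg (hM0 C) (hW0 C hC))
    rw [e3, e2, e1 I, hpsum, hR]
    linarith
  obtain ⟨S, hS, hSK⟩ : ∃ S, p S ≠ 0 ∧ K S ≤ R := by
    by_contra hcon
    push Not at hcon
    have h1 : ∃ S ∈ (univ : Finset (Finset E)), p S ≠ 0 :=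
      Finset.exists_ne_zero_of_sum_ne_zero (by rw [hpsum]; norm_num)
    obtain ⟨S0, -, hS0⟩ := h1
    have h2 : ∑ S : Finset E, p S * R < ∑ S : Finset E, p S * K S := by
      refine Finset.sum_lt_sum (fun S _ => ?_) ⟨S0, Finset.mem_univ _, ?_⟩
      · by_cases hS : p S = 0
        · simp [hS]
        · exact mul_le_mul_of_nonneg_left (hcon S hS).le (hp0 S)
      · exact mul_lt_mul_of_pos_left (hcon S0 hS0) (lt_of_le_of_ne (hp0 S0) hS0.symm)
    rw [← Finset.sum_mul, hpsum, one_mul] at h2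
    linarith
  obtain ⟨F, hF, hFc⟩ := htour S hS
  exact ⟨F, hF, hFc.trans hSK⟩

end MultiGraph
end
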